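/- arXiv:1006.0673 — 7 statements merged into one kernel-verified Lean document; each statement's English description precedes it below -/
import Mathlib

section
/- Let G be a complete-observation turn-based stochastic game, let s* be a state, and let φ ⊆ S^ω be a measurable (Borel) objective. Then inf_π sup_σ Pr_{s*}^{σ,π}(φ) = sup_σ inf_π Pr_{s*}^{σ,π}(φ) = sup over pure σ of inf_π Pr_{s*}^{σ,π}(φ), where σ ranges over all randomized player-1 strategies (pure strategies in the last term) and π over all randomized player-2 strategies. -/
open MeasureTheory
open scoped ENNReal

namespace Stmt10

variable {S A₁ A₂ : Type}

/-- The cylinder set of infinite plays extending the finite prefix `l`. -/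
def Cyl (l : List S) : Set (ℕ → S) := {ρ | ∀ i : Fin l.length, ρ i.1 = l.get i}

/-- One-step transition probability of the turn-based game: at states with `turn = true`
player 1 moves (via `δ₁` and `σ`), at the others player 2 moves (via `δ₂` and `π`). -/
noncomputable def step [Fintype A₁] [Fintype A₂] (turn : S → Bool)
    (δ₁ : S → A₁ → PMF S) (δ₂ : S → A₂ → PMF S)
    (σ : List S → PMF A₁) (π : List S → PMF A₂)
    (hist : List S) (cur next : S) : ℝ≥0∞ :=
  if turn cur then ∑' a, σ (hist ++ [cur]) a * δ₁ cur a next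
  else ∑' b, π (hist ++ [cur]) b * δ₂ cur b next

/-- Probability of observing the successive states `rest` after the history `hist ++ [cur]`. -/
noncomputable def listProb (step : List S → S → S → ℝ≥0∞) :
    List S → S → List S → ℝ≥0∞
  | _, _, [] => 1
  | hist, cur, s' :: rest => step hist cur s' * listProb step (hist ++ [cur]) s' rest

/-- `Pr` is the family of Ionescu–Tulcea play measures of the turn-based game. -/
def IsPlayMeasure [Fintype A₁] [Fintype A₂] [MeasurableSpace S] (turn : S → Bool)
    (δ₁ : S → A₁ → PMF S) (δ₂ : S → A₂ → PMF S)
    (Pr : S → (List S → PMF A₁) → (List S → PMF A₂) → Measure (ℕ → S)) : Prop :=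
  (∀ s σ π, IsProbabilityMeasure (Pr s σ π)) ∧
    ∀ s σ π (l : List S),
      Pr s σ π (Cyl (s :: l)) = listProb (step turn δ₁ δ₂ σ π) [] s l

/-- A strategy is pure if it always plays a Dirac distribution. -/
def IsPure {A : Type} (σ : List S → PMF A) : Prop := ∀ h, ∃ a, σ h = PMF.pure a

end Stmt10

set_option linter.unusedVariables false

namespace BD
universe u

/-- Threads of an inverse sequence. -/
abbrev Thread (Q : ℕ → Type u) (f : ∀ n, Q (n+1) → Q n) : Type u :=
  {x : ∀ n, Q n // ∀ n, f n (x (n+1)) = x n}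

theorem Thread.eq_below {Q : ℕ → Type u} {f : ∀ n, Q (n+1) → Q n} (x y : Thread Q f) {n : ℕ}
    (h : x.1 n = y.1 n) : ∀ m, m ≤ n → x.1 m = y.1 m := by
  induction n with
  | zero => intro m hm; obtain rfl : m = 0 := by omega
            exact h
  | succ n ih =>
    intro m hm
    rcases Nat.lt_or_ge n m with h1 | h1
    · obtain rfl : m = n + 1 := by omega
      exact h
    · exact ih (by rw [← x.2 n, ← y.2 n, h]) m h1

theorem Thread.eq_of_inj {Q : ℕ → Type u} {f : ∀ n, Q (n+1) → Q n} (k : ℕ)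
    (hf : ∀ n, k ≤ n → Function.Injective (f n)) (x y : Thread Q f) 
    (h : x.1 k = y.1 k) : x = y := by
  have key : ∀ d, x.1 (k+d) = y.1 (k+d) := by
    intro d
    induction d with
    | zero => exact h
    | succ d ih =>
      apply hf (k+d) (by omega)
      exact (x.2 (k+d)).trans (ih.trans (y.2 (k+d)).symm)
  apply Subtype.ext
  funext n
  exact Thread.eq_below x y (key n) n (by omega)

theorem Thread.exists_eval : ∀ (k : ℕ) (Q : ℕ → Type u) (f : ∀ n, Q (n+1) → Q n)
    (_ : ∀ n, k ≤ n → Function.Surjective (f n)) (p : Q k), ∃ x : Thread Q f, x.1 k = p := by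
  intro k
  induction k with
  | zero =>
    intro Q f hf p
    choose g hg using fun n => hf n (Nat.zero_le n)
    refine ⟨⟨fun n => Nat.rec (motive := fun n => Q n) p (fun n q => g n q) n, ?_⟩, rfl⟩
    intro n
    exact hg n _
  | succ k ih =>
    intro Q f hf p
    obtain ⟨x, hx⟩ := ih (fun n => Q (n+1)) (fun n => f (n+1)) (fun n hn => hf (n+1) (by omega)) p
    refine ⟨⟨fun n => Nat.casesOn (motive := fun n => Q n) n (f 0 (x.1 0)) (fun n => x.1 n), ?_⟩, hx⟩
    intro n
    cases n with
    | zero => rfl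
    | succ n => exact x.2 n

/-- A (multi-rooted, pruned) game tree, given by its levels. -/
structure GT : Type (u+1) where
  P : ℕ → Type u
  par : ∀ n, P (n+1) → P n
  surj : ∀ n, Function.Surjective (par n)

abbrev GT.Play (T : GT.{u}) : Type u := Thread T.P T.par

abbrev GT.Strat (T : GT.{u}) : Type u := ∀ n (p : T.P n), {q : T.P (n+1) // T.par n q = p}

/-- Player `b` moves at the levels `n` with `n.bodd = b`. -/
def Con {T : GT.{u}} (b : Bool) (s : T.Strat) (x : T.Play) : Prop :=
  ∀ n, n.bodd = b → x.1 (n+1) = (s n (x.1 n)).1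

noncomputable def GT.child (T : GT.{u}) (n : ℕ) (p : T.P n) : {q : T.P (n+1) // T.par n q = p} :=
  ⟨(T.surj n p).choose, (T.surj n p).choose_spec⟩

theorem GT.exists_thr (T : GT.{u}) {n : ℕ} (p : T.P n) : ∃ x : T.Play, x.1 n = p :=
  Thread.exists_eval n T.P T.par (fun m _ => T.surj m) p

/-- A chosen play through `p`. -/
noncomputable def GT.thr (T : GT.{u}) {n : ℕ} (p : T.P n) : T.Play := (T.exists_thr p).choose

theorem GT.thr_eval (T : GT.{u}) {n : ℕ} (p : T.P n) : (T.thr p).1 n = p :=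
  (T.exists_thr p).choose_spec

theorem GT.thr_eq (T : GT.{u}) {n : ℕ} (x : T.Play) (m : ℕ) (hm : m ≤ n) :
    (T.thr (x.1 n)).1 m = x.1 m :=
  Thread.eq_below _ _ (T.thr_eval _) m hm

/-- `k`-coverings. -/
structure Cov (T' T : GT.{u}) (k : ℕ) : Type u where
  f : ∀ n, T'.P n → T.P n
  comm : ∀ n p, f n (T'.par n p) = T.par n (f (n+1) p)
  φ : Bool → T'.Strat → T.Strat
  loc : ∀ b n s s', (∀ m, m ≤ n → s m = s' m) → φ b s n = φ b s' n
  lift : ∀ b s x, Con b (φ b s) x → ∃ y : T'.Play, Con b s y ∧ ∀ n, f n (y.1 n) = x.1 n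
  bij : ∀ n, n ≤ k → Function.Bijective (f n)
  fix : ∀ b s n, n < k → ∀ p, (φ b s n (f n p)).1 = f (n+1) (s n p).1

def Cov.map {T' T : GT.{u}} {k : ℕ} (c : Cov T' T k) (x : T'.Play) : T.Play :=
  ⟨fun n => c.f n (x.1 n), fun n => by rw [← c.comm, x.2]⟩

def Op {T : GT.{u}} (X : Set T.Play) : Prop :=
  ∀ x ∈ X, ∃ n, ∀ y : T.Play, y.1 n = x.1 n → y ∈ X

def Clp {T : GT.{u}} (X : Set T.Play) : Prop := Op X ∧ Op Xᶜ

theorem Op.pre {T' T : GT.{u}} {k : ℕ} (c : Cov T' T k) {X : Set T.Play} (h : Op X) :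
    Op (c.map ⁻¹' X) := by
  intro x hx
  obtain ⟨n, hn⟩ := h _ hx
  refine ⟨n, fun y hy => hn _ ?_⟩
  simp only [Cov.map, hy]

theorem Clp.pre {T' T : GT.{u}} {k : ℕ} (c : Cov T' T k) {X : Set T.Play} (h : Clp X) :
    Clp (c.map ⁻¹' X) := ⟨h.1.pre c, h.2.pre c⟩

theorem Clp.compl {T : GT.{u}} {X : Set T.Play} (h : Clp X) : Clp Xᶜ :=
  ⟨h.2, by rw [compl_compl]; exact h.1⟩

def Cov.refl (T : GT.{u}) (k : ℕ) : Cov T T k where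
  f n p := p
  comm n p := rfl
  φ b s := s
  loc b n s s' h := h n le_rfl
  lift b s x h := ⟨x, h, fun n => rfl⟩
  bij n _ := Function.bijective_id
  fix b s n _ p := rfl

def Cov.comp {T₂ T₁ T : GT.{u}} {k : ℕ} (c : Cov T₂ T₁ k) (d : Cov T₁ T k) : Cov T₂ T k where
  f n p := d.f n (c.f n p)
  comm n p := by rw [c.comm, d.comm]
  φ b s := d.φ b (c.φ b s)
  loc b n s s' h := d.loc b n _ _ fun m hm => c.loc b m _ _ fun l hl => h l (hl.trans hm)
  lift b s x h := by
    obtain ⟨y, hy, hy'⟩ := d.lift b _ x h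
    obtain ⟨z, hz, hz'⟩ := c.lift b _ y hy
    exact ⟨z, hz, fun n => by rw [hz', hy']⟩
  bij n hn := (d.bij n hn).comp (c.bij n hn)
  fix b s n hn p := by rw [d.fix b _ n hn, c.fix b _ n hn]

def GT.shift (T : GT.{u}) : GT.{u} where
  P n := T.P (n+1)
  par n := T.par (n+1)
  surj n := T.surj (n+1)

def GT.consP (P0 : Type u) (P : ℕ → Type u) : ℕ → Type u
  | 0 => P0
  | n+1 => P n

def GT.consPar (P0 : Type u) (P : ℕ → Type u) (f0 : P 0 → P0) (f : ∀ n, P (n+1) → P n) :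
    ∀ n, GT.consP P0 P (n+1) → GT.consP P0 P n
  | 0 => f0
  | n+1 => f n

/-- Prepend a level to a tree. -/
def GT.cons (T : GT.{u}) (P0 : Type u) (f0 : T.P 0 → P0) (h0 : Function.Surjective f0) : GT.{u} where
  P := GT.consP P0 T.P
  par := GT.consPar P0 T.P f0 T.par
  surj n := by
    cases n with
    | zero => exact h0
    | succ n => exact T.surj n

def unshift {T' T : GT.{u}} {k : ℕ} (c : Cov T' T.shift k) :
    Cov (T'.cons (T.P 0) (fun p => T.par 0 (c.f 0 p))
      ((T.surj 0).comp (c.bij 0 (Nat.zero_le k)).2)) T (k+1) where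
  f n := match n with
    | 0 => fun p => p
    | n+1 => fun p => c.f n p
  comm n p := by
    cases n with
    | zero => rfl
    | succ n => exact c.comm n p
  φ b s n := match n with
    | 0 => fun p => ⟨c.f 0 (s 0 p).1, (s 0 p).2⟩
    | n+1 => fun p => c.φ (!b) (fun m q => s (m+1) q) n p
  loc b n s s' h := by
    cases n with
    | zero => funext p; simp only [h 0 le_rfl]
    | succ n =>
      exact c.loc (!b) n _ _ (fun m hm => by funext q; rw [h (m+1) (by omega)])
  lift b s x h := by
    obtain ⟨y, hy, hy'⟩ := c.lift (!b) (fun m q => s (m+1) q)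
      ⟨fun n => x.1 (n+1), fun n => x.2 (n+1)⟩ (fun n hn => h (n+1) (by
        rw [Nat.bodd_succ, hn, Bool.not_not]))
    refine ⟨⟨fun n => Nat.casesOn (motive := fun n => GT.consP (T.P 0) T'.P n) n (x.1 0)
      (fun n => y.1 n), ?_⟩, ?_, ?_⟩
    · intro n
      cases n with
      | zero =>
        show T.par 0 (c.f 0 (y.1 0)) = x.1 0
        rw [hy' 0]; exact x.2 0
      | succ n => exact y.2 n
    · intro n hn
      cases n with
      | zero =>
        apply (c.bij 0 (Nat.zero_le k)).1
        exact (hy' 0).trans (h 0 hn)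
      | succ n => exact hy n (by rw [Nat.bodd_succ] at hn; rw [← hn, Bool.not_not])
    · intro n
      cases n with
      | zero => rfl
      | succ n => exact hy' n
  bij n hn := by
    cases n with
    | zero => exact Function.bijective_id
    | succ n => exact c.bij n (by omega)
  fix b s n hn p := by
    cases n with
    | zero => rfl
    | succ n => exact c.fix (!b) _ n (by omega) p

end BD

set_option linter.unusedVariables false
namespace BD
universe u

section limit
variable (T : ℕ → GT.{u}) (k : ℕ) (c : ∀ i, Cov (T (i+1)) (T i) (k+i))

/-- Levels of the inverse limit. -/
abbrev LimP (n : ℕ) : Type u := Thread (fun i => (T i).P n) (fun i => (c i).f n)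

theorem lim_surj (n i : ℕ) (h : n ≤ k + i) (p : (T i).P n) : ∃ x : LimP T k c n, x.1 i = p :=
  Thread.exists_eval i _ _ (fun j hj => ((c j).bij n (by omega)).2) p

theorem lim_inj (n i : ℕ) (h : n ≤ k + i) (x y : LimP T k c n) (hxy : x.1 i = y.1 i) : x = y :=
  Thread.eq_of_inj i (fun j hj => ((c j).bij n (by omega)).1) x y hxy

def limPar (n : ℕ) (x : LimP T k c (n+1)) : LimP T k c n :=
  ⟨fun i => (T i).par n (x.1 i), fun i => ((c i).comm n _).trans (congrArg ((T i).par n) (x.2 i))⟩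

def Lim : GT.{u} where
  P := LimP T k c
  par := limPar T k c
  surj n := by
    intro p
    obtain ⟨q, hq⟩ := (T (n+1)).surj n (p.1 (n+1))
    obtain ⟨x, hx⟩ := lim_surj T k c (n+1) (n+1) (by omega) q
    refine ⟨x, lim_inj T k c n (n+1) (by omega) _ _ ?_⟩
    show (T (n+1)).par n (x.1 (n+1)) = _
    rw [hx, hq]

open Classical in
/-- Partial transport of a strategy on the limit to `T j`. -/
noncomputable def tr (s : (Lim T k c).Strat) (j : ℕ) : (T j).Strat := fun n p =>
  if h : ∃ x : LimP T k c n, x.1 j = p then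
    ⟨(s n h.choose).1.1 j, by
      have h1 := (s n h.choose).2
      have h2 : (T j).par n ((s n h.choose).1.1 j) = h.choose.1 j :=
        congrArg (fun z : LimP T k c n => z.1 j) h1
      rw [h2, h.choose_spec]⟩
  else (T j).child n p

theorem tr_eval (s : (Lim T k c).Strat) (j n : ℕ) (hn : n ≤ k + j) (x : LimP T k c n) :
    (tr T k c s j n (x.1 j)).1 = (s n x).1.1 j := by
  have h : ∃ y : LimP T k c n, y.1 j = x.1 j := ⟨x, rfl⟩
  have h2 : h.choose = x := lim_inj T k c n j hn _ _ h.choose_spec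
  unfold tr
  rw [dif_pos h]
  show (s n h.choose).1.1 j = _
  rw [h2]

noncomputable def dn (b : Bool) (s : (Lim T k c).Strat) : ℕ → ∀ i, (T i).Strat
  | 0 => fun i => tr T k c s i
  | d+1 => fun i => (c i).φ b (dn b s d (i+1))

theorem dn_succ (b : Bool) (s : (Lim T k c).Strat) : ∀ (d i n : ℕ), n + 1 ≤ k + i + d →
    dn T k c b s (d+1) i n = dn T k c b s d i n := by
  intro d
  induction d with
  | zero =>
    intro i n h
    funext p
    apply Subtype.ext
    obtain ⟨x, rfl⟩ := lim_surj T k c n i (by omega) p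
    show ((c i).φ b (tr T k c s (i+1)) n (x.1 i)).1 = (tr T k c s i n (x.1 i)).1
    rw [tr_eval T k c s i n (by omega), ← x.2 i, (c i).fix b _ n (by omega),
      tr_eval T k c s (i+1) n (by omega)]
    exact (s n x).1.2 i
  | succ d ih =>
    intro i n h
    exact (c i).loc b n _ _ (fun m hm => ih (i+1) m (by omega))

theorem dn_stab (b : Bool) (s : (Lim T k c).Strat) (i n d : ℕ) (h : n + 1 ≤ k + i + d) (e : ℕ) :
    dn T k c b s (d+e) i n = dn T k c b s d i n := by
  induction e with
  | zero => rfl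
  | succ e ih => rw [← ih]; exact dn_succ T k c b s (d+e) i n (by omega)

noncomputable def psi (b : Bool) (s : (Lim T k c).Strat) (i : ℕ) : (T i).Strat :=
  fun n => dn T k c b s (n+1) i n

theorem psi_step (b : Bool) (s : (Lim T k c).Strat) (i : ℕ) :
    (c i).φ b (psi T k c b s (i+1)) = psi T k c b s i := by
  funext n
  have h1 : psi T k c b s i n = dn T k c b s (n+1+1) i n :=
    (dn_succ T k c b s (n+1) i n (by omega)).symm
  rw [h1]
  apply (c i).loc b n
  intro m hm
  show dn T k c b s (m+1) (i+1) m = dn T k c b s (n+1) (i+1) m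
  have := dn_stab T k c b s (i+1) m (m+1) (by omega) (n-m)
  rw [← this]
  congr 1
  omega

theorem psi_tr (b : Bool) (s : (Lim T k c).Strat) (i n : ℕ) (h : n + 1 ≤ k + i) :
    psi T k c b s i n = tr T k c s i n := by
  have := dn_stab T k c b s i n 0 (by omega) (n+1)
  rw [Nat.zero_add] at this
  exact this

theorem dn_loc (b : Bool) (s s' : (Lim T k c).Strat) (n : ℕ) (h : ∀ m, m ≤ n → s m = s' m) :
    ∀ d i m, m ≤ n → dn T k c b s d i m = dn T k c b s' d i m := by
  intro d
  induction d with
  | zero =>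
    intro i m hm
    funext p
    show tr T k c s i m p = tr T k c s' i m p
    unfold tr
    split_ifs with h1
    · apply Subtype.ext
      show (s m h1.choose).1.1 i = (s' m h1.choose).1.1 i
      rw [h m hm]
    · rfl
  | succ d ih =>
    intro i m hm
    exact (c i).loc b m _ _ (fun l hl => ih (i+1) l (hl.trans hm))

theorem lim_lift (b : Bool) (s : (Lim T k c).Strat) (x : (T 0).Play)
    (hx : Con b (psi T k c b s 0) x) :
    ∃ y : (Lim T k c).Play, Con b s y ∧ ∀ n, (y.1 n).1 0 = x.1 n := by
  have step : ∀ i (z : {z : (T i).Play // Con b (psi T k c b s i) z}),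
      ∃ w : {z : (T (i+1)).Play // Con b (psi T k c b s (i+1)) z},
        ∀ n, (c i).f n (w.1.1 n) = z.1.1 n := by
    intro i z
    obtain ⟨w, hw, hw'⟩ := (c i).lift b (psi T k c b s (i+1)) z.1 (by
      rw [psi_step]; exact z.2)
    exact ⟨⟨w, hw⟩, hw'⟩
  choose g hg using step
  let z : ∀ i, {z : (T i).Play // Con b (psi T k c b s i) z} :=
    fun i => Nat.rec (motive := fun i => {z : (T i).Play // Con b (psi T k c b s i) z})
      ⟨x, hx⟩ (fun i w => g i w) i
  have hz : ∀ i n, (c i).f n ((z (i+1)).1.1 n) = (z i).1.1 n := fun i n => hg i (z i) n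
  refine ⟨⟨fun n => ⟨fun i => (z i).1.1 n, fun i => hz i n⟩, ?_⟩, ?_, ?_⟩
  · intro n
    apply Subtype.ext
    funext i
    exact (z i).1.2 n
  · intro n hn
    apply lim_inj T k c (n+1) (n+1) (by omega)
    show (z (n+1)).1.1 (n+1) = _
    rw [(z (n+1)).2 n hn, psi_tr T k c b s (n+1) n (by omega)]
    exact tr_eval T k c s (n+1) n (by omega) ⟨fun i => (z i).1.1 n, fun i => hz i n⟩
  · intro n; rfl

noncomputable def limCov : Cov (Lim T k c) (T 0) k where
  f n x := x.1 0
  comm n x := rfl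
  φ b s := psi T k c b s 0
  loc b n s s' h := dn_loc T k c b s s' n h (n+1) 0 n le_rfl
  lift b s x hx := lim_lift T k c b s x hx
  bij n hn := ⟨fun x y h => lim_inj T k c n 0 (by omega) x y h,
    fun p => lim_surj T k c n 0 (by omega) p⟩
  fix b s n hn p := by
    rw [psi_tr T k c b s 0 n (by omega)]
    exact tr_eval T k c s 0 n (by omega) p

def limEval (i : ℕ) (x : (Lim T k c).Play) : (T i).Play :=
  ⟨fun n => (x.1 n).1 i, fun n => congrArg (fun z : LimP T k c n => z.1 i) (x.2 n)⟩

theorem limEval_op (i : ℕ) {X : Set (T i).Play} (h : Op X) : Op (limEval T k c i ⁻¹' X) := by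
  intro x hx
  obtain ⟨n, hn⟩ := h _ hx
  refine ⟨n, fun y hy => hn _ ?_⟩
  simp only [limEval, hy]

theorem limEval_step (i : ℕ) (x : (Lim T k c).Play) :
    (c i).map (limEval T k c (i+1) x) = limEval T k c i x := by
  apply Subtype.ext
  funext n
  exact (x.1 n).2 i

theorem limEval_zero (x : (Lim T k c).Play) :
    limEval T k c 0 x = (limCov T k c).map x := rfl

end limit
end BD

set_option linter.unusedVariables false
namespace BD
universe u

section force
variable {T : GT.{u}} (b : Bool) (U : ∀ n, Set (T.P n))

/-- Positions from which player `b` can force a visit to `U`, of rank at most `α`. -/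
def FR (α : Ordinal.{u}) : ∀ n, Set (T.P n) := fun n =>
  {p | p ∈ U n ∨ (n.bodd = b ∧ ∃ q, T.par n q = p ∧ ∃ β, ∃ _ : β < α, q ∈ FR β (n+1)) ∨
    (n.bodd ≠ b ∧ ∀ q, T.par n q = p → ∃ β, ∃ _ : β < α, q ∈ FR β (n+1))}
termination_by α

theorem mem_FR (α : Ordinal.{u}) (n : ℕ) (p : T.P n) : p ∈ FR b U α n ↔
    (p ∈ U n ∨ (n.bodd = b ∧ ∃ q, T.par n q = p ∧ ∃ β, β < α ∧ q ∈ FR b U β (n+1)) ∨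
    (n.bodd ≠ b ∧ ∀ q, T.par n q = p → ∃ β, β < α ∧ q ∈ FR b U β (n+1))) := by
  rw [FR]
  simp only [Set.mem_ofPred_eq, exists_prop]

def Force (n : ℕ) (p : T.P n) : Prop := ∃ α, p ∈ FR b U α n

noncomputable def rk (n : ℕ) (p : T.P n) : Ordinal.{u} := sInf {α | p ∈ FR b U α n}

theorem rk_mem {n : ℕ} {p : T.P n} (h : Force b U n p) : p ∈ FR b U (rk b U n p) n :=
  csInf_mem (s := {α | p ∈ FR b U α n}) h

theorem rk_le {n : ℕ} {p : T.P n} {α} (h : p ∈ FR b U α n) : rk b U n p ≤ α :=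
  csInf_le' h

theorem Force.of_mem {n : ℕ} {p : T.P n} (h : p ∈ U n) : Force b U n p :=
  ⟨0, (mem_FR b U 0 n p).2 (Or.inl h)⟩

theorem Force.mine {n : ℕ} {q : T.P (n+1)} (hb : n.bodd = b) (h : Force b U (n+1) q) :
    Force b U n (T.par n q) := by
  obtain ⟨α, hα⟩ := h
  exact ⟨Order.succ α, (mem_FR b U _ n _).2 (Or.inr (Or.inl ⟨hb, q, rfl, α, Order.lt_succ α, hα⟩))⟩

theorem Force.opp {n : ℕ} {p : T.P n} (hb : n.bodd ≠ b)
    (h : ∀ q, T.par n q = p → Force b U (n+1) q) : Force b U n p := by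
  refine ⟨Order.succ (⨆ q : T.P (n+1), rk b U (n+1) q),
    (mem_FR b U _ n _).2 (Or.inr (Or.inr ⟨hb, fun q hq => ⟨rk b U (n+1) q, ?_, rk_mem b U (h q hq)⟩⟩))⟩
  rw [Order.lt_succ_iff]
  exact Ordinal.le_iSup (fun q : T.P (n+1) => rk b U (n+1) q) q

theorem Force.mine_desc {n : ℕ} {p : T.P n} (h : Force b U n p) (hb : n.bodd = b) (hp : p ∉ U n) :
    ∃ q, T.par n q = p ∧ Force b U (n+1) q ∧ rk b U (n+1) q < rk b U n p := by
  rcases (mem_FR b U _ n p).1 (rk_mem b U h) with h1 | ⟨_, q, hq, β, hβ, hq'⟩ | ⟨h1, _⟩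
  · exact absurd h1 hp
  · exact ⟨q, hq, ⟨β, hq'⟩, (rk_le b U hq').trans_lt hβ⟩
  · exact absurd hb h1

theorem Force.opp_desc {n : ℕ} {p : T.P n} (h : Force b U n p) (hb : n.bodd ≠ b) (hp : p ∉ U n)
    (q) (hq : T.par n q = p) : Force b U (n+1) q ∧ rk b U (n+1) q < rk b U n p := by
  rcases (mem_FR b U _ n p).1 (rk_mem b U h) with h1 | ⟨h1, _⟩ | ⟨_, h1⟩
  · exact absurd h1 hp
  · exact absurd h1 hb
  · obtain ⟨β, hβ, hq'⟩ := h1 q hq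
    exact ⟨⟨β, hq'⟩, (rk_le b U hq').trans_lt hβ⟩

/-- Hunting: a play that decreases the rank whenever player `b` moves hits the target. -/
theorem hunt (x : T.Play) (N : ℕ) (h0 : Force b U N (x.1 N))
    (hx : ∀ n, N ≤ n → n.bodd = b → (∀ m, m ≤ n → x.1 m ∉ U m) → Force b U n (x.1 n) →
      Force b U (n+1) (x.1 (n+1)) ∧ rk b U (n+1) (x.1 (n+1)) < rk b U n (x.1 n)) :
    ∃ n, x.1 n ∈ U n := by
  by_contra hcon
  push Not at hcon
  have key : ∀ α : Ordinal.{u}, ∀ n, N ≤ n → Force b U n (x.1 n) → rk b U n (x.1 n) = α → False := by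
    intro α
    induction α using WellFoundedLT.induction with
    | ind α ih =>
      intro n hn hF hα
      have hd : Force b U (n+1) (x.1 (n+1)) ∧ rk b U (n+1) (x.1 (n+1)) < rk b U n (x.1 n) := by
        by_cases hb : n.bodd = b
        · exact hx n hn hb (fun m _ => hcon m) hF
        · exact hF.opp_desc b U hb (hcon n) _ (x.2 n)
      exact ih _ (hα ▸ hd.2) (n+1) (by omega) hd.1 rfl
  exact key _ N le_rfl h0 rfl

end force

open Classical in
/-- Pick a child satisfying `R` if possible. -/
noncomputable def GT.pick (T : GT.{u}) {n : ℕ} (p : T.P n) (R : T.P (n+1) → Prop) :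
    {q : T.P (n+1) // T.par n q = p} :=
  if h : ∃ q, T.par n q = p ∧ R q then ⟨h.choose, h.choose_spec.1⟩ else T.child n p

theorem GT.pick_spec (T : GT.{u}) {n : ℕ} {p : T.P n} {R : T.P (n+1) → Prop}
    (h : ∃ q, T.par n q = p ∧ R q) : R (T.pick p R).1 := by
  unfold GT.pick
  rw [dif_pos h]
  exact h.choose_spec.2

/-- Clopen (indeed open) determinacy. -/
theorem open_det (T : GT.{u}) (X : Set T.Play) (hX : Op X) (b : Bool) (p : T.P 0) :
    (∃ s : T.Strat, ∀ x : T.Play, x.1 0 = p → Con b s x → x ∈ X) ∨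
    (∃ s : T.Strat, ∀ x : T.Play, x.1 0 = p → Con (!b) s x → x ∉ X) := by
  let U : ∀ n, Set (T.P n) := fun n => {q | ∀ y : T.Play, y.1 n = q → y ∈ X}
  by_cases hF : Force b U 0 p
  · left
    refine ⟨fun n q => T.pick q (fun r => Force b U (n+1) r ∧ rk b U (n+1) r < rk b U n q), ?_⟩
    intro x hx hc
    obtain ⟨n, hn⟩ := hunt b U x 0 (by rw [hx]; exact hF) (by
      intro n _ hb hU hFn
      rw [hc n hb]
      exact T.pick_spec (hFn.mine_desc b U hb (hU n le_rfl)))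
    exact hn x rfl
  · right
    refine ⟨fun n q => T.pick q (fun r => ¬ Force b U (n+1) r), ?_⟩
    intro x hx hc hxX
    have hnF : ∀ n, ¬ Force b U n (x.1 n) := by
      intro n
      induction n with
      | zero => rw [hx]; exact hF
      | succ n ih =>
        by_cases hb : n.bodd = b
        · intro h
          apply ih
          have := h.mine b U hb
          rwa [x.2 n] at this
        · rw [hc n (by revert hb; cases b <;> cases n.bodd <;> simp)]
          apply T.pick_spec (R := fun r => ¬ Force b U (n+1) r)
          by_contra hcon
          push Not at hcon
          exact ih (Force.opp b U hb hcon)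
    obtain ⟨n, hn⟩ := hX x hxX
    exact hnF n (Force.of_mem b U hn)

end BD

set_option linter.unusedVariables false
namespace BD
universe u

section closed
variable (T : GT.{u}) (D : ∀ n, Set (T.P n))

abbrev Sets : Type u := ∀ n, Set (T.P n)
abbrev Choi : Type u := Sets T ⊕ (Σ n, T.P n)

/-- Quasi-strategies for the first player (from level one on). -/
def IsQ (A : Sets T) : Prop := ∀ n, 1 ≤ n → ∀ p ∈ A n,
  (n.bodd = false → ∃ q, T.par n q = p ∧ q ∈ A (n+1)) ∧
  (n.bodd = true → ∀ q, T.par n q = p → q ∈ A (n+1))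

/-- Quasi-strategies for the second player inside `A` staying in `D`. -/
def IsQ2 (A B : Sets T) : Prop := ∀ n, 2 ≤ n → ∀ p ∈ B n, p ∈ A n ∧ p ∈ D n ∧
  (n.bodd = false → ∀ q, T.par n q = p → q ∈ A (n+1) → q ∈ B (n+1)) ∧
  (n.bodd = true → ∃ q, T.par n q = p ∧ q ∈ B (n+1))

def Leg2 (n : ℕ) (A : Sets T) (x : T.Play) : Choi T → Prop
  | Sum.inl B => IsQ2 T D A B ∧ ∀ m, 2 ≤ m → m ≤ n → x.1 m ∈ B m
  | Sum.inr u => 2 ≤ u.1 ∧ u.2 ∈ A u.1 ∧ u.2 ∉ D u.1 ∧ x.1 u.1 = u.2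

def Leg (n : ℕ) (A : Sets T) (c : Choi T) (x : T.Play) : Prop :=
  (IsQ T A ∧ x.1 1 ∈ A 1) ∧ Leg2 T D n A x c

theorem Leg.mono {n m : ℕ} {A : Sets T} {c : Choi T} {x : T.Play} (h : Leg T D n A c x)
    (hm : m ≤ n) : Leg T D m A c x := by
  refine ⟨h.1, ?_⟩
  have h2 := h.2
  cases c with
  | inl B => exact ⟨h2.1, fun l hl hl' => h2.2 l hl (hl'.trans hm)⟩
  | inr u => exact h2

abbrev P1 : Type u := {pA : T.P 1 × Sets T // IsQ T pA.2 ∧ pA.1 ∈ pA.2 1}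
abbrev P2 (n : ℕ) : Type u := {a : T.P (n+2) × Sets T × Choi T //
  ∃ x : T.Play, x.1 (n+2) = a.1 ∧ Leg T D (n+2) a.2.1 a.2.2 x}

def CP : ℕ → Type u
  | 0 => T.P 0
  | 1 => P1 T
  | n+2 => P2 T D n

def cpar1 (a : P2 T D 0) : P1 T := ⟨(T.par 1 a.1.1, a.1.2.1), by
  obtain ⟨x, hx, hl⟩ := a.2
  refine ⟨hl.1.1, ?_⟩
  have h1 : T.par 1 (x.1 2) = x.1 1 := x.2 1
  show T.par 1 a.1.1 ∈ a.1.2.1 1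
  rw [← hx, h1]; exact hl.1.2⟩

def cpar2 (n : ℕ) (a : P2 T D (n+1)) : P2 T D n := ⟨(T.par (n+2) a.1.1, a.1.2), by
  obtain ⟨x, hx, hl⟩ := a.2
  refine ⟨x, ?_, hl.mono T D (by omega)⟩
  show _ = T.par (n+2) a.1.1
  rw [← hx]
  exact (x.2 (n+2)).symm⟩

def cpar : ∀ n, CP T D (n+1) → CP T D n
  | 0 => fun a : P1 T => T.par 0 a.1.1
  | 1 => cpar1 T D
  | n+2 => cpar2 T D n

theorem cpar_surj : ∀ n, Function.Surjective (cpar T D n) := by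
  intro n
  match n with
  | 0 =>
    intro p
    obtain ⟨q, hq⟩ := T.surj 0 p
    refine ⟨(⟨(q, fun n => Set.univ), ?_, Set.mem_univ _⟩ : P1 T), hq⟩
    intro n hn p _
    refine ⟨fun _ => ?_, fun _ q _ => Set.mem_univ _⟩
    obtain ⟨q, hq⟩ := T.surj n p
    exact ⟨q, hq, Set.mem_univ _⟩
  | 1 =>
    intro (a : P1 T)
    obtain ⟨⟨p, A⟩, hA, hp⟩ := a
    obtain ⟨q, hq⟩ := T.surj 1 p
    have hqA : q ∈ A 2 := (hA 1 le_rfl p hp).2 rfl q hq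
    have hx1 : ∀ x : T.Play, x.1 2 = q → x.1 1 ∈ A 1 := by
      intro x hx
      rw [← x.2 1, hx, hq]; exact hp
    suffices h : ∃ c : Choi T, ∃ x : T.Play, x.1 2 = q ∧ Leg T D 2 A c x by
      obtain ⟨c, h⟩ := h
      refine ⟨(⟨(q, A, c), h⟩ : P2 T D 0), ?_⟩
      apply Subtype.ext
      show (T.par 1 q, A) = (p, A)
      rw [hq]
    by_cases hu : ∃ x : T.Play, x.1 2 = q ∧ ∃ m, 2 ≤ m ∧ x.1 m ∈ A m ∧ x.1 m ∉ D m
    · obtain ⟨x, hx, m, hm, h1, h2⟩ := hu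
      exact ⟨Sum.inr ⟨m, x.1 m⟩, x, hx, ⟨hA, hx1 x hx⟩, hm, h1, h2, rfl⟩
    · push Not at hu
      obtain ⟨x, hx⟩ := T.exists_thr q
      refine ⟨Sum.inl (fun n => {r | r ∈ A n ∧ ∃ x : T.Play, x.1 2 = q ∧ x.1 n = r}), x, hx,
        ⟨hA, hx1 x hx⟩, ?_, ?_⟩
      · rintro n hn r ⟨hr, y, hy, rfl⟩
        refine ⟨hr, hu y hy n hn hr, ?_, ?_⟩
        · rintro _ t ht htA
          refine ⟨htA, ?_⟩
          obtain ⟨z, rfl⟩ := T.exists_thr t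
          refine ⟨z, ?_, rfl⟩
          rw [← hy]
          exact Thread.eq_below z y (n := n) (by rw [← z.2 n, ht]) 2 hn
        · intro hb
          obtain ⟨t, ht⟩ := T.surj n (y.1 n)
          refine ⟨y.1 (n+1), y.2 n, (hA n (by omega) _ hr).2 hb _ (y.2 n), y, hy, rfl⟩
      · intro m hm hm'
        obtain rfl : m = 2 := by omega
        exact ⟨hx ▸ hqA, x, hx, rfl⟩
  | n+2 =>
    intro (a : P2 T D n)
    obtain ⟨⟨p, A, c⟩, x, hx, hl⟩ := a
    suffices h : ∃ y : T.Play, y.1 (n+2) = p ∧ Leg T D (n+3) A c y by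
      obtain ⟨y, hy, h⟩ := h
      refine ⟨(⟨(y.1 (n+3), A, c), y, rfl, h⟩ : P2 T D (n+1)), ?_⟩
      apply Subtype.ext
      show (T.par (n+2) (y.1 (n+3)), A, c) = (p, A, c)
      rw [← hy, y.2 (n+2)]
    cases c with
    | inr u => exact ⟨x, hx, hl⟩
    | inl B =>
      obtain ⟨⟨hA, hx1⟩, hB, hxB⟩ := hl
      simp only at hx hxB hA hx1 hB
      have hpB := hxB (n+2) (by omega) le_rfl
      obtain ⟨h1, h2, h3, h4⟩ := hB (n+2) (by omega) _ hpB
      have : ∃ q, T.par (n+2) q = x.1 (n+2) ∧ q ∈ B (n+3) := by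
        cases hb : (n+2).bodd with
        | false =>
          obtain ⟨q, hq, hqA⟩ := (hA (n+2) (by omega) _ h1).1 hb
          exact ⟨q, hq, h3 hb q hq hqA⟩
        | true => exact h4 hb
      obtain ⟨q, hq, hqB⟩ := this
      obtain ⟨y, hy⟩ := T.exists_thr q
      have hyx : ∀ m, m ≤ n+2 → y.1 m = x.1 m :=
        Thread.eq_below y x (by rw [← y.2 (n+2), hy, hq])
      refine ⟨y, by rw [hyx _ le_rfl, hx], ⟨hA, by rw [hyx 1 (by omega)]; exact hx1⟩, hB, ?_⟩
      intro m hm hm'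
      rcases Nat.lt_or_ge m (n+3) with h | h
      · rw [hyx m (by omega)]; exact hxB m hm (by omega)
      · obtain rfl : m = n + 3 := by omega
        rw [hy]; exact hqB

def CT : GT.{u} where
  P := CP T D
  par := cpar T D
  surj := cpar_surj T D

def cf : ∀ n, CP T D n → T.P n
  | 0 => fun p => p
  | 1 => fun a : P1 T => a.1.1
  | n+2 => fun a : P2 T D n => a.1.1

theorem cf_comm (n : ℕ) (p : CP T D (n+1)) : cf T D n (cpar T D n p) = T.par n (cf T D (n+1) p) := by
  match n with
  | 0 => rfl
  | 1 => rfl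
  | n+2 => rfl

/-- The canonical play of the covering tree from a legal annotated play. -/
def mkF (A : Sets T) (c : Choi T) (x : T.Play) (h : ∀ n, Leg T D n A c x) : ∀ n, CP T D n
  | 0 => x.1 0
  | 1 => (⟨(x.1 1, A), (h 0).1⟩ : P1 T)
  | n+2 => (⟨(x.1 (n+2), A, c), x, rfl, h (n+2)⟩ : P2 T D n)

def mk (A : Sets T) (c : Choi T) (x : T.Play) (h : ∀ n, Leg T D n A c x) : (CT T D).Play :=
  ⟨mkF T D A c x h, by
    intro n
    match n with
    | 0 => exact x.2 0
    | 1 =>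
      apply Subtype.ext
      show (T.par 1 (x.1 2), A) = (x.1 1, A)
      rw [x.2 1]
    | n+2 =>
      apply Subtype.ext
      show (T.par (n+2) (x.1 (n+3)), A, c) = (x.1 (n+2), A, c)
      rw [x.2 (n+2)]⟩

theorem mk_cf (A : Sets T) (c : Choi T) (x : T.Play) (h : ∀ n, Leg T D n A c x) (n : ℕ) :
    cf T D n ((mk T D A c x h).1 n) = x.1 n := by
  match n with
  | 0 => rfl
  | 1 => rfl
  | n+2 => rfl

/-- typed components of a strategy on the covering tree -/
abbrev S2 (n : ℕ) : Type u := ∀ a : P2 T D n, {q : P2 T D (n+1) // cpar2 T D n q = a}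
abbrev S1 : Type u := ∀ a : P1 T, {q : P2 T D 0 // cpar1 T D q = a}
abbrev S0 : Type u := ∀ a : T.P 0, {q : P1 T // T.par 0 q.1.1 = a}

theorem S2_snd (n : ℕ) (s : S2 T D n) (a : P2 T D n) : (s a).1.1.2 = a.1.2 := by
  have := (s a).2
  exact congrArg (fun z : P2 T D n => z.1.2) this

theorem S2_par (n : ℕ) (s : S2 T D n) (a : P2 T D n) : T.par (n+2) (s a).1.1.1 = a.1.1 := by
  have := (s a).2
  exact congrArg (fun z : P2 T D n => z.1.1) this

theorem S1_snd (s : S1 T D) (a : P1 T) : (s a).1.1.2.1 = a.1.2 := by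
  have := (s a).2
  exact congrArg (fun z : P1 T => z.1.2) this

theorem S1_par (s : S1 T D) (a : P1 T) : T.par 1 (s a).1.1.1 = a.1.1 := by
  have := (s a).2
  exact congrArg (fun z : P1 T => z.1.1) this

/-- Parameters of the imitation strategy. -/
structure Pm : Type u where
  U : Sets T
  Au : ∀ m, T.P m → Sets T
  A : Sets T
  B : Sets T

def Hit (U : Sets T) (x : T.Play) (m : ℕ) : Prop := x.1 m ∈ U m ∧ ∀ l, l < m → x.1 l ∉ U l

/-- The imitation rule at level `n+2`. -/
def Rule (b : Bool) (w : Pm T) (n : ℕ) (s : S2 T D n) (p : T.P (n+2)) (q : T.P (n+3)) : Prop :=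
  (∃ x : T.Play, x.1 (n+2) = p ∧ ∃ m, m ≤ n+2 ∧ Hit T w.U x m ∧
    ∃ h, q = (s ⟨(p, w.Au m (x.1 m), Sum.inr ⟨m, x.1 m⟩), h⟩).1.1.1) ∨
  ((∀ x : T.Play, x.1 (n+2) = p → ∀ m, m ≤ n+2 → x.1 m ∉ w.U m) ∧ Force b w.U (n+2) p ∧
    Force b w.U (n+3) q ∧ rk b w.U (n+3) q < rk b w.U (n+2) p) ∨
  ((∀ x : T.Play, x.1 (n+2) = p → ∀ m, m ≤ n+2 → x.1 m ∉ w.U m) ∧ ¬ Force b w.U (n+2) p ∧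
    ∃ h, q = (s ⟨(p, w.A, Sum.inl w.B), h⟩).1.1.1)

def Follows (b : Bool) (w : Pm T) (s : (CT T D).Strat) (x : T.Play) : Prop :=
  ∀ n, (n+2).bodd = b → (∃ q, T.par (n+2) q = x.1 (n+2) ∧ Rule T D b w n (s (n+2)) (x.1 (n+2)) q) →
    Rule T D b w n (s (n+2)) (x.1 (n+2)) (x.1 (n+3))

theorem hit_unique {U : Sets T} {x y : T.Play} {n m m' : ℕ} (hxy : x.1 n = y.1 n) (hm : m ≤ n)
    (hm' : m' ≤ n) (h : Hit T U x m) (h' : Hit T U y m') : m = m' := by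
  have hb := Thread.eq_below x y hxy
  rcases lt_trichotomy m m' with hlt | heq | hlt
  · exact absurd (hb m hm ▸ h.1) (h'.2 m hlt)
  · exact heq
  · exact absurd ((hb m' hm').symm ▸ h'.1) (h.2 m' hlt)

/-- In the mode `u`, responses before `u` are forced. -/
theorem forced (n : ℕ) (s : S2 T D n) (x : T.Play) (A : Sets T) (u : Σ n, T.P n) (h)
    (hu : x.1 u.1 = u.2) (hn : n + 3 ≤ u.1) :
    (s ⟨(x.1 (n+2), A, Sum.inr u), h⟩).1.1.1 = x.1 (n+3) := by
  set a := s ⟨(x.1 (n+2), A, Sum.inr u), h⟩ with ha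
  obtain ⟨y, hy, hl⟩ := a.1.2
  have h2 : a.1.1.2 = (A, Sum.inr u) := S2_snd T D n s _
  rw [h2] at hl
  have h3 : y.1 u.1 = u.2 := hl.2.2.2.2
  rw [← hy]
  exact Thread.eq_below y x (h3.trans hu.symm) (n+3) hn

theorem core_a (b : Bool) (w : Pm T) (s : (CT T D).Strat) (x : T.Play)
    (hF : Follows T D b w s x) (m : ℕ) (hm : Hit T w.U x m)
    (hleg : ∀ n, Leg T D n (w.Au m (x.1 m)) (Sum.inr ⟨m, x.1 m⟩) x) (n : ℕ) (hb : (n+2).bodd = b) :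
    (mk T D _ _ x hleg).1 (n+3) = (s (n+2) ((mk T D _ _ x hleg).1 (n+2))).1 := by
  apply Subtype.ext
  refine Prod.ext ?_ (S2_snd T D n (s (n+2)) ((mk T D _ _ x hleg).1 (n+2))).symm
  rcases Nat.lt_or_ge (n+2) m with h | h
  · exact (forced T D n (s (n+2)) x _ ⟨m, x.1 m⟩ _ rfl h).symm
  · have hex : Rule T D b w n (s (n+2)) (x.1 (n+2)) 
        ((s (n+2)) ((mk T D _ _ x hleg).1 (n+2))).1.1.1 := by
      exact Or.inl ⟨x, rfl, m, h, hm, ⟨x, rfl, hleg (n+2)⟩, rfl⟩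
    have hR := hF n hb ⟨_, S2_par T D n (s (n+2)) _, hex⟩
    rcases hR with ⟨y, hy, m', hm', hH, hh, hq⟩ | ⟨h1, _⟩ | ⟨h1, _⟩
    · obtain rfl := hit_unique T hy hm' h hH hm
      have : y.1 m' = x.1 m' := Thread.eq_below y x hy m' hm'
      have hgen : ∀ v : T.P m', v = x.1 m' → ∀ hh', 
          (s (n+2) (⟨(x.1 (n+2), w.Au m' v, Sum.inr ⟨m', v⟩), hh'⟩ : P2 T D n)).1.1.1 =
          (s (n+2) ((mk T D _ _ x hleg).1 (n+2))).1.1.1 := by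
        rintro _ rfl _
        rfl
      exact hq.trans (hgen _ this hh)
    · exact absurd hm.1 (h1 x rfl m h)
    · exact absurd hm.1 (h1 x rfl m h)

theorem core_noforce (b : Bool) (w : Pm T) (s : (CT T D).Strat) (x : T.Play)
    (hF : Follows T D b w s x) (hU : ∀ m, x.1 m ∉ w.U m) (n : ℕ) :
    ¬ Force b w.U (n+2) (x.1 (n+2)) := by
  intro hf
  obtain ⟨m, hm⟩ := hunt b w.U x (n+2) hf (by
    intro k hk hb _ hfk
    obtain ⟨j, rfl⟩ : ∃ j, k = j + 2 := ⟨k - 2, by omega⟩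
    have hnU : ∀ y : T.Play, y.1 (j+2) = x.1 (j+2) → ∀ m, m ≤ j+2 → y.1 m ∉ w.U m := by
      intro y hy m hm
      rw [Thread.eq_below y x hy m hm]; exact hU m
    obtain ⟨q, hq, hq1, hq2⟩ := hfk.mine_desc b w.U hb (hU _)
    have hR := hF j hb ⟨q, hq, Or.inr (Or.inl ⟨hnU, hfk, hq1, hq2⟩)⟩
    rcases hR with ⟨y, hy, m', hm', hH, _⟩ | ⟨_, _, h1⟩ | ⟨_, h1, _⟩
    · exact absurd hH.1 (hnU y hy m' hm')
    · exact h1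
    · exact absurd hfk h1)
  exact hU m hm

theorem core_b (b : Bool) (w : Pm T) (s : (CT T D).Strat) (x : T.Play)
    (hF : Follows T D b w s x) (hU : ∀ m, x.1 m ∉ w.U m)
    (hA : IsQ T w.A ∧ x.1 1 ∈ w.A 1) (hB : IsQ2 T D w.A w.B) (h2 : x.1 2 ∈ w.B 2)
    (hopp : ∀ n, (n+2).bodd ≠ b → x.1 (n+2) ∈ w.B (n+2) → x.1 (n+3) ∈ w.B (n+3)) :
    ∃ hleg : ∀ n, Leg T D n w.A (Sum.inl w.B) x, ∀ n, (n+2).bodd = b → 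
    (mk T D _ _ x hleg).1 (n+3) = (s (n+2) ((mk T D _ _ x hleg).1 (n+2))).1 := by
  have hR : ∀ n, (n+2).bodd = b → ∀ h : Leg T D (n+2) w.A (Sum.inl w.B) x,
      x.1 (n+3) = (s (n+2) (⟨(x.1 (n+2), w.A, Sum.inl w.B), x, rfl, h⟩ : P2 T D n)).1.1.1 := by
    intro n hb h
    have hnU : ∀ y : T.Play, y.1 (n+2) = x.1 (n+2) → ∀ m, m ≤ n+2 → y.1 m ∉ w.U m := by
      intro y hy m hm
      rw [Thread.eq_below y x hy m hm]; exact hU m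
    have hnf := core_noforce T D b w s x hF hU n
    have hR := hF n hb ⟨_, S2_par T D n (s (n+2)) _, Or.inr (Or.inr ⟨hnU, hnf, ⟨x, rfl, h⟩, rfl⟩)⟩
    rcases hR with ⟨y, hy, m', hm', hH, _⟩ | ⟨_, h1, _⟩ | ⟨_, _, _, h1⟩
    · exact absurd hH.1 (hnU y hy m' hm')
    · exact absurd h1 hnf
    · exact h1
  have hall : ∀ n, ∀ m, 2 ≤ m → m ≤ n + 2 → x.1 m ∈ w.B m := by
    intro n
    induction n with
    | zero =>
      intro m h h'
      obtain rfl : m = 2 := by omega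
      exact h2
    | succ n ih =>
      intro m h h'
      rcases Nat.lt_or_ge m (n+3) with hm | hm
      · exact ih m h (by omega)
      · obtain rfl : m = n + 3 := by omega
        by_cases hb : (n+2).bodd = b
        · have hl : Leg T D (n+2) w.A (Sum.inl w.B) x := ⟨hA, hB, ih⟩
          rw [hR n hb hl]
          have hsnd := S2_snd T D n (s (n+2)) (⟨(x.1 (n+2), w.A, Sum.inl w.B), x, rfl, hl⟩ : P2 T D n)
          obtain ⟨y, hy, hly⟩ := 
            (s (n+2) (⟨(x.1 (n+2), w.A, Sum.inl w.B), x, rfl, hl⟩ : P2 T D n)).1.2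
          rw [hsnd] at hly
          have hyB := hly.2.2 (n+3) (by omega) le_rfl
          rw [hy] at hyB
          exact hyB
        · exact hopp n hb (ih _ (by omega) le_rfl)
  refine ⟨fun n => ⟨hA, hB, fun m hm hm' => hall n m hm (by omega)⟩, ?_⟩
  intro n hb
  apply Subtype.ext
  refine Prod.ext ?_ (S2_snd T D n (s (n+2)) (⟨(x.1 (n+2), w.A, Sum.inl w.B), x, rfl, 
    ⟨hA, hB, fun m hm hm' => hall n m hm (by omega)⟩⟩ : P2 T D n)).symm
  exact hR n hb ⟨hA, hB, fun m hm hm' => hall n m hm (by omega)⟩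

end closed
end BD

set_option linter.unusedVariables false
namespace BD
universe u

section closed
variable (T : GT.{u}) (D : ∀ n, Set (T.P n))

def wI (A : Sets T) : Pm T where
  U n := {p | 2 ≤ n ∧ p ∈ A n ∧ p ∉ D n}
  Au _ _ := A
  A := A
  B n := {p | p ∈ A n ∧ ¬ Force false (fun n => {p | 2 ≤ n ∧ p ∈ A n ∧ p ∉ D n}) n p}

def UII (s : S1 T D) (p : T.P 1) : Sets T := fun m =>
  {u | ∃ A : Sets T, ∃ h : IsQ T A ∧ p ∈ A 1, (s ⟨(p, A), h⟩).1.1.2.2 = Sum.inr ⟨m, u⟩}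

def AII (s : S1 T D) (p : T.P 1) : Sets T := fun m => {q | ¬ Force true (UII T D s p) m q}

def getB : Choi T → Sets T
  | Sum.inl B => B
  | Sum.inr _ => fun _ => ∅

open Classical in
noncomputable def wII (s : S1 T D) (p : T.P 1) : Pm T where
  U := UII T D s p
  Au m u := if h : ∃ A : Sets T, ∃ h : IsQ T A ∧ p ∈ A 1, (s ⟨(p, A), h⟩).1.1.2.2 = Sum.inr ⟨m, u⟩
    then h.choose else fun _ => ∅
  A := AII T D s p
  B := if h : IsQ T (AII T D s p) ∧ p ∈ AII T D s p 1 then getB T (s ⟨(p, AII T D s p), h⟩).1.1.2.2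
    else fun _ => ∅

theorem AII_isQ (s : S1 T D) (p : T.P 1) : IsQ T (AII T D s p) := by
  intro n hn q hq
  refine ⟨fun hb => ?_, fun hb r hr hF => ?_⟩
  · by_contra hcon
    push Not at hcon
    apply hq
    apply Force.opp _ _ (by rw [hb]; simp)
    intro r hr
    by_contra hr'
    exact hcon r hr hr'
  · apply hq
    rw [← hr]
    exact hF.mine _ _ hb

theorem wI_isQ2 (A : Sets T) (hA : IsQ T A) : IsQ2 T D A (wI T D A).B := by
  rintro n hn p ⟨hpA, hpF⟩
  refine ⟨hpA, ?_, ?_, ?_⟩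
  · by_contra hD
    exact hpF (Force.of_mem _ _ ⟨hn, hpA, hD⟩)
  · intro hb q hq hqA
    refine ⟨hqA, fun hF => hpF ?_⟩
    rw [← hq]
    exact hF.mine _ _ hb
  · intro hb
    by_contra hcon
    push Not at hcon
    apply hpF
    apply Force.opp _ _ (by rw [hb]; simp)
    intro r hr
    by_contra hr'
    exact hcon r hr ⟨(hA n (by omega) p hpA).2 hb r hr, hr'⟩

noncomputable def phiI (s : (CT T D).Strat) : T.Strat
  | 0 => fun p => ⟨((s 0 p).1 : P1 T).1.1, (s 0 p).2⟩
  | 1 => fun p => T.child 1 p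
  | n+2 => fun p => T.pick p
      (Rule T D false (wI T D ((s 0 ((T.thr p).1 0)).1 : P1 T).1.2) n (s (n+2)) p)

def Rule1 (s : S1 T D) (p : T.P 1) (q : T.P 2) : Prop :=
  (Force true (UII T D s p) 1 p ∧ Force true (UII T D s p) 2 q ∧
    rk true (UII T D s p) 2 q < rk true (UII T D s p) 1 p) ∨
  (¬ Force true (UII T D s p) 1 p ∧ ∃ h, q = (s ⟨(p, AII T D s p), h⟩).1.1.1)

noncomputable def phiII (s : (CT T D).Strat) : T.Strat
  | 0 => fun p => T.child 0 p
  | 1 => fun p => T.pick p (Rule1 T D (s 1) p)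
  | n+2 => fun p => T.pick p
      (Rule T D true (wII T D (s 1) ((T.thr p).1 1)) n (s (n+2)) p)

theorem phiI_lift (s : (CT T D).Strat) (x : T.Play) (hx : Con false (phiI T D s) x) :
    ∃ y : (CT T D).Play, Con false s y ∧ ∀ n, cf T D n (y.1 n) = x.1 n := by
  classical
  set A : Sets T := ((s 0 (x.1 0)).1 : P1 T).1.2 with hAdef
  have hx1 : x.1 1 = ((s 0 (x.1 0)).1 : P1 T).1.1 := hx 0 rfl
  have hA : IsQ T A ∧ x.1 1 ∈ A 1 := by
    rw [hx1]; exact ((s 0 (x.1 0)).1 : P1 T).2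
  have h2A : x.1 2 ∈ A 2 := (hA.1 1 le_rfl _ hA.2).2 rfl _ (x.2 1)
  have hF : Follows T D false (wI T D A) s x := by
    intro n hb hex
    rw [hx (n+2) hb]
    show Rule T D false _ n _ _ (T.pick (x.1 (n+2)) (Rule T D false (wI T D ((s 0 ((T.thr (x.1 (n+2))).1 0)).1 : P1 T).1.2) n (s (n+2)) (x.1 (n+2)))).1
    rw [T.thr_eq x 0 (by omega)]
    exact T.pick_spec hex
  have h01 : ∀ (c : Choi T) (hl : ∀ n, Leg T D n A c x),
      (mk T D A c x hl).1 1 = (s 0 ((mk T D A c x hl).1 0)).1 := by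
    intro c hl
    apply Subtype.ext
    exact Prod.ext hx1 rfl
  by_cases hU : ∃ m, x.1 m ∈ (wI T D A).U m
  · have hm := Nat.find_spec hU
    have hm' := fun l hl => Nat.find_min hU (m := l) hl
    set m := Nat.find hU
    have hleg : ∀ n, Leg T D n A (Sum.inr ⟨m, x.1 m⟩) x :=
      fun n => ⟨hA, hm.1, hm.2.1, hm.2.2, rfl⟩
    refine ⟨mk T D A _ x hleg, ?_, mk_cf T D _ _ x hleg⟩
    intro n hn
    match n, hn with
    | 0, _ => exact h01 _ hleg
    | 1, hn => simp at hn
    | n+2, hn => exact core_a T D false (wI T D A) s x hF m ⟨hm, hm'⟩ hleg n hn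
  · push Not at hU
    have hnf := core_noforce T D false (wI T D A) s x hF hU
    obtain ⟨hleg, hc⟩ := core_b T D false (wI T D A) s x hF hU hA (wI_isQ2 T D A hA.1)
      ⟨h2A, hnf 0⟩ (by
        intro n hb hB
        refine ⟨(hA.1 (n+2) (by omega) _ hB.1).2 ?_ _ (x.2 (n+2)), hnf (n+1)⟩
        simpa using hb)
    refine ⟨mk T D A _ x hleg, ?_, mk_cf T D _ _ x hleg⟩
    intro n hn
    match n, hn with
    | 0, _ => exact h01 _ hleg
    | 1, hn => simp at hn
    | n+2, hn => exact hc n hn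

theorem phiII_lift (s : (CT T D).Strat) (x : T.Play) (hx : Con true (phiII T D s) x) :
    ∃ y : (CT T D).Play, Con true s y ∧ ∀ n, cf T D n (y.1 n) = x.1 n := by
  classical
  set w := wII T D (s 1) (x.1 1) with hw
  have hF : Follows T D true w s x := by
    intro n hb hex
    rw [hx (n+2) hb]
    show Rule T D true _ n _ _ (T.pick (x.1 (n+2)) (Rule T D true (wII T D (s 1) ((T.thr (x.1 (n+2))).1 1)) n (s (n+2)) (x.1 (n+2)))).1
    rw [T.thr_eq x 1 (by omega)]
    exact T.pick_spec hex
  have h1 : (∃ q, T.par 1 q = x.1 1 ∧ Rule1 T D (s 1) (x.1 1) q) → 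
      Rule1 T D (s 1) (x.1 1) (x.1 2) := by
    intro hex
    have h2 : x.1 2 = (T.pick (x.1 1) (Rule1 T D (s 1) (x.1 1))).1 := hx 1 rfl
    rw [h2]
    exact T.pick_spec hex
  by_cases hU : ∃ m, x.1 m ∈ w.U m
  · have hm := Nat.find_spec hU
    have hm' := fun l hl => Nat.find_min hU (m := l) hl
    set m := Nat.find hU
    have hAu : w.Au m (x.1 m) = hm.choose := dif_pos hm
    obtain ⟨hA, hc⟩ := hm.choose_spec
    rw [← hAu] at hA
    have hc' : (((s 1) (⟨(x.1 1, w.Au m (x.1 m)), hA⟩ : P1 T)).1 : P2 T D 0).1.2.2 = Sum.inr ⟨m, x.1 m⟩ := by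
      have hgen : ∀ A', A' = hm.choose → ∀ h : IsQ T A' ∧ x.1 1 ∈ A' 1,
        (((s 1) (⟨(x.1 1, A'), h⟩ : P1 T)).1 : P2 T D 0).1.2.2 = Sum.inr ⟨m, x.1 m⟩ := by
        rintro _ rfl h; exact hc
      exact hgen _ hAu hA
    have hs : (((s 1) (⟨(x.1 1, w.Au m (x.1 m)), hA⟩ : P1 T)).1 : P2 T D 0).1.2.1 = w.Au m (x.1 m) := 
      S1_snd T D (s 1) _
    obtain ⟨y, hy, hly⟩ := (((s 1) (⟨(x.1 1, w.Au m (x.1 m)), hA⟩ : P1 T)).1 : P2 T D 0).2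
    rw [hs, hc'] at hly
    have hleg : ∀ n, Leg T D n (w.Au m (x.1 m)) (Sum.inr ⟨m, x.1 m⟩) x :=
      fun n => ⟨hA, hly.2.1, hly.2.2.1, hly.2.2.2.1, rfl⟩
    refine ⟨mk T D _ _ x hleg, ?_, mk_cf T D _ _ x hleg⟩
    intro n hn
    match n, hn with
    | 0, hn => simp at hn
    | 1, hn =>
      apply Subtype.ext
      refine Prod.ext ?_ (Prod.ext hs.symm hc'.symm)
      refine Eq.trans ?_ hy
      exact Thread.eq_below x y (n := m) hly.2.2.2.2.symm 2 hly.2.1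
    | n+2, hn => exact core_a T D true w s x hF m ⟨hm, hm'⟩ hleg n hn
  · push Not at hU
    have hnf := core_noforce T D true w s x hF hU
    have hAQ := AII_isQ T D (s 1) (x.1 1)
    have hnf1 : ¬ Force true w.U 1 (x.1 1) := by
      intro hf
      obtain ⟨q, hq, hq1, hq2⟩ := hf.mine_desc _ _ rfl (hU 1)
      rcases h1 ⟨q, hq, Or.inl ⟨hf, hq1, hq2⟩⟩ with ⟨_, h, _⟩ | ⟨h, _⟩
      · exact hnf 0 h
      · exact h hf
    have hA : IsQ T w.A ∧ x.1 1 ∈ w.A 1 := ⟨hAQ, hnf1⟩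
    have hx2 : x.1 2 = ((s 1 (⟨(x.1 1, w.A), hA⟩ : P1 T)).1 : P2 T D 0).1.1 := by
      rcases h1 ⟨_, S1_par T D (s 1) (⟨(x.1 1, w.A), hA⟩ : P1 T), Or.inr ⟨hnf1, hA, rfl⟩⟩ with ⟨h, _⟩ | ⟨_, h, h'⟩
      · exact absurd h hnf1
      · exact h'
    have hs : ((s 1 (⟨(x.1 1, w.A), hA⟩ : P1 T)).1 : P2 T D 0).1.2.1 = w.A := 
      S1_snd T D (s 1) _
    have hwB : w.B = getB T ((s 1 (⟨(x.1 1, w.A), hA⟩ : P1 T)).1 : P2 T D 0).1.2.2 := dif_pos hA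
    obtain ⟨y, hy, hly⟩ := ((s 1 (⟨(x.1 1, w.A), hA⟩ : P1 T)).1 : P2 T D 0).2
    rw [hs] at hly
    have hc : ((s 1 (⟨(x.1 1, w.A), hA⟩ : P1 T)).1 : P2 T D 0).1.2.2 = Sum.inl w.B := by
      cases hc : ((s 1 (⟨(x.1 1, w.A), hA⟩ : P1 T)).1 : P2 T D 0).1.2.2 with
      | inl B => rw [hwB, hc]; rfl
      | inr u =>
        exfalso
        rw [hc] at hly
        exact hly.2.2.1 (Force.of_mem _ _ ⟨_, hA, hc⟩)
    rw [hc] at hly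
    have hB2 : x.1 2 ∈ w.B 2 := by
      have := hly.2.2 2 le_rfl le_rfl
      rw [hx2]
      rw [← hy]; exact this
    have hBQ : IsQ2 T D w.A w.B := hly.2.1
    obtain ⟨hleg, hcc⟩ := core_b T D true w s x hF hU hA hBQ hB2 (by
        intro n hb hB
        exact (hBQ (n+2) (by omega) _ hB).2.2.1 (by simpa using hb) _ (x.2 (n+2)) (hnf (n+1)))
    refine ⟨mk T D _ _ x hleg, ?_, mk_cf T D _ _ x hleg⟩
    intro n hn
    match n, hn with
    | 0, hn => simp at hn
    | 1, hn =>
      apply Subtype.ext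
      exact Prod.ext hx2 (Prod.ext hs.symm hc.symm)
    | n+2, hn => exact hcc n hn

noncomputable def closedCov : Cov (CT T D) T 0 where
  f := cf T D
  comm := cf_comm T D
  φ b s := match b with
    | false => phiI T D s
    | true => phiII T D s
  loc b n s s' h := by
    cases b with
    | false =>
      match n, h with
      | 0, h => 
        funext p
        show (⟨((s 0 p).1 : P1 T).1.1, (s 0 p).2⟩ : {q // T.par 0 q = p}) = ⟨((s' 0 p).1 : P1 T).1.1, (s' 0 p).2⟩
        simp only [h 0 le_rfl]
      | 1, h => rfl
      | n+2, h =>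
        funext p
        show T.pick p (Rule T D false (wI T D ((s 0 ((T.thr p).1 0)).1 : P1 T).1.2) n (s (n+2)) p) = 
          T.pick p (Rule T D false (wI T D ((s' 0 ((T.thr p).1 0)).1 : P1 T).1.2) n (s' (n+2)) p)
        rw [h 0 (by omega), h (n+2) le_rfl]
    | true =>
      match n, h with
      | 0, h => rfl
      | 1, h =>
        funext p
        show T.pick p (Rule1 T D (s 1) p) = T.pick p (Rule1 T D (s' 1) p)
        rw [h 1 le_rfl]
      | n+2, h =>
        funext p
        show T.pick p (Rule T D true (wII T D (s 1) ((T.thr p).1 1)) n (s (n+2)) p) = 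
          T.pick p (Rule T D true (wII T D (s' 1) ((T.thr p).1 1)) n (s' (n+2)) p)
        rw [h 1 (by omega), h (n+2) le_rfl]
  lift b s x hx := by
    cases b with
    | false => exact phiI_lift T D s x hx
    | true => exact phiII_lift T D s x hx
  bij n hn := by
    obtain rfl : n = 0 := by omega
    exact Function.bijective_id
  fix b s n hn := by omega

end closed

theorem closed_unravel0 (T : GT.{u}) (X : Set T.Play) (hX : Op Xᶜ) :
    ∃ T' : GT.{u}, ∃ c : Cov T' T 0, Clp (c.map ⁻¹' X) := by
  let D : ∀ n, Set (T.P n) := fun n => {p | ∃ x ∈ X, x.1 n = p}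
  refine ⟨CT T D, closedCov T D, ?_⟩
  have key : ∀ y : (CT T D).Play, 
      ((closedCov T D).map y ∈ X ↔ ∃ B, (y.1 2 : P2 T D 0).1.2.2 = Sum.inl B) := by
    intro y
    have hsnd : ∀ n, (y.1 (n+2) : P2 T D n).1.2 = (y.1 2 : P2 T D 0).1.2 := by
      intro n
      induction n with
      | zero => rfl
      | succ n ih =>
        rw [← ih]
        have := y.2 (n+2)
        exact congrArg (fun z : P2 T D n => z.1.2) this
    set x := (closedCov T D).map y with hxdef
    have hxn : ∀ n, x.1 (n+2) = (y.1 (n+2) : P2 T D n).1.1 := fun n => rfl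
    cases hc : (y.1 2 : P2 T D 0).1.2.2 with
    | inl B =>
      simp only [Sum.inl.injEq, exists_eq', iff_true]
      by_contra hx
      obtain ⟨n, hn⟩ := hX x hx
      obtain ⟨z, hz, hl⟩ := (y.1 (n+2) : P2 T D n).2
      rw [hsnd n, hc] at hl
      have h1 := hl.2.2 (n+2) (by omega) le_rfl
      obtain ⟨_, ⟨v, hv, hv'⟩, _⟩ := hl.2.1 (n+2) (by omega) _ h1
      refine hn v ?_ hv
      refine Thread.eq_below v x (n := n+2) ?_ n (by omega)
      rw [hv', hz, hxn]
    | inr u =>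
      simp only [reduceCtorEq, exists_false, iff_false]
      intro hx
      obtain ⟨z, hz, hl⟩ := (y.1 (u.1+2) : P2 T D u.1).2
      rw [hsnd u.1, hc] at hl
      apply hl.2.2.2.1
      refine ⟨x, hx, ?_⟩
      rw [← hl.2.2.2.2]
      exact Thread.eq_below x z (n := u.1+2) (by rw [hz, hxn]) u.1 (by omega)
  constructor
  · intro y hy
    refine ⟨2, fun z hz => ?_⟩
    rw [Set.mem_preimage, key] at hy ⊢
    rw [hz]; exact hy
  · intro y hy
    refine ⟨2, fun z hz => ?_⟩
    rw [Set.mem_compl_iff, Set.mem_preimage, key] at hy ⊢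
    rw [hz]; exact hy

theorem closed_unravel : ∀ (k : ℕ) (T : GT.{u}) (X : Set T.Play) (hX : Op Xᶜ),
    ∃ T' : GT.{u}, ∃ c : Cov T' T k, Clp (c.map ⁻¹' X) := by
  intro k
  induction k with
  | zero => exact closed_unravel0
  | succ k ih =>
    intro T X hX
    let cs : T.shift.Play → T.Play := fun x =>
      ⟨fun n => Nat.casesOn (motive := fun n => T.P n) n (T.par 0 (x.1 0)) (fun n => x.1 n), by
        intro n
        cases n with
        | zero => rfl
        | succ n => exact x.2 n⟩
    have hcs : ∀ Y : Set T.Play, Op Y → Op (cs ⁻¹' Y) := by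
      intro Y hY x hx
      obtain ⟨n, hn⟩ := hY _ hx
      refine ⟨n, fun y hy => hn _ ?_⟩
      have h2 := Thread.eq_below y x hy
      cases n with
      | zero => exact congrArg (T.par 0) (h2 0 le_rfl)
      | succ n => exact h2 n (by omega)
    obtain ⟨T', c, hc⟩ := ih T.shift (cs ⁻¹' X) (hcs _ hX)
    refine ⟨_, unshift c, ?_⟩
    have gen : ∀ Y : Set T.Play, Op (c.map ⁻¹' (cs ⁻¹' Y)) → Op ((unshift c).map ⁻¹' Y) := by
      intro Y hY x hx
      let tl : _ → T'.Play := fun z : (T'.cons (T.P 0) (fun p => T.par 0 (c.f 0 p))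
        ((T.surj 0).comp (c.bij 0 (Nat.zero_le k)).2)).Play => ⟨fun n => z.1 (n+1), fun n => z.2 (n+1)⟩
      have htl : ∀ z, cs (c.map (tl z)) = (unshift c).map z := by
        intro z
        apply Subtype.ext
        funext n
        cases n with
        | zero => exact z.2 0
        | succ n => rfl
      obtain ⟨n, hn⟩ := hY (tl x) (by
        rw [Set.mem_preimage, Set.mem_preimage, htl]; exact hx)
      refine ⟨n+1, fun y hy => ?_⟩
      have := hn (tl y) hy
      rw [Set.mem_preimage, Set.mem_preimage, htl] at this
      exact this
    exact ⟨gen X hc.1, gen Xᶜ hc.2⟩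

theorem open_unravel (k : ℕ) (T : GT.{u}) (X : Set T.Play) (hX : Op X) :
    ∃ T' : GT.{u}, ∃ c : Cov T' T k, Clp (c.map ⁻¹' X) := by
  obtain ⟨T', c, hc⟩ := closed_unravel k T Xᶜ (by rwa [compl_compl])
  refine ⟨T', c, ?_⟩
  have := hc.compl
  rwa [Set.preimage_compl, compl_compl] at this

end BD

set_option linter.unusedVariables false

namespace BD
universe u
variable {S : Type u}

def Cont {T : GT.{u}} (F : T.Play → (ℕ → S)) : Prop := ∀ i (A : Set S), Clp {x | F x i ∈ A}

def Good (B : Set (ℕ → S)) : Prop := ∀ (T : GT.{u}) (F : T.Play → (ℕ → S)), Cont F → ∀ k,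
  ∃ T' : GT.{u}, ∃ c : Cov T' T k, Clp (c.map ⁻¹' (F ⁻¹' B))

theorem Cont.pre {T' T : GT.{u}} {k : ℕ} (c : Cov T' T k) {F : T.Play → (ℕ → S)} (h : Cont F) :
    Cont (F ∘ c.map) := fun i A => (h i A).pre c

theorem good_union (B : ℕ → Set (ℕ → S)) (hB : ∀ i, Good (B i)) : Good (⋃ i, B i) := by
  intro T F hF k
  choose nT nc hn using hB
  let Stage : Type (u+1) := Σ T : GT.{u}, {F : T.Play → (ℕ → S) // Cont F}
  let nxt : ℕ → Stage → Stage := fun i s => ⟨nT i s.1 s.2.1 s.2.2 (k+i),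
    ⟨s.2.1 ∘ (nc i s.1 s.2.1 s.2.2 (k+i)).map, s.2.2.pre _⟩⟩
  let st : ℕ → Stage := fun n => Nat.rec (motive := fun _ => Stage) ⟨T, ⟨F, hF⟩⟩ nxt n
  let TT : ℕ → GT.{u} := fun i => (st i).1
  let c : ∀ i, Cov (TT (i+1)) (TT i) (k+i) := fun i =>
    nc i (st i).1 (st i).2.1 (st i).2.2 (k+i)
  have hev : ∀ i x, (st i).2.1 (limEval TT k c i x) = F ((limCov TT k c).map x) := by
    intro i x
    induction i with
    | zero => rw [limEval_zero]; rfl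
    | succ i ih =>
      rw [← ih, ← limEval_step TT k c i]; rfl
  have hop : Op ((limCov TT k c).map ⁻¹' (F ⁻¹' ⋃ i, B i)) := by
    intro x hx
    obtain ⟨i, hi⟩ := Set.mem_iUnion.1 hx
    have h1 := limEval_op TT k c (i+1) (hn i (st i).1 (st i).2.1 (st i).2.2 (k+i)).1
    have h2 : ∀ y, y ∈ limEval TT k c (i+1) ⁻¹' ((nc i (st i).1 (st i).2.1 (st i).2.2 (k+i)).map ⁻¹'
        ((st i).2.1 ⁻¹' B i)) ↔ F ((limCov TT k c).map y) ∈ B i := by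
      intro y
      rw [← hev (i+1)]; rfl
    obtain ⟨n, hn⟩ := h1 x ((h2 x).2 hi)
    exact ⟨n, fun y hy => Set.mem_iUnion.2 ⟨i, (h2 y).1 (hn y hy)⟩⟩
  obtain ⟨T', d, hd⟩ := open_unravel k _ _ hop
  exact ⟨T', d.comp (limCov TT k c), hd⟩

theorem good_of_measurable [m : MeasurableSpace S] (B : Set (ℕ → S)) (hB : MeasurableSet B) :
    Good B := by
  have : (MeasurableSpace.pi : MeasurableSpace (ℕ → S)) ≤
      { MeasurableSet' := Good
        measurableSet_empty := fun T F hF k => ⟨T, Cov.refl T k,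
          ⟨fun x hx => hx.elim, fun x hx => ⟨0, fun y _ => hx⟩⟩⟩
        measurableSet_compl := fun s hs T F hF k => by
          obtain ⟨T', c, hc⟩ := hs T F hF k
          exact ⟨T', c, hc.compl⟩
        measurableSet_iUnion := good_union } := by
    refine iSup_le fun i => ?_
    rintro _ ⟨A, -, rfl⟩
    intro T F hF k
    exact ⟨T, Cov.refl T k, hF i A⟩
  exact this _ hB

theorem borel_det [m : MeasurableSpace S] (B : Set (ℕ → S)) (hB : MeasurableSet B) (T : GT.{u})
    (F : T.Play → (ℕ → S)) (hF : Cont F) (p : T.P 0) :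
    (∃ s : T.Strat, ∀ x, x.1 0 = p → Con false s x → F x ∈ B) ∨
    (∃ s : T.Strat, ∀ x, x.1 0 = p → Con true s x → F x ∉ B) := by
  obtain ⟨T', c, hc⟩ := good_of_measurable B hB T F hF 0
  obtain ⟨q, rfl⟩ := (c.bij 0 le_rfl).2 p
  rcases open_det T' _ hc.1 false q with ⟨s, hs⟩ | ⟨s, hs⟩
  · left
    refine ⟨c.φ false s, fun x hx hx' => ?_⟩
    obtain ⟨y, hy, hy'⟩ := c.lift _ _ _ hx'
    have := hs y ((c.bij 0 le_rfl).1 ((hy' 0).trans hx)) hy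
    rwa [Set.mem_preimage, show c.map y = x from Subtype.ext (funext hy')] at this
  · right
    refine ⟨c.φ true s, fun x hx hx' => ?_⟩
    obtain ⟨y, hy, hy'⟩ := c.lift _ _ _ hx'
    have := hs y ((c.bij 0 le_rfl).1 ((hy' 0).trans hx)) hy
    rwa [Set.mem_preimage, show c.map y = x from Subtype.ext (funext hy')] at this

end BD

set_option linter.unusedVariables false
set_option linter.unusedSectionVars false
set_option linter.unusedSimpArgs false
open MeasureTheory
open scoped ENNReal
namespace Stmt10
variable {S A₁ A₂ : Type}

theorem listProb_snoc (K : List S → S → S → ℝ≥0∞) (s' : S) (h : List S) (c : S) :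
    ∀ (r hist : List S) (cur : S), hist ++ cur :: r = h ++ [c] →
      listProb K hist cur (r ++ [s']) = listProb K hist cur r * K h c s' := by
  intro r
  induction r with
  | nil =>
    intro hist cur e
    obtain ⟨rfl, e2⟩ := List.append_inj' e rfl
    obtain rfl : cur = c := by simpa using e2
    simp [listProb]
  | cons a r ih =>
    intro hist cur e
    have := ih (hist ++ [cur]) a (by simpa using e)
    simp only [List.cons_append, listProb, this, mul_assoc]

/-- The prefix of length `n`. -/
def pre (ρ : ℕ → S) (n : ℕ) : List S := (List.range n).map ρ

theorem pre_succ (ρ : ℕ → S) (n : ℕ) : pre ρ (n+1) = pre ρ n ++ [ρ n] := by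
  simp [pre, List.range_succ]

theorem pre_cons (ρ : ℕ → S) (n : ℕ) : pre ρ (n+1) = ρ 0 :: pre (fun i => ρ (i+1)) n := by
  simp [pre, List.range_succ_eq_map, Function.comp_def]

/-- Cylinder of the first `n+1` coordinates. -/
def Cn (n : ℕ) (ρ : ℕ → S) : Set (ℕ → S) := {ρ' | ∀ i, i ≤ n → ρ' i = ρ i}

theorem Cn_eq (n : ℕ) (ρ : ℕ → S) : Cn n ρ = Cyl (pre ρ (n+1)) := by
  ext ρ'
  simp only [Cn, Cyl, pre]
  constructor
  · intro h i
    have := i.2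
    simp at this
    simpa using h i.1 (by omega)
  · intro h i hi
    simpa using h ⟨i, by simp; omega⟩

section
variable [Fintype A₁] [Fintype A₂] [MeasurableSpace S] {turn : S → Bool}
    {δ₁ : S → A₁ → PMF S} {δ₂ : S → A₂ → PMF S}
    {Pr : S → (List S → PMF A₁) → (List S → PMF A₂) → Measure (ℕ → S)}

theorem Cn_zero (hPr : IsPlayMeasure turn δ₁ δ₂ Pr) (s : S) (σ : List S → PMF A₁)
    (π : List S → PMF A₂) (ρ : ℕ → S) (h : ρ 0 = s) : Pr s σ π (Cn 0 ρ) = 1 := by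
  rw [Cn_eq, pre_cons, h, hPr.2]
  simp [pre, listProb]

theorem Cn_succ (hPr : IsPlayMeasure turn δ₁ δ₂ Pr) (s : S) (σ : List S → PMF A₁)
    (π : List S → PMF A₂) (ρ : ℕ → S) (h : ρ 0 = s) (n : ℕ) :
    Pr s σ π (Cn (n+1) ρ) =
      Pr s σ π (Cn n ρ) * step turn δ₁ δ₂ σ π (pre ρ n) (ρ n) (ρ (n+1)) := by
  rw [Cn_eq, Cn_eq, pre_cons ρ (n+1), pre_cons ρ n, h, hPr.2, hPr.2, pre_succ]
  apply listProb_snoc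
  rw [← pre_succ, ← h, List.nil_append, pre_cons]
end

/-- Replace the coordinate `n`. -/
def up (ρ : ℕ → S) (n : ℕ) (s : S) : ℕ → S := fun i => if i = n then s else ρ i

theorem up_le (ρ : ℕ → S) (n : ℕ) (s : S) (i : ℕ) (h : i ≤ n) : up ρ (n+1) s i = ρ i := by
  simp [up, show i ≠ n+1 by omega]

theorem up_self (ρ : ℕ → S) (n : ℕ) (s : S) : up ρ n s n = s := by simp [up]

theorem pre_congr (ρ ρ' : ℕ → S) (n : ℕ) (h : ∀ i, i < n → ρ i = ρ' i) : pre ρ n = pre ρ' n := by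
  apply List.map_congr_left
  intro i hi
  exact h i (by simpa using hi)

theorem Cn_up (ρ : ℕ → S) (n : ℕ) : Cn n ρ = ⋃ s, Cn (n+1) (up ρ (n+1) s) := by
  ext ρ'
  simp only [Set.mem_iUnion]
  constructor
  · intro h
    refine ⟨ρ' (n+1), fun i hi => ?_⟩
    rcases Nat.lt_or_ge n i with h1 | h1
    · obtain rfl : i = n+1 := by omega
      rw [up_self]
    · rw [up_le _ _ _ _ h1]; exact h i h1
  · rintro ⟨s, h⟩ i hi
    rw [h i (by omega), up_le _ _ _ _ hi]

theorem meas_loc [Finite S] [MeasurableSpace S] [DiscreteMeasurableSpace S] [Nonempty S] (n : ℕ)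
    (E : Set (ℕ → S)) (hE : ∀ ρ ρ' : ℕ → S, (∀ i, i ≤ n → ρ i = ρ' i) → ρ ∈ E → ρ' ∈ E) :
    MeasurableSet E := by
  have hm : Measurable (fun (ρ : ℕ → S) (i : Fin (n+1)) => ρ i.1) := by
    exact measurable_pi_lambda _ fun i => measurable_pi_apply _
  have : E = (fun (ρ : ℕ → S) (i : Fin (n+1)) => ρ i.1) ⁻¹'
      ((fun (ρ : ℕ → S) (i : Fin (n+1)) => ρ i.1) '' E) := by
    ext ρ
    constructor
    · exact fun h => ⟨ρ, h, rfl⟩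
    · rintro ⟨ρ', h, e⟩
      exact hE ρ' ρ (fun i hi => congrFun e ⟨i, by omega⟩) h
  rw [this]
  exact hm (MeasurableSet.of_discrete)

variable [Fintype S] [Nonempty S] [Fintype A₁] [Fintype A₂] [MeasurableSpace S]
    [DiscreteMeasurableSpace S] {turn : S → Bool}
    {δ₁ : S → A₁ → PMF S} {δ₂ : S → A₂ → PMF S}
    {Pr : S → (List S → PMF A₁) → (List S → PMF A₂) → Measure (ℕ → S)}

/-- Functions depending only on the coordinates up to `n`. -/
def Loc {β : Sort*} (w : ℕ → (ℕ → S) → β) : Prop :=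
  ∀ n ρ ρ', (∀ i, i ≤ n → ρ i = ρ' i) → w n ρ = w n ρ'

theorem Cn_up_succ (hPr : IsPlayMeasure turn δ₁ δ₂ Pr) (s : S) (σ : List S → PMF A₁)
    (π : List S → PMF A₂) (ρ : ℕ → S) (h : ρ 0 = s) (n : ℕ) (s' : S) :
    Pr s σ π (Cn (n+1) (up ρ (n+1) s')) =
      Pr s σ π (Cn n ρ) * step turn δ₁ δ₂ σ π (pre ρ n) (ρ n) s' := by
  rw [Cn_succ hPr s σ π _ (by rw [up_le _ _ _ _ (Nat.zero_le _), h]), up_self,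
    up_le _ _ _ _ le_rfl, pre_congr (up ρ (n+1) s') ρ n (fun i hi => up_le _ _ _ _ (by omega))]
  congr 2
  ext ρ'
  exact forall₂_congr fun i hi => by rw [up_le _ _ _ _ hi]

theorem sub_lemma (hPr : IsPlayMeasure turn δ₁ δ₂ Pr) (s : S) (σ : List S → PMF A₁)
    (π : List S → PMF A₂) (w : ℕ → (ℕ → S) → ℝ≥0∞) (hw : Loc w) (hw1 : ∀ n ρ, w n ρ ≤ 1)
    (hsm : ∀ n ρ, ρ 0 = s → w n ρ ≤ ∑ s', step turn δ₁ δ₂ σ π (pre ρ n) (ρ n) s' *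
      w (n+1) (up ρ (n+1) s')) :
    ∀ d n ρ, ρ 0 = s → Pr s σ π (Cn n ρ) * w n ρ ≤
      Pr s σ π (Cn n ρ ∩ {ρ' | 0 < w (n+d) ρ'}) := by
  intro d
  induction d with
  | zero =>
    intro n ρ h
    rcases eq_or_ne (w n ρ) 0 with h0 | h0
    · simp [h0]
    · have : Cn n ρ ∩ {ρ' | 0 < w (n+0) ρ'} = Cn n ρ := by
        apply Set.inter_eq_left.2
        intro ρ' hρ'
        show 0 < w n ρ'
        rw [hw n ρ' ρ hρ']
        exact pos_iff_ne_zero.2 h0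
      rw [this]
      exact mul_le_of_le_one_right zero_le (hw1 n ρ)
  | succ d ih =>
    intro n ρ h
    have h0 : ∀ s', up ρ (n+1) s' 0 = s := fun s' => by rw [up_le _ _ _ _ (Nat.zero_le _), h]
    calc Pr s σ π (Cn n ρ) * w n ρ
        ≤ Pr s σ π (Cn n ρ) * ∑ s', step turn δ₁ δ₂ σ π (pre ρ n) (ρ n) s' *
          w (n+1) (up ρ (n+1) s') := by gcongr; exact hsm n ρ h
      _ = ∑ s', Pr s σ π (Cn (n+1) (up ρ (n+1) s')) * w (n+1) (up ρ (n+1) s') := by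
          rw [Finset.mul_sum]
          refine Finset.sum_congr rfl fun s' _ => ?_
          rw [Cn_up_succ hPr s σ π ρ h, mul_assoc]
      _ ≤ ∑ s', Pr s σ π (Cn (n+1) (up ρ (n+1) s') ∩ {ρ' | 0 < w (n+1+d) ρ'}) :=
          Finset.sum_le_sum fun s' _ => ih (n+1) _ (h0 s')
      _ = Pr s σ π (⋃ s', Cn (n+1) (up ρ (n+1) s') ∩ {ρ' | 0 < w (n+1+d) ρ'}) := by
          rw [measure_iUnion, tsum_fintype]
          · intro a b hab
            apply Set.disjoint_left.2
            rintro ρ' ⟨h1, -⟩ ⟨h2, -⟩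
            apply hab
            have e1 := h1 (n+1) le_rfl
            have e2 := h2 (n+1) le_rfl
            rw [up_self] at e1 e2
            exact e1.symm.trans e2
          · intro a
            apply MeasurableSet.inter
            · apply meas_loc (n+1)
              intro ρ ρ' h h' i hi
              rw [← h i hi]; exact h' i hi
            · apply meas_loc (n+1+d)
              intro ρ ρ' h h'
              show 0 < w _ ρ'
              rw [← hw _ ρ ρ' h]; exact h'
      _ = Pr s σ π (Cn n ρ ∩ {ρ' | 0 < w (n+(d+1)) ρ'}) := by
          rw [← Set.iUnion_inter, ← Cn_up, show n+1+d = n+(d+1) by omega]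

theorem sup_lemma (hPr : IsPlayMeasure turn δ₁ δ₂ Pr) (s : S) (σ : List S → PMF A₁)
    (π : List S → PMF A₂) (w : ℕ → (ℕ → S) → ℝ≥0∞) (hw : Loc w)
    (hsm : ∀ n ρ, ρ 0 = s → ∑ s', step turn δ₁ δ₂ σ π (pre ρ n) (ρ n) s' *
      w (n+1) (up ρ (n+1) s') ≤ w n ρ) :
    ∀ d n ρ, ρ 0 = s → 
      Pr s σ π (Cn n ρ ∩ {ρ' | 1 ≤ w (n+d) ρ'}) ≤ Pr s σ π (Cn n ρ) * w n ρ := by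
  intro d
  induction d with
  | zero =>
    intro n ρ h
    rcases lt_or_ge (w n ρ) 1 with h0 | h0
    · have : Cn n ρ ∩ {ρ' | 1 ≤ w (n+0) ρ'} = ∅ := by
        apply Set.eq_empty_of_forall_notMem
        rintro ρ' ⟨hρ', h1⟩
        have h1 : 1 ≤ w n ρ' := h1
        rw [hw n ρ' ρ hρ'] at h1
        exact absurd h0 (not_lt.2 h1)
      rw [this]; simp
    · calc _ ≤ Pr s σ π (Cn n ρ) := measure_mono Set.inter_subset_left
        _ ≤ _ := le_mul_of_one_le_right zero_le h0
  | succ d ih =>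
    intro n ρ h
    have h0 : ∀ s', up ρ (n+1) s' 0 = s := fun s' => by rw [up_le _ _ _ _ (Nat.zero_le _), h]
    calc Pr s σ π (Cn n ρ ∩ {ρ' | 1 ≤ w (n+(d+1)) ρ'})
      _ = Pr s σ π (⋃ s', Cn (n+1) (up ρ (n+1) s') ∩ {ρ' | 1 ≤ w (n+1+d) ρ'}) := by
          rw [← Set.iUnion_inter, ← Cn_up, show n+1+d = n+(d+1) by omega]
      _ ≤ ∑ s', Pr s σ π (Cn (n+1) (up ρ (n+1) s') ∩ {ρ' | 1 ≤ w (n+1+d) ρ'}) := by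
          exact measure_iUnion_fintype_le _ _
      _ ≤ ∑ s', Pr s σ π (Cn (n+1) (up ρ (n+1) s')) * w (n+1) (up ρ (n+1) s') := 
          Finset.sum_le_sum fun s' _ => ih (n+1) _ (h0 s')
      _ = Pr s σ π (Cn n ρ) * ∑ s', step turn δ₁ δ₂ σ π (pre ρ n) (ρ n) s' *
          w (n+1) (up ρ (n+1) s') := by
          rw [Finset.mul_sum]
          refine Finset.sum_congr rfl fun s' _ => ?_
          rw [Cn_up_succ hPr s σ π ρ h, mul_assoc]
      _ ≤ Pr s σ π (Cn n ρ) * w n ρ := by gcongr; exact hsm n ρ h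

/-- Strategy obtained from a local choice of actions. -/
noncomputable def stratOf {A : Type} (s : S) (a : ℕ → (ℕ → S) → A) : List S → PMF A :=
  fun l => PMF.pure (a (l.length - 1) (fun i => l.getD i s))

theorem stratOf_pre {A : Type} (s : S) (a : ℕ → (ℕ → S) → A) (ha : Loc a) (ρ : ℕ → S) (n : ℕ) :
    stratOf s a (pre ρ n ++ [ρ n]) = PMF.pure (a n ρ) := by
  rw [← pre_succ, stratOf]
  have : (pre ρ (n+1)).length - 1 = n := by simp [pre]
  rw [this]
  congr 1
  apply ha
  intro i hi
  have : i < n + 1 := by omega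
  simp [pre, List.getD, this]

/-- One-step value. -/
noncomputable def val (turn : S → Bool) (δ₁ : S → A₁ → PMF S) (δ₂ : S → A₂ → PMF S) (c : S)
    (g : S → ℝ≥0∞) : ℝ≥0∞ :=
  if turn c then ⨆ a, ∑ s', δ₁ c a s' * g s' else ⨅ b, ∑ s', δ₂ c b s' * g s'

theorem mix_sum {A : Type} [Fintype A] (p : PMF A) (d : A → PMF S) (g : S → ℝ≥0∞) :
    ∑ s', (∑' a, p a * d a s') * g s' = ∑ a, p a * ∑ s', d a s' * g s' := by
  simp only [tsum_fintype, Finset.sum_mul, Finset.mul_sum]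
  rw [Finset.sum_comm]
  simp only [mul_assoc]

theorem pmf_sum {A : Type} [Fintype A] (p : PMF A) : ∑ a, p a = 1 := by
  have := p.tsum_coe
  rwa [tsum_fintype] at this

theorem pure_mix {A : Type} [Fintype A] (a : A) (f : A → ℝ≥0∞) : 
    ∑ b, (PMF.pure a) b * f b = f a := by
  classical
  simp [PMF.pure_apply, ite_mul]

theorem step_sum (σ : List S → PMF A₁) (π : List S → PMF A₂) (h : List S) (c : S) :
    ∑ s', step turn δ₁ δ₂ σ π h c s' = 1 := by
  unfold step
  by_cases hc : turn c
  · simp only [hc, if_true]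
    simpa [pmf_sum] using mix_sum (σ (h ++ [c])) (δ₁ c) (fun _ => 1)
  · simp only [hc, if_false, Bool.false_eq_true]
    simpa [pmf_sum] using mix_sum (π (h ++ [c])) (δ₂ c) (fun _ => 1)

theorem step_ge (σ : List S → PMF A₁) (π : List S → PMF A₂) (h : List S) (c : S)
    (g : S → ℝ≥0∞) (a : A₁) (ha : σ (h ++ [c]) = PMF.pure a)
    (ha' : ∀ b, ∑ s', δ₁ c b s' * g s' ≤ ∑ s', δ₁ c a s' * g s') :
    val turn δ₁ δ₂ c g ≤ ∑ s', step turn δ₁ δ₂ σ π h c s' * g s' := by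
  unfold step val
  by_cases hc : turn c
  · simp only [hc, if_true]
    rw [mix_sum, ha, pure_mix]
    exact iSup_le ha'
  · simp only [hc, if_false, Bool.false_eq_true]
    rw [mix_sum]
    calc (⨅ b, ∑ s', δ₂ c b s' * g s') = ∑ b, π (h ++ [c]) b * (⨅ b, ∑ s', δ₂ c b s' * g s') := by
          rw [← Finset.sum_mul, pmf_sum, one_mul]
      _ ≤ _ := Finset.sum_le_sum fun b _ => by gcongr; exact iInf_le _ b

theorem step_le (σ : List S → PMF A₁) (π : List S → PMF A₂) (h : List S) (c : S)
    (g : S → ℝ≥0∞) (a : A₂) (ha : π (h ++ [c]) = PMF.pure a)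
    (ha' : ∀ b, ∑ s', δ₂ c a s' * g s' ≤ ∑ s', δ₂ c b s' * g s') :
    ∑ s', step turn δ₁ δ₂ σ π h c s' * g s' ≤ val turn δ₁ δ₂ c g := by
  unfold step val
  by_cases hc : turn c
  · simp only [hc, if_true]
    rw [mix_sum]
    calc _ ≤ ∑ b, σ (h ++ [c]) b * (⨆ b, ∑ s', δ₁ c b s' * g s') := 
          Finset.sum_le_sum fun b _ => by gcongr; exact le_iSup (fun b => ∑ s', δ₁ c b s' * g s') b
      _ = _ := by rw [← Finset.sum_mul, pmf_sum, one_mul]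
  · simp only [hc, if_false, Bool.false_eq_true]
    rw [mix_sum, ha, pure_mix]
    exact le_iInf ha'

variable [Nonempty A₁] [Nonempty A₂]

theorem val_one (c : S) : val turn δ₁ δ₂ c (fun _ => 1) = 1 := by
  unfold val; simp [pmf_sum]

theorem val_zero (c : S) : val turn δ₁ δ₂ c (fun _ => 0) = 0 := by
  unfold val; simp

theorem val_add (c : S) (u g : S → ℝ≥0∞) (e : ℝ≥0∞) (h : ∀ s, u s ≤ g s + e) :
    val turn δ₁ δ₂ c u ≤ val turn δ₁ δ₂ c g + e := by
  have key : ∀ p : PMF S, ∑ s', p s' * u s' ≤ ∑ s', p s' * g s' + e := by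
    intro p
    calc _ ≤ ∑ s', p s' * (g s' + e) := Finset.sum_le_sum fun s _ => by gcongr; exact h s
      _ = _ := by simp only [mul_add, Finset.sum_add_distrib, ← Finset.sum_mul, pmf_sum, one_mul]
  unfold val
  by_cases hc : turn c
  · simp only [hc, if_true]
    exact iSup_le fun a => (key _).trans (by gcongr; exact le_iSup (fun b => ∑ s', δ₁ c b s' * g s') a)
  · simp only [hc, if_false, Bool.false_eq_true]
    rw [ENNReal.iInf_add]
    exact iInf_mono fun a => key _

end Stmt10

set_option linter.unusedVariables false
set_option linter.unusedSectionVars false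
set_option linter.unusedSimpArgs false
open MeasureTheory
open scoped ENNReal
namespace Stmt10
open BD
variable {S : Type}

abbrev Mv (S : Type) : Type := (S → ℝ≥0∞) × S

/-- States of the auxiliary game: current state, current value, proposed continuation values. -/
structure Sta (S : Type) : Type where
  c : S
  x : ℝ≥0∞
  h : S → ℝ≥0∞

def PP (S : Type) : ℕ → Type
  | 0 => Unit
  | n+1 => PP S n × Mv S

/-- The tree of the auxiliary game. -/
def MT (S : Type) [Nonempty S] : GT.{0} where
  P := PP S
  par n q := q.1
  surj n p := ⟨(p, (fun _ => 0, Classical.arbitrary S)), rfl⟩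

variable (V : S → (S → ℝ≥0∞) → ℝ≥0∞)

def Leg (c : S) (x : ℝ≥0∞) (h : S → ℝ≥0∞) : Prop := (∀ s, h s ≤ 1) ∧ x ≤ V c h

open Classical in
noncomputable def upd : Bool → Sta S → Mv S → Sta S
  | false, t, m => ⟨t.c, t.x, if Leg V t.c t.x m.1 then m.1 else fun _ => 1⟩
  | true, t, m =>
    let s' := if h : ∃ s, 0 < t.h s then (if 0 < t.h m.2 then m.2 else h.choose) else m.2
    ⟨s', t.h s', t.h⟩

noncomputable def sta (s : S) (v : ℝ≥0∞) : ∀ n, PP S n → Sta S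
  | 0, _ => ⟨s, v, fun _ => 1⟩
  | n+1, q => upd V n.bodd (sta s v n q.1) q.2

structure VOK : Prop where
  one : ∀ c, V c (fun _ => 1) = 1
  zero : ∀ c, V c (fun _ => 0) = 0
  add : ∀ c u g e, (∀ s, u s ≤ g s + e) → V c u ≤ V c g + e

variable {V} (hV : VOK V) (s : S) (v : ℝ≥0∞) (hv0 : 0 < v) (hv1 : v ≤ 1)
theorem upd_false_c (t : Sta S) (m : Mv S) : (upd V false t m).c = t.c := rfl
theorem upd_false_x (t : Sta S) (m : Mv S) : (upd V false t m).x = t.x := rfl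

theorem upd_false_h (t : Sta S) (m : Mv S) (h : Leg V t.c t.x m.1) :
    (upd V false t m).h = m.1 := by simp [upd, h]

theorem upd_false_leg (hV : VOK V) (t : Sta S) (m : Mv S) (hx : t.x ≤ 1) :
    Leg V t.c t.x (upd V false t m).h := by
  by_cases h : Leg V t.c t.x m.1
  · rwa [upd_false_h t m h]
  · simp only [upd, h, if_false]
    exact ⟨fun _ => le_rfl, by rw [hV.one]; exact hx⟩

theorem upd_true_c (t : Sta S) (m : Mv S) (h : 0 < t.h m.2) : (upd V true t m).c = m.2 := by
  have : ∃ s, 0 < t.h s := ⟨_, h⟩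
  simp [upd, h, this]

theorem upd_true_x (t : Sta S) (m : Mv S) : (upd V true t m).x = t.h (upd V true t m).c := rfl

theorem upd_true_pos (hV : VOK V) (t : Sta S) (m : Mv S) (hx : 0 < t.x) (h : Leg V t.c t.x t.h) :
    0 < t.h (upd V true t m).c := by
  have : ∃ s, 0 < t.h s := by
    by_contra hn
    have h0 : t.h = fun _ => 0 := by
      funext s
      by_contra h1
      exact hn ⟨s, pos_iff_ne_zero.2 h1⟩
    have h2 := h.2
    rw [h0, hV.zero] at h2
    exact absurd hx (not_lt.2 h2)
  simp only [upd, this, dif_pos]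
  split_ifs with h1
  · exact h1
  · exact this.choose_spec

def Inv (b : Bool) (t : Sta S) : Prop := 0 < t.x ∧ t.x ≤ 1 ∧ (b = true → Leg V t.c t.x t.h)

theorem sta_inv (hV : VOK V) (s : S) (v : ℝ≥0∞) (hv0 : 0 < v) (hv1 : v ≤ 1) : ∀ n p,
    Inv (V := V) n.bodd (sta V s v n p) := by
  intro n
  induction n with
  | zero => intro p; exact ⟨hv0, hv1, by simp⟩
  | succ n ih =>
    intro q
    have h := ih q.1
    show Inv _ (upd V n.bodd (sta V s v n q.1) q.2)
    rw [Nat.bodd_succ]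
    cases hb : n.bodd with
    | false =>
      rw [hb] at h
      exact ⟨h.1, h.2.1, fun _ => upd_false_leg hV _ _ h.2.1⟩
    | true =>
      rw [hb] at h
      have h3 := h.2.2 rfl
      exact ⟨upd_true_pos hV _ _ h.1 h3, h3.1 _, by simp⟩

variable [Nonempty S]

/-- The projection of plays of the auxiliary game. -/
noncomputable def proj (V : S → (S → ℝ≥0∞) → ℝ≥0∞) (s : S) (v : ℝ≥0∞) (x : (MT S).Play) : ℕ → S :=
  fun i => (sta V s v (2*i) (x.1 (2*i))).c

theorem proj_cont (s : S) (v : ℝ≥0∞) : Cont (proj V s v) := by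
  intro i A
  constructor
  · intro x hx
    refine ⟨2*i, fun y hy => ?_⟩
    show proj V s v y i ∈ A
    unfold proj
    rw [hy]; exact hx
  · intro x hx
    refine ⟨2*i, fun y hy => ?_⟩
    show proj V s v y i ∉ A
    unfold proj
    rw [hy]; exact hx

section
variable (nx : ∀ m (p : (MT S).P m), S → {q : (MT S).P (m+1) // (MT S).par m q = p})

/-- Positions driven by a sequence of states. -/
def HH (ρ : ℕ → S) : ∀ m, (MT S).P m
  | 0 => ()
  | m+1 => (nx m (HH ρ m) (ρ (m/2+1))).1

def HHplay (ρ : ℕ → S) : (MT S).Play := ⟨HH nx ρ, fun m => (nx m (HH nx ρ m) (ρ (m/2+1))).2⟩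

theorem HH_loc (n : ℕ) (ρ ρ' : ℕ → S) (h : ∀ i, i ≤ n → ρ i = ρ' i) :
    ∀ m, m ≤ 2*n → HH nx ρ m = HH nx ρ' m := by
  intro m
  induction m with
  | zero => intro _; rfl
  | succ m ih =>
    intro hm
    simp only [HH]
    rw [ih (by omega), h (m/2+1) (by omega)]
end

theorem bodd_even (n : ℕ) : (2*n).bodd = false := by simp
theorem bodd_odd (n : ℕ) : (2*n+1).bodd = true := by simp

theorem sta_odd (s : S) (v : ℝ≥0∞) (n : ℕ) (q : (MT S).P (2*n+1)) : 
    sta V s v (2*n+1) q = upd V false (sta V s v (2*n) q.1) q.2 := by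
  have := bodd_even n
  show upd V (2*n).bodd _ _ = _
  rw [this]

theorem sta_even (s : S) (v : ℝ≥0∞) (n : ℕ) (q : (MT S).P (2*(n+1))) : 
    sta V s v (2*(n+1)) q = upd V true (sta V s v (2*n+1) q.1) q.2 := by
  have := bodd_odd n
  show upd V (2*n+1).bodd _ _ = _
  rw [this]
  rfl

end Stmt10

set_option linter.unusedVariables false
set_option linter.unusedSectionVars false
set_option linter.unusedSimpArgs false
open MeasureTheory
open scoped ENNReal
namespace Stmt10
open BD
variable {S A₁ A₂ : Type} [Fintype S] [Nonempty S] [Fintype A₁] [Fintype A₂] [MeasurableSpace S]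
    [DiscreteMeasurableSpace S] [Nonempty A₁] [Nonempty A₂] {turn : S → Bool}
    {δ₁ : S → A₁ → PMF S} {δ₂ : S → A₂ → PMF S}
    {Pr : S → (List S → PMF A₁) → (List S → PMF A₂) → Measure (ℕ → S)}

theorem val_ok : VOK (val turn δ₁ δ₂) := ⟨val_one, val_zero, val_add⟩

open Classical in
theorem claimA (hPr : IsPlayMeasure turn δ₁ δ₂ Pr) (s : S) (φ : Set (ℕ → S)) 
    (v : ℝ≥0∞) (hv0 : 0 < v) (hv1 : v ≤ 1) (τ : (MT S).Strat)
    (hτ : ∀ x : (MT S).Play, Con false τ x → proj (val turn δ₁ δ₂) s v x ∈ φ) :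
    ∃ σ : List S → PMF A₁, IsPure σ ∧ ∀ π, v ≤ Pr s σ π φ := by
  set V := val turn δ₁ δ₂ with hVdef
  have hV : VOK V := val_ok
  have inv := sta_inv hV s v hv0 hv1
  let nx : ∀ m (p : (MT S).P m), S → {q : (MT S).P (m+1) // (MT S).par m q = p} := fun m p s' =>
    if m.bodd = false then τ m p else ⟨(p, (fun _ => 1, s')), rfl⟩
  let H := HH nx
  let T : ℕ → (ℕ → S) → Sta S := fun n ρ => sta V s v (2*n) (H ρ (2*n))
  let g : ℕ → (ℕ → S) → S → ℝ≥0∞ := fun n ρ =>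
    (sta V s v (2*n+1) (τ (2*n) (H ρ (2*n))).1).h
  have Hloc : ∀ n ρ ρ', (∀ i, i ≤ n → ρ i = ρ' i) → H ρ (2*n) = H ρ' (2*n) :=
    fun n ρ ρ' h => HH_loc nx n ρ ρ' h (2*n) le_rfl
  have Tloc : Loc T := fun n ρ ρ' h => by simp only [T, Hloc n ρ ρ' h]
  have gloc : Loc g := fun n ρ ρ' h =>
    congrArg (fun p => (sta V s v (2*n+1) (τ (2*n) p).1).h) (Hloc n ρ ρ' h)
  have gleg : ∀ n ρ, Leg V (T n ρ).c (T n ρ).x (g n ρ) := by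
    intro n ρ
    have h1 := (inv (2*n+1) (τ (2*n) (H ρ (2*n))).1).2.2 (bodd_odd n)
    have h2 : (τ (2*n) (H ρ (2*n))).1.1 = H ρ (2*n) := (τ (2*n) (H ρ (2*n))).2
    have h3 : (sta V s v (2*n+1) (τ (2*n) (H ρ (2*n))).1).c = (T n ρ).c := by
      rw [sta_odd, upd_false_c, h2]
    have h4 : (sta V s v (2*n+1) (τ (2*n) (H ρ (2*n))).1).x = (T n ρ).x := by
      rw [sta_odd, upd_false_x, h2]
    rw [h3, h4] at h1
    exact h1
  have Tnext : ∀ n ρ, T (n+1) ρ = upd V true (sta V s v (2*n+1) (τ (2*n) (H ρ (2*n))).1)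
      (fun _ => 1, ρ (n+1)) := by
    intro n ρ
    have e1 : H ρ (2*n+1) = (τ (2*n) (H ρ (2*n))).1 := by
      show (nx (2*n) (H ρ (2*n)) (ρ (2*n/2+1))).1 = _
      simp only [nx, bodd_even, if_true]
    have e2 : H ρ (2*(n+1)) = (H ρ (2*n+1), (fun _ => 1, ρ (n+1))) := by
      show (nx (2*n+1) (H ρ (2*n+1)) (ρ ((2*n+1)/2+1))).1 = _
      have : (2*n+1)/2 = n := by omega
      simp only [nx, bodd_odd, this]
      rfl
    show sta V s v (2*(n+1)) (H ρ (2*(n+1))) = _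
    rw [sta_even, e2, e1]
  let al : ℕ → (ℕ → S) → Prop := fun n ρ => ∀ i, i < n → 0 < g i ρ (ρ (i+1))
  have alloc : Loc al := by
    intro n ρ ρ' h
    apply propext
    refine forall₂_congr fun i hi => ?_
    rw [gloc i ρ ρ' (fun j hj => h j (by omega)), h (i+1) (by omega)]
  have alc : ∀ n ρ, ρ 0 = s → al n ρ → (T n ρ).c = ρ n := by
    intro n ρ h0 ha
    cases n with
    | zero => exact h0.symm
    | succ n =>
      rw [Tnext, upd_true_c]
      exact ha n (by omega)
  let w : ℕ → (ℕ → S) → ℝ≥0∞ := fun n ρ => if al n ρ then (T n ρ).x else 0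
  have wloc : Loc w := fun n ρ ρ' h => by simp only [w, Tloc n ρ ρ' h, alloc n ρ ρ' h]
  have w1 : ∀ n ρ, w n ρ ≤ 1 := by
    intro n ρ
    simp only [w]
    split_ifs
    · exact (inv (2*n) _).2.1
    · exact zero_le
  have wpos : ∀ n ρ, 0 < w n ρ ↔ al n ρ := by
    intro n ρ
    simp only [w]
    split_ifs with h
    · exact ⟨fun _ => h, fun _ => (inv (2*n) _).1⟩
    · simp [h]
  have wnext : ∀ n ρ s', al n ρ → w (n+1) (up ρ (n+1) s') = g n ρ s' := by
    intro n ρ s' ha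
    have hup : ∀ i, i ≤ n → up ρ (n+1) s' i = ρ i := fun i hi => up_le ρ n s' i hi
    have eg : g n (up ρ (n+1) s') = g n ρ := gloc n _ _ hup
    have ha' : al n (up ρ (n+1) s') := by rwa [alloc n _ _ hup]
    have hal : al (n+1) (up ρ (n+1) s') ↔ 0 < g n ρ s' := by
      constructor
      · intro h
        have := h n (by omega)
        rwa [eg, up_self] at this
      · intro h i hi
        rcases Nat.lt_or_ge i n with h1 | h1
        · exact ha' i h1
        · obtain rfl : i = n := by omega
          rwa [eg, up_self]
    simp only [w, hal]
    split_ifs with h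
    · have eg' : (sta V s v (2*n+1) (τ (2*n) (H (up ρ (n+1) s') (2*n))).1).h = g n ρ := eg
      rw [Tnext, upd_true_x, upd_true_c, eg', up_self]
      rw [eg', up_self]; exact h
    · exact (le_antisymm (not_lt.1 h) zero_le).symm
  have hact : ∀ (c : S) (f : S → ℝ≥0∞), ∃ a : A₁, ∀ b, ∑ s', δ₁ c b s' * f s' ≤ ∑ s', δ₁ c a s' * f s' :=
    fun c f => Finite.exists_max (fun a => ∑ s', δ₁ c a s' * f s')
  choose act hact using hact
  let a : ℕ → (ℕ → S) → A₁ := fun n ρ => act (ρ n) (g n ρ)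
  have aloc : Loc a := fun n ρ ρ' h => by simp only [a, gloc n ρ ρ' h, h n le_rfl]
  refine ⟨stratOf s a, fun l => ⟨_, rfl⟩, fun π => ?_⟩
  have hsm : ∀ n ρ, ρ 0 = s → w n ρ ≤ ∑ s', step turn δ₁ δ₂ (stratOf s a) π (pre ρ n) (ρ n) s' *
      w (n+1) (up ρ (n+1) s') := by
    intro n ρ h0
    by_cases ha : al n ρ
    · have e1 : w n ρ = (T n ρ).x := by simp only [w, ha, if_true]
      have e2 := (gleg n ρ).2
      rw [alc n ρ h0 ha] at e2
      rw [e1]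
      refine e2.trans ?_
      simp only [wnext n ρ _ ha]
      exact step_ge (stratOf s a) π (pre ρ n) (ρ n) (g n ρ) (a n ρ) (stratOf_pre s a aloc ρ n)
        (hact _ _)
    · simp only [w, ha, if_false]; exact zero_le
  have key := fun d => sub_lemma hPr s (stratOf s a) π w wloc w1 hsm d 0 (fun _ => s) rfl
  have w0 : w 0 (fun _ => s) = v := by
    have : al 0 (fun _ => s) := fun i hi => absurd hi (by omega)
    simp only [w, this, if_true]
    rfl
  simp only [Cn_zero hPr s (stratOf s a) π (fun _ => s) rfl, w0, one_mul, zero_add] at key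
  have : IsProbabilityMeasure (Pr s (stratOf s a) π) := hPr.1 _ _ _
  have hanti : Antitone (fun d => Cn 0 (fun _ => s) ∩ {ρ' | 0 < w d ρ'}) := by
    intro d e hde ρ hρ
    refine ⟨hρ.1, (wpos d ρ).2 fun i hi => (wpos e ρ).1 hρ.2 i (by omega)⟩
  have hmeas : ∀ d, MeasurableSet (Cn 0 (fun _ => s) ∩ {ρ' | 0 < w d ρ'}) := by
    intro d
    apply meas_loc d
    rintro ρ ρ' h ⟨h1, h2⟩
    refine ⟨fun i hi => ?_, ?_⟩
    · rw [← h i (by omega)]; exact h1 i hi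
    · show 0 < w d ρ'
      rw [← wloc d ρ ρ' h]; exact h2
  have hint := hanti.measure_iInter (μ := Pr s (stratOf s a) π)
    (fun d => (hmeas d).nullMeasurableSet) ⟨0, measure_ne_top _ _⟩
  calc v ≤ ⨅ d, Pr s (stratOf s a) π (Cn 0 (fun _ => s) ∩ {ρ' | 0 < w d ρ'}) := le_iInf key
    _ = Pr s (stratOf s a) π (⋂ d, Cn 0 (fun _ => s) ∩ {ρ' | 0 < w d ρ'}) := hint.symm
    _ ≤ Pr s (stratOf s a) π φ := by
      apply measure_mono
      intro ρ hρ
      have hρ := Set.mem_iInter.1 hρ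
      have h0 : ρ 0 = s := (hρ 0).1 0 le_rfl
      have : proj V s v (HHplay nx ρ) = ρ := by
        funext n
        exact alc n ρ h0 ((wpos n ρ).1 (hρ n).2)
      rw [← this]
      apply hτ
      intro m hm
      show (nx m _ _).1 = _
      simp only [nx, hm, if_true]
      rfl

end Stmt10

set_option linter.unusedVariables false
set_option linter.unusedSectionVars false
set_option linter.unusedSimpArgs false
open MeasureTheory
open scoped ENNReal
namespace Stmt10
open BD
variable {S A₁ A₂ : Type} [Fintype S] [Nonempty S] [Fintype A₁] [Fintype A₂] [MeasurableSpace S]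
    [DiscreteMeasurableSpace S] [Nonempty A₁] [Nonempty A₂] {turn : S → Bool}
    {δ₁ : S → A₁ → PMF S} {δ₂ : S → A₂ → PMF S}
    {Pr : S → (List S → PMF A₁) → (List S → PMF A₂) → Measure (ℕ → S)}

open Classical in
theorem claimB (hPr : IsPlayMeasure turn δ₁ δ₂ Pr) (s : S) (φ : Set (ℕ → S)) 
    (v : ℝ≥0∞) (hv0 : 0 < v) (hv1 : v ≤ 1) (ε : ℝ≥0∞) (hε : 0 < ε) (τ : (MT S).Strat)
    (hτ : ∀ x : (MT S).Play, Con true τ x → proj (val turn δ₁ δ₂) s v x ∉ φ) :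
    ∃ π : List S → PMF A₂, ∀ σ, Pr s σ π φ ≤ v + ε := by
  set V := val turn δ₁ δ₂ with hVdef
  have hV : VOK V := val_ok
  have inv := sta_inv hV s v hv0 hv1
  let e : ℕ → ℝ≥0∞ := fun n => ε * (2⁻¹)^n
  have e0 : ∀ n, e n ≠ 0 := fun n => mul_ne_zero hε.ne' (pow_ne_zero _ (by simp))
  have ehalf : ∀ n, e (n+1) + e (n+1) = e n := by
    intro n
    simp only [e, pow_succ]
    rw [← mul_add, ← mul_add, ENNReal.inv_two_add_inv_two, mul_one]
  let qh : ∀ m (p : (MT S).P m), (S → ℝ≥0∞) → {q : (MT S).P (m+1) // (MT S).par m q = p} :=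
    fun m p h => ⟨(p, (h, s)), rfl⟩
  let anS : ∀ m (p : (MT S).P m), (S → ℝ≥0∞) → Sta S := fun m p h =>
    sta V s v (m+2) (τ (m+1) (qh m p h).1).1
  let Lg : ∀ m (p : (MT S).P m), (S → ℝ≥0∞) → Prop := fun m p h =>
    Leg V (sta V s v m p).c (sta V s v m p).x h
  let u : ∀ m (p : (MT S).P m), S → ℝ≥0∞ := fun m p s' =>
    min 1 (⨅ h : {h // Lg m p h ∧ (anS m p h).c = s'}, h.1 s')
  have u1 : ∀ m p s', u m p s' ≤ 1 := fun m p s' => min_le_left _ _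
  have an1 : ∀ n (p : (MT S).P (2*n)) h, Lg (2*n) p h → 0 < h (anS (2*n) p h).c ∧
      (anS (2*n) p h).x = h (anS (2*n) p h).c := by
    intro n p h hl
    have a1 : sta V s v (2*n+1) (qh (2*n) p h).1 = upd V false (sta V s v (2*n) p) (h, s) :=
      sta_odd s v n _
    have a2 : (sta V s v (2*n+1) (qh (2*n) p h).1).h = h := by
      rw [a1]; exact upd_false_h _ _ hl
    have a3 : (τ (2*n+1) (qh (2*n) p h).1).1.1 = (qh (2*n) p h).1 :=
      (τ (2*n+1) (qh (2*n) p h).1).2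
    have a4 : anS (2*n) p h = upd V true (sta V s v (2*n+1) (qh (2*n) p h).1)
        (τ (2*n+1) (qh (2*n) p h).1).1.2 := by
      have := sta_even (V := V) s v n (τ (2*n+1) (qh (2*n) p h).1).1
      rw [a3] at this
      exact this
    have a5 := inv (2*n+1) (qh (2*n) p h).1
    have a6 := upd_true_pos hV _ (τ (2*n+1) (qh (2*n) p h).1).1.2 a5.1 (a5.2.2 (bodd_odd n))
    have a7 := upd_true_x (V := V) (sta V s v (2*n+1) (qh (2*n) p h).1)
      (τ (2*n+1) (qh (2*n) p h).1).1.2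
    rw [← a4, a2] at a6 a7
    exact ⟨a6, a7⟩
  have Vu : ∀ n (p : (MT S).P (2*n)), V (sta V s v (2*n) p).c (u (2*n) p) ≤
      (sta V s v (2*n) p).x := by
    intro n p
    by_contra hlt
    rw [not_le] at hlt
    set c := (sta V s v (2*n) p).c with hc
    set x := (sta V s v (2*n) p).x with hx
    have hle : V c (u (2*n) p) ≤ 1 := by
      have := hV.add c (u (2*n) p) (fun _ => 0) 1 (fun s => by simpa using u1 (2*n) p s)
      rwa [hV.zero, zero_add] at this
    set d := V c (u (2*n) p) - x with hd
    have hd0 : d ≠ 0 := (tsub_pos_of_lt hlt).ne'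
    have hdt : d ≠ ⊤ := ((tsub_le_self.trans hle).trans_lt ENNReal.one_lt_top).ne
    have h1 := hV.add c (u (2*n) p) (fun s => u (2*n) p s - d) d (fun s => le_tsub_add)
    have h2 : x + d = V c (u (2*n) p) := add_tsub_cancel_of_le hlt.le
    have h3 : x ≤ V c (fun s => u (2*n) p s - d) := by
      rw [← h2] at h1
      exact (ENNReal.add_le_add_iff_right hdt).1 h1
    have hl : Lg (2*n) p (fun s => u (2*n) p s - d) :=
      ⟨fun s => tsub_le_self.trans (u1 _ _ _), h3⟩
    have h4 := (an1 n p _ hl).1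
    set s' := (anS (2*n) p (fun s => u (2*n) p s - d)).c with hs'
    have h5 : u (2*n) p s' ≤ u (2*n) p s' - d :=
      (min_le_right _ _).trans (iInf_le (fun h : {h // Lg (2*n) p h ∧ (anS (2*n) p h).c = s'} =>
        h.1 s') ⟨_, hl, rfl⟩)
    have h6 : u (2*n) p s' ≠ 0 := fun h0 => by simp [h0] at h4
    have h7 := ENNReal.sub_lt_self ((u1 (2*n) p s').trans_lt ENNReal.one_lt_top).ne h6 hd0
    exact absurd h5 (not_le.2 h7)
  have near : ∀ m (p : (MT S).P m) s', u m p s' < 1 → ∃ h, Lg m p h ∧ (anS m p h).c = s' ∧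
      h s' ≤ u m p s' + e (m/2+1) := by
    intro m p s' hu
    have h1 : u m p s' = ⨅ h : {h // Lg m p h ∧ (anS m p h).c = s'}, h.1 s' := by
      rcases min_choice 1 (⨅ h : {h // Lg m p h ∧ (anS m p h).c = s'}, h.1 s') with h | h
      · exact absurd h hu.ne
      · exact h
    have h2 : (⨅ h : {h // Lg m p h ∧ (anS m p h).c = s'}, h.1 s') < u m p s' + e (m/2+1) := by
      rw [← h1]
      exact ENNReal.lt_add_right (hu.trans ENNReal.one_lt_top).ne (e0 _)
    obtain ⟨h, hh⟩ := iInf_lt_iff.1 h2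
    exact ⟨h.1, h.2.1, h.2.2, hh.le⟩
  choose ch hch using near
  let nx : ∀ m (p : (MT S).P m), S → {q : (MT S).P (m+1) // (MT S).par m q = p} := fun m p s' =>
    if m.bodd = true then τ m p else
      if hh : u m p s' < 1 then qh m p (ch m p s' hh) else qh m p (fun _ => 1)
  let H := HH nx
  let T : ℕ → (ℕ → S) → Sta S := fun n ρ => sta V s v (2*n) (H ρ (2*n))
  let g : ℕ → (ℕ → S) → S → ℝ≥0∞ := fun n ρ => u (2*n) (H ρ (2*n))
  have Hloc : ∀ n ρ ρ', (∀ i, i ≤ n → ρ i = ρ' i) → H ρ (2*n) = H ρ' (2*n) :=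
    fun n ρ ρ' h => HH_loc nx n ρ ρ' h (2*n) le_rfl
  have Tloc : Loc T := fun n ρ ρ' h => congrArg (fun p => sta V s v (2*n) p) (Hloc n ρ ρ' h)
  have gloc : Loc g := fun n ρ ρ' h => congrArg (fun p => u (2*n) p) (Hloc n ρ ρ' h)
  have Tnext : ∀ n ρ, g n ρ (ρ (n+1)) < 1 → (T (n+1) ρ).c = ρ (n+1) ∧
      (T (n+1) ρ).x ≤ g n ρ (ρ (n+1)) + e (n+1) := by
    intro n ρ hu
    obtain ⟨c1, c2, c3⟩ := hch (2*n) (H ρ (2*n)) (ρ (n+1)) hu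
    have d1 : 2*n/2 = n := by omega
    have e1 : H ρ (2*n+1) = (qh (2*n) (H ρ (2*n)) (ch (2*n) (H ρ (2*n)) (ρ (n+1)) hu)).1 := by
      show (nx (2*n) (H ρ (2*n)) (ρ (2*n/2+1))).1 = _
      rw [d1]
      have hu' : u (2*n) (H ρ (2*n)) (ρ (n+1)) < 1 := hu
      simp only [nx, bodd_even, hu', dif_pos]
      rfl
    have e2 : H ρ (2*(n+1)) = (τ (2*n+1) (H ρ (2*n+1))).1 := by
      show (nx (2*n+1) (H ρ (2*n+1)) (ρ ((2*n+1)/2+1))).1 = _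
      simp only [nx, bodd_odd, if_true]
    have e3 : T (n+1) ρ = anS (2*n) (H ρ (2*n)) (ch (2*n) (H ρ (2*n)) (ρ (n+1)) hu) := by
      show sta V s v (2*(n+1)) (H ρ (2*(n+1))) = _
      rw [e2, e1]
      rfl
    rw [d1] at c3
    rw [e3]
    refine ⟨c2, ?_⟩
    rw [(an1 n _ _ c1).2, c2]
    exact c3
  let al : ℕ → (ℕ → S) → Prop := fun n ρ => ∀ i, i < n → g i ρ (ρ (i+1)) < 1
  have alloc : Loc al := by
    intro n ρ ρ' h
    apply propext
    refine forall₂_congr fun i hi => ?_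
    rw [gloc i ρ ρ' (fun j hj => h j (by omega)), h (i+1) (by omega)]
  have alc : ∀ n ρ, ρ 0 = s → al n ρ → (T n ρ).c = ρ n := by
    intro n ρ h0 ha
    cases n with
    | zero => exact h0.symm
    | succ n => exact (Tnext n ρ (ha n (by omega))).1
  let w : ℕ → (ℕ → S) → ℝ≥0∞ := fun n ρ => if al n ρ then (T n ρ).x + e n else 1
  have wloc : Loc w := fun n ρ ρ' h => by simp only [w, Tloc n ρ ρ' h, alloc n ρ ρ' h]
  have wdead : ∀ n ρ, ¬ al n ρ → w n ρ = 1 := fun n ρ h => by simp only [w, h, if_false]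
  have wnext : ∀ n ρ s', al n ρ → w (n+1) (up ρ (n+1) s') ≤ g n ρ s' + e n := by
    intro n ρ s' ha
    have hup : ∀ i, i ≤ n → up ρ (n+1) s' i = ρ i := fun i hi => up_le ρ n s' i hi
    have eg : g n (up ρ (n+1) s') = g n ρ := gloc n _ _ hup
    have ha' : al n (up ρ (n+1) s') := by rwa [alloc n _ _ hup]
    have hal : al (n+1) (up ρ (n+1) s') ↔ g n ρ s' < 1 := by
      constructor
      · intro h
        have := h n (by omega)
        rwa [eg, up_self] at this
      · intro h i hi
        rcases Nat.lt_or_ge i n with h1 | h1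
        · exact ha' i h1
        · obtain rfl : i = n := by omega
          rwa [eg, up_self]
    simp only [w, hal]
    split_ifs with h
    · have := (Tnext n (up ρ (n+1) s') (by rwa [eg, up_self])).2
      rw [eg, up_self] at this
      rw [← ehalf n, ← add_assoc]
      gcongr
    · exact (not_lt.1 h).trans le_self_add
  have hact : ∀ (c : S) (f : S → ℝ≥0∞), ∃ a : A₂, ∀ b, ∑ s', δ₂ c a s' * f s' ≤ ∑ s', δ₂ c b s' * f s' :=
    fun c f => Finite.exists_min (fun a => ∑ s', δ₂ c a s' * f s')
  choose act hact using hact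
  let a : ℕ → (ℕ → S) → A₂ := fun n ρ => act (ρ n) (g n ρ)
  have aloc : Loc a := fun n ρ ρ' h => by simp only [a, gloc n ρ ρ' h, h n le_rfl]
  refine ⟨stratOf s a, fun σ => ?_⟩
  have hsm : ∀ n ρ, ρ 0 = s → ∑ s', step turn δ₁ δ₂ σ (stratOf s a) (pre ρ n) (ρ n) s' *
      w (n+1) (up ρ (n+1) s') ≤ w n ρ := by
    intro n ρ h0
    by_cases ha : al n ρ
    · have e1 : w n ρ = (T n ρ).x + e n := by simp only [w, ha, if_true]
      have e2 := Vu n (H ρ (2*n))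
      have e3 := alc n ρ h0 ha
      have e2 : V (T n ρ).c (g n ρ) ≤ (T n ρ).x := e2
      rw [e3] at e2
      rw [e1]
      calc _ ≤ ∑ s', step turn δ₁ δ₂ σ (stratOf s a) (pre ρ n) (ρ n) s' * (g n ρ s' + e n) :=
            Finset.sum_le_sum fun s' _ => by gcongr; exact wnext n ρ s' ha
        _ = ∑ s', step turn δ₁ δ₂ σ (stratOf s a) (pre ρ n) (ρ n) s' * g n ρ s' + e n := by
            simp only [mul_add, Finset.sum_add_distrib, ← Finset.sum_mul, step_sum, one_mul]
        _ ≤ _ := by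
            gcongr
            exact (step_le σ (stratOf s a) (pre ρ n) (ρ n) (g n ρ) (a n ρ)
              (stratOf_pre s a aloc ρ n) (hact _ _)).trans e2
    · rw [wdead n ρ ha]
      have : ∀ s', w (n+1) (up ρ (n+1) s') = 1 := by
        intro s'
        apply wdead
        intro h
        apply ha
        rw [← alloc n (up ρ (n+1) s') ρ (fun i hi => up_le ρ n s' i hi)]
        exact fun i hi => h i (by omega)
      simp only [this, mul_one, step_sum, le_refl]
  have key := fun d => sup_lemma hPr s σ (stratOf s a) w wloc hsm d 0 (fun _ => s) rfl
  have w0 : w 0 (fun _ => s) = v + ε := by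
    have h1 : al 0 (fun _ => s) := fun i hi => absurd hi (by omega)
    have h2 : e 0 = ε := by simp [e]
    simp only [w, h1, if_true, h2]
    rfl
  simp only [Cn_zero hPr s σ (stratOf s a) (fun _ => s) rfl, w0, one_mul, zero_add] at key
  have : IsProbabilityMeasure (Pr s σ (stratOf s a)) := hPr.1 _ _ _
  have hmono : Monotone (fun d => Cn 0 (fun _ => s) ∩ {ρ' | ¬ al d ρ'}) := by
    intro d e hde ρ hρ
    exact ⟨hρ.1, fun h => hρ.2 fun i hi => h i (by omega)⟩
  have hmeas : MeasurableSet (Cn 0 (fun _ => s)) := by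
    apply meas_loc 0
    intro ρ ρ' h h1 i hi
    rw [← h i (by omega)]; exact h1 i hi
  have hnull : Pr s σ (stratOf s a) (Cn 0 (fun _ => s))ᶜ = 0 := by
    rw [measure_compl hmeas (measure_ne_top _ _), measure_univ,
      Cn_zero hPr s σ (stratOf s a) (fun _ => s) rfl]
    simp
  calc Pr s σ (stratOf s a) φ
      ≤ Pr s σ (stratOf s a) ((⋃ d, Cn 0 (fun _ => s) ∩ {ρ' | ¬ al d ρ'}) ∪ (Cn 0 (fun _ => s))ᶜ) := by
        apply measure_mono
        intro ρ hρ
        by_cases h0 : ρ ∈ Cn 0 (fun _ => s)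
        · left
          by_contra hn
          have hal : ∀ n, al n ρ := by
            intro n
            by_contra h
            exact hn (Set.mem_iUnion.2 ⟨n, h0, h⟩)
          have : proj V s v (HHplay nx ρ) = ρ := by
            funext n
            exact alc n ρ (h0 0 le_rfl) (hal n)
          rw [← this] at hρ
          refine hτ _ ?_ hρ
          intro m hm
          show (nx m _ _).1 = _
          simp only [nx, hm, if_true]
          rfl
        · right; exact h0
    _ ≤ Pr s σ (stratOf s a) (⋃ d, Cn 0 (fun _ => s) ∩ {ρ' | ¬ al d ρ'}) + 0 := by
        rw [← hnull]; exact measure_union_le _ _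
    _ = ⨆ d, Pr s σ (stratOf s a) (Cn 0 (fun _ => s) ∩ {ρ' | ¬ al d ρ'}) := by
        rw [add_zero, hmono.measure_iUnion]
    _ ≤ v + ε := by
        refine iSup_le fun d => le_trans (measure_mono ?_) (key d)
        intro ρ hρ
        exact ⟨hρ.1, (wdead d ρ hρ.2).ge⟩

end Stmt10

set_option linter.unusedVariables false
open MeasureTheory
open scoped ENNReal
namespace Stmt10

theorem stmt_10 {S A₁ A₂ : Type} [Fintype S] [Nonempty S]
    [Fintype A₁] [Nonempty A₁] [Fintype A₂] [Nonempty A₂]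
    [MeasurableSpace S] [DiscreteMeasurableSpace S]
    (turn : S → Bool) (δ₁ : S → A₁ → PMF S) (δ₂ : S → A₂ → PMF S)
    (Pr : S → (List S → PMF A₁) → (List S → PMF A₂) → Measure (ℕ → S))
    (hPr : IsPlayMeasure turn δ₁ δ₂ Pr)
    (sStar : S) (φ : Set (ℕ → S)) (hφ : MeasurableSet φ) :
    (⨅ π : List S → PMF A₂, ⨆ σ : List S → PMF A₁, Pr sStar σ π φ) =
      (⨆ σ : List S → PMF A₁, ⨅ π : List S → PMF A₂, Pr sStar σ π φ) ∧
    (⨆ σ : List S → PMF A₁, ⨅ π : List S → PMF A₂, Pr sStar σ π φ) =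
      ⨆ σ : {σ : List S → PMF A₁ // IsPure σ}, ⨅ π : List S → PMF A₂, Pr sStar σ.1 π φ := by
  have h1 : (⨆ σ : {σ : List S → PMF A₁ // IsPure σ}, ⨅ π : List S → PMF A₂, Pr sStar σ.1 π φ) ≤
      ⨆ σ : List S → PMF A₁, ⨅ π : List S → PMF A₂, Pr sStar σ π φ :=
    iSup_le fun σ => le_iSup (fun σ : List S → PMF A₁ => ⨅ π : List S → PMF A₂, Pr sStar σ π φ) σ.1
  have h2 : (⨆ σ : List S → PMF A₁, ⨅ π : List S → PMF A₂, Pr sStar σ π φ) ≤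
      ⨅ π : List S → PMF A₂, ⨆ σ : List S → PMF A₁, Pr sStar σ π φ := iSup_iInf_le_iInf_iSup _
  have h3 : (⨅ π : List S → PMF A₂, ⨆ σ : List S → PMF A₁, Pr sStar σ π φ) ≤
      ⨆ σ : {σ : List S → PMF A₁ // IsPure σ}, ⨅ π : List S → PMF A₂, Pr sStar σ.1 π φ := by
    by_contra hlt
    rw [not_le] at hlt
    obtain ⟨v, hv1, hv2⟩ := exists_between hlt
    obtain ⟨w, hw1, hw2⟩ := exists_between hv2
    have hU : (⨅ π : List S → PMF A₂, ⨆ σ : List S → PMF A₁, Pr sStar σ π φ) ≤ 1 := by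
      refine (iInf_le _ (fun _ => PMF.pure (Classical.arbitrary A₂))).trans (iSup_le fun σ => ?_)
      have := hPr.1 sStar σ (fun _ => PMF.pure (Classical.arbitrary A₂))
      exact prob_le_one
    have v0 : 0 < v := lt_of_le_of_lt zero_le hv1
    have v1 : v ≤ 1 := hv2.le.trans hU
    rcases BD.borel_det φ hφ (MT S) (proj (val turn δ₁ δ₂) sStar v) (proj_cont sStar v) () with
      ⟨τ, hτ⟩ | ⟨τ, hτ⟩
    · obtain ⟨σ, hσ, hσ'⟩ := claimA hPr sStar φ v v0 v1 τ (fun x hx => hτ x rfl hx)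
      have : v ≤ ⨆ σ : {σ : List S → PMF A₁ // IsPure σ}, ⨅ π : List S → PMF A₂,
          Pr sStar σ.1 π φ :=
        (le_iInf hσ').trans (le_iSup (fun σ : {σ : List S → PMF A₁ // IsPure σ} =>
          ⨅ π : List S → PMF A₂, Pr sStar σ.1 π φ) ⟨σ, hσ⟩)
      exact absurd hv1 (not_lt.2 this)
    · obtain ⟨π, hπ⟩ := claimB hPr sStar φ v v0 v1 (w - v) (tsub_pos_of_lt hw1) τ
        (fun x hx => hτ x rfl hx)
      rw [add_tsub_cancel_of_le hw1.le] at hπ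
      have : (⨅ π : List S → PMF A₂, ⨆ σ : List S → PMF A₁, Pr sStar σ π φ) ≤ w :=
        (iInf_le _ π).trans (iSup_le hπ)
      exact absurd hw2 (not_lt.2 this)
  exact ⟨le_antisymm (h3.trans h1) h2, le_antisymm (h2.trans h3) h1⟩

end Stmt10
end

section
/- Let (S, A, δ, obs) be a POMDP, let s* be an initial state, and let φ ⊆ S^ω be a measurable objective. Then the supremum over all randomized observation-based strategies σ of Pr_{s*}^σ(φ) equals the supremum over all pure observation-based strategies σ of Pr_{s*}^σ(φ). -/
open MeasureTheory
open scoped ENNReal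

namespace Stmt11

variable {S A O : Type}

/-- The cylinder set of infinite plays extending the finite prefix `l`. -/
def Cyl (l : List S) : Set (ℕ → S) := {ρ | ∀ i : Fin l.length, ρ i.1 = l.get i}

/-- Probability of observing the successive states `rest` after the history `hist ++ [cur]`,
when actions are drawn according to the strategy `σ` and states according to `δ`. -/
noncomputable def listProb [Fintype A] (δ : S → A → PMF S) (σ : List S → PMF A) :
    List S → S → List S → ℝ≥0∞
  | _, _, [] => 1
  | hist, cur, s' :: rest =>
      (∑' a, σ (hist ++ [cur]) a * δ cur a s') * listProb δ σ (hist ++ [cur]) s' rest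

/-- `Pr` is the family of Ionescu–Tulcea play measures of the POMDP with transitions `δ`:
`Pr s σ` is a probability measure on `S^ω` (product σ-algebra, `S` discrete), and the
probability of the cylinder of plays starting with `s :: l` is the product of the
one-step transition probabilities under the strategy `σ`. -/
def IsPlayMeasure [Fintype A] [MeasurableSpace S] (δ : S → A → PMF S)
    (Pr : S → (List S → PMF A) → Measure (ℕ → S)) : Prop :=
  (∀ s σ, IsProbabilityMeasure (Pr s σ)) ∧
    ∀ s σ (l : List S), Pr s σ (Cyl (s :: l)) = listProb δ σ [] s l

/-- A strategy is observation-based if it only depends on the observation sequence. -/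
def ObsBased (obs : S → O) (σ : List S → PMF A) : Prop :=
  ∀ h h' : List S, h.map obs = h'.map obs → σ h = σ h'

/-- A strategy is pure if it always plays a Dirac distribution. -/
def IsPure (σ : List S → PMF A) : Prop := ∀ h, ∃ a, σ h = PMF.pure a

open ProbabilityTheory

lemma listProb_eq_prod [Fintype A] (δ : S → A → PMF S) (σ : List S → PMF A)
    (rest : List S) : ∀ (hist : List S) (cur : S),
    listProb δ σ hist cur rest = ∏ i : Fin rest.length,
      ∑' a, σ (hist ++ (cur :: rest).take (i.1 + 1)) a *
        δ ((cur :: rest)[i.1]'(by simp)) a (rest[i.1]'i.2) := by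
  induction rest with
  | nil => intro hist cur; simp [listProb]
  | cons s' rest ih =>
    intro hist cur
    rw [listProb, ih]
    simp only [List.length_cons]
    rw [Fin.prod_univ_succ]
    simp

lemma Cyl_eq_biInter (l : List S) :
    Cyl l = ⋂ i : Fin l.length, (fun ρ : ℕ → S => ρ i.1) ⁻¹' {l.get i} := by
  ext ρ; simp [Cyl]

lemma measurableSet_Cyl [MeasurableSpace S] [DiscreteMeasurableSpace S] (l : List S) :
    MeasurableSet (Cyl l) := by
  rw [Cyl_eq_biInter]
  exact MeasurableSet.iInter fun i => measurable_pi_apply _ (MeasurableSet.of_discrete)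

lemma Cyl_anti (l l' : List S) (ρ : ℕ → S) (h : ρ ∈ Cyl l) (h' : ρ ∈ Cyl l')
    (hle : l.length ≤ l'.length) : Cyl l' ⊆ Cyl l := by
  intro ρ' hρ' i
  have h1 := h i
  have h2 := h' ⟨i.1, by omega⟩
  have h3 := hρ' ⟨i.1, by omega⟩
  rw [← h1, h3, ← h2]

lemma isPiSystem_Cyl : IsPiSystem (Set.range (Cyl : List S → Set (ℕ → S))) := by
  rintro _ ⟨l, rfl⟩ _ ⟨l', rfl⟩ ⟨ρ, h, h'⟩
  rcases le_total l.length l'.length with hle | hle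
  · exact ⟨l', (Set.inter_eq_right.2 (Cyl_anti l l' ρ h h' hle)).symm⟩
  · exact ⟨l, (Set.inter_eq_left.2 (Cyl_anti l' l ρ h' h hle)).symm⟩

lemma generateFrom_Cyl [Fintype S] [MeasurableSpace S] [DiscreteMeasurableSpace S] :
    (MeasurableSpace.pi : MeasurableSpace (ℕ → S)) =
      MeasurableSpace.generateFrom (Set.range (Cyl : List S → Set (ℕ → S))) := by
  apply le_antisymm
  · refine iSup_le fun n => ?_
    rw [← measurable_iff_comap_le]
    refine @measurable_to_countable' _ _ _ _ (_) _ ?_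
    intro s
    have : (fun ρ : ℕ → S => ρ n) ⁻¹' {s} =
        ⋃ l : {l : List S // ∃ h : n < l.length, l[n] = s}, Cyl l.1 := by
      ext ρ
      simp only [Set.mem_preimage, Set.mem_singleton_iff, Set.mem_iUnion]
      constructor
      · intro h
        refine ⟨⟨List.ofFn (fun i : Fin (n + 1) => ρ i), by simp, by rw [List.getElem_ofFn]; exact h⟩, ?_⟩
        intro i
        simp only [List.get_eq_getElem, List.getElem_ofFn]
      · rintro ⟨⟨l, hl, rfl⟩, h⟩
        exact h ⟨n, hl⟩
    rw [this]
    exact MeasurableSet.iUnion fun l => MeasurableSpace.measurableSet_generateFrom ⟨_, rfl⟩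
  · refine MeasurableSpace.generateFrom_le ?_
    rintro _ ⟨l, rfl⟩
    exact measurableSet_Cyl l

lemma Cyl_ne_zero [Fintype A] [MeasurableSpace S] [DiscreteMeasurableSpace S]
    (δ : S → A → PMF S)
    (Pr : S → (List S → PMF A) → Measure (ℕ → S)) (hPr : IsPlayMeasure δ Pr)
    (s t : S) (hst : t ≠ s) (σ : List S → PMF A) (l : List S) : Pr s σ (Cyl (t :: l)) = 0 := by
  have := hPr.1 s σ
  have h1 : Pr s σ (Cyl [s]) = 1 := by rw [hPr.2]; rfl
  have h2 : Pr s σ (Cyl [s])ᶜ = 0 := (prob_compl_eq_zero_iff (measurableSet_Cyl _)).2 h1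
  refine measure_mono_null ?_ h2
  intro ρ h h'
  have a := h ⟨0, by simp⟩
  have b := h' ⟨0, by simp⟩
  simp at a b
  exact hst (a.symm.trans b)

/-- The pure observation-based strategy of a choice function. -/
noncomputable def pureStrat (obs : S → O) (f : List O → A) : List S → PMF A :=
  fun h => PMF.pure (f (h.map obs))

lemma listProb_pureStrat [Fintype A] (δ : S → A → PMF S) (obs : S → O) (f : List O → A)
    (s : S) (l : List S) :
    listProb δ (pureStrat obs f) [] s l = ∏ i : Fin l.length,
        δ ((s :: l)[i.1]'(by simp)) (f (((s :: l).take (i.1 + 1)).map obs)) (l[i.1]'i.2) := by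
  classical
  rw [listProb_eq_prod]
  refine Finset.prod_congr rfl fun i _ => ?_
  rw [tsum_eq_single (f (((s :: l).take (i.1 + 1)).map obs))]
  · simp [pureStrat]
  · intro a ha
    simp only [pureStrat, List.nil_append, PMF.pure_apply, if_neg ha, zero_mul]

lemma lintegral_listProb [Fintype A] [MeasurableSpace A] [DiscreteMeasurableSpace A]
    (δ : S → A → PMF S) (obs : S → O) (τ : List O → PMF A)
    (σ : List S → PMF A) (hσ : ∀ h, τ (h.map obs) = σ h) (s : S) (l : List S) :
    ∫⁻ f, listProb δ (pureStrat obs f) [] s l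
      ∂(Measure.infinitePi fun w => (τ w).toMeasure) = listProb δ σ [] s l := by
  simp_rw [listProb_pureStrat]
  have hind : iIndepFun (fun (i : Fin l.length) (f : List O → A) =>
      δ ((s :: l)[i.1]'(by simp)) (f (((s :: l).take (i.1 + 1)).map obs)) (l[i.1]'i.2))
      (Measure.infinitePi fun w => (τ w).toMeasure) := by
    have h0 : iIndepFun (fun (w : List O) (f : List O → A) => f w)
        (Measure.infinitePi fun w => (τ w).toMeasure) :=
      iIndepFun_infinitePi (X := fun _ a => a) (fun _ => measurable_id)
    have hinj : Function.Injective
        (fun i : Fin l.length => ((s :: l).take (i.1 + 1)).map obs) := by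
      intro i j hij
      have := congrArg List.length hij
      simp at this
      ext; omega
    exact (h0.precomp hinj).comp
      (fun i a => δ ((s :: l)[i.1]'(by simp)) a (l[i.1]'i.2))
      (fun i => measurable_of_countable _)
  rw [lintegral_prod_eq_prod_lintegral_of_indepFun Finset.univ _ hind
    (fun i => (measurable_of_countable
      (fun a => δ ((s :: l)[i.1]'(by simp)) a (l[i.1]'i.2))).comp (measurable_pi_apply _)),
    listProb_eq_prod]
  refine Finset.prod_congr rfl fun i _ => ?_
  have hm := (measurePreserving_eval_infinitePi (fun w => (τ w).toMeasure)
    (((s :: l).take (i.1 + 1)).map obs)).lintegral_comp (measurable_of_countable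
      (fun a => δ ((s :: l)[i.1]'(by simp)) a (l[i.1]'i.2)))
  refine hm.trans ?_
  rw [lintegral_fintype, tsum_fintype]
  refine Finset.sum_congr rfl fun a _ => ?_
  rw [PMF.toMeasure_apply_singleton _ _ (MeasurableSet.of_discrete), hσ, mul_comm]
  rfl

lemma measurable_listProb [Fintype A] [MeasurableSpace A] [DiscreteMeasurableSpace A]
    (δ : S → A → PMF S) (obs : S → O) (s : S) (l : List S) :
    Measurable fun f : List O → A => listProb δ (pureStrat obs f) [] s l := by
  simp_rw [listProb_pureStrat]
  exact Finset.measurable_prod _ fun i _ => (measurable_of_countable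
      (fun a => δ ((s :: l)[i.1]'(by simp)) a (l[i.1]'i.2))).comp (measurable_pi_apply _)

lemma exists_mixture [Fintype S] [Fintype A] [MeasurableSpace A] [DiscreteMeasurableSpace A]
    [MeasurableSpace S] [DiscreteMeasurableSpace S]
    (δ : S → A → PMF S) (obs : S → O)
    (Pr : S → (List S → PMF A) → Measure (ℕ → S)) (hPr : IsPlayMeasure δ Pr)
    (s : S) (τ : List O → PMF A)
    (σ : List S → PMF A) (hσ : ∀ h, τ (h.map obs) = σ h)
    (φ : Set (ℕ → S)) (hφ : MeasurableSet φ) :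
    Pr s σ φ = ∫⁻ f, Pr s (pureStrat obs f) φ
      ∂(Measure.infinitePi fun w => (τ w).toMeasure) := by
  have := hPr.1
  have huniv : (Cyl ([] : List S)) = Set.univ := by
    ext ρ; simp [Cyl]
  have hmeas : Measurable fun f : List O → A => Pr s (pureStrat obs f) := by
    refine Measurable.measure_of_isPiSystem_of_isProbabilityMeasure generateFrom_Cyl
      isPiSystem_Cyl ?_
    rintro _ ⟨l, rfl⟩
    cases l with
    | nil => simp [huniv]
    | cons t l =>
      by_cases hst : t = s
      · subst hst
        simp_rw [hPr.2]
        exact measurable_listProb δ obs t l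
      · simp_rw [Cyl_ne_zero δ Pr hPr s t hst]
        exact measurable_const
  rw [← Measure.bind_apply hφ hmeas.aemeasurable]
  congr 1
  refine ext_of_generate_finite _ generateFrom_Cyl isPiSystem_Cyl ?_ ?_
  · rintro _ ⟨l, rfl⟩
    rw [Measure.bind_apply (measurableSet_Cyl l) hmeas.aemeasurable]
    cases l with
    | nil => simp [huniv]
    | cons t l =>
      by_cases hst : t = s
      · subst hst
        simp_rw [hPr.2]
        exact (lintegral_listProb δ obs τ σ hσ t l).symm
      · simp_rw [Cyl_ne_zero δ Pr hPr s t hst]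
        simp
  · rw [Measure.bind_apply MeasurableSet.univ hmeas.aemeasurable]
    simp

theorem stmt_11 {S A O : Type} [Fintype S] [Nonempty S] [Fintype A] [Nonempty A] [Fintype O]
    [MeasurableSpace S] [DiscreteMeasurableSpace S]
    (δ : S → A → PMF S) (obs : S → O)
    (Pr : S → (List S → PMF A) → Measure (ℕ → S)) (hPr : IsPlayMeasure δ Pr)
    (sStar : S) (φ : Set (ℕ → S)) (hφ : MeasurableSet φ) :
    (⨆ σ : {σ : List S → PMF A // ObsBased obs σ}, Pr sStar σ.1 φ) =
      ⨆ σ : {σ : List S → PMF A // ObsBased obs σ ∧ IsPure σ}, Pr sStar σ.1 φ := by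
  classical
  apply le_antisymm
  · refine iSup_le ?_
    rintro ⟨σ, hσ⟩
    letI : MeasurableSpace A := ⊤
    haveI : DiscreteMeasurableSpace A := ⟨fun _ => trivial⟩
    have hfac : ∀ h : List S, Function.extend (List.map obs) σ
        (fun _ => PMF.pure (Classical.arbitrary A)) (h.map obs) = σ h := fun h =>
      Function.FactorsThrough.extend_apply (fun a b hab => hσ a b hab) _ h
    rw [exists_mixture δ obs Pr hPr sStar _ σ hfac φ hφ]
    refine (lintegral_mono (g := fun _ => ⨆ σ : {σ : List S → PMF A // ObsBased obs σ ∧ IsPure σ},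
      Pr sStar σ.1 φ) ?_).trans (by simp)
    intro f
    exact le_iSup (fun σ : {σ : List S → PMF A // ObsBased obs σ ∧ IsPure σ} => Pr sStar σ.1 φ)
      ⟨pureStrat obs f, fun h h' hh => by simp only [pureStrat, hh], fun h => ⟨_, rfl⟩⟩
  · refine iSup_le ?_
    rintro ⟨σ, hσ, _⟩
    exact le_iSup (fun σ : {σ : List S → PMF A // ObsBased obs σ} => Pr sStar σ.1 φ) ⟨σ, hσ⟩

end Stmt11
end

section
/- Let (S, A, δ, obs) be a POMDP, let s* be an initial state, and let φ ⊆ S^ω be a measurable objective. If there exists a randomized observation-based strategy σ with Pr_{s*}^σ(φ) = 1 (an almost-sure winning strategy), then there exists a pure observation-based strategy σ_P with Pr_{s*}^{σ_P}(φ) = 1. -/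
open MeasureTheory
open scoped ENNReal

namespace Stmt12

variable {S A O : Type}

/-- The cylinder set of infinite plays extending the finite prefix `l`. -/
def Cyl (l : List S) : Set (ℕ → S) := {ρ | ∀ i : Fin l.length, ρ i.1 = l.get i}

/-- Probability of observing the successive states `rest` after the history `hist ++ [cur]`,
when actions are drawn according to the strategy `σ` and states according to `δ`. -/
noncomputable def listProb [Fintype A] (δ : S → A → PMF S) (σ : List S → PMF A) :
    List S → S → List S → ℝ≥0∞
  | _, _, [] => 1
  | hist, cur, s' :: rest =>
      (∑' a, σ (hist ++ [cur]) a * δ cur a s') * listProb δ σ (hist ++ [cur]) s' rest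

/-- `Pr` is the family of Ionescu–Tulcea play measures of the POMDP with transitions `δ`:
`Pr s σ` is a probability measure on `S^ω` (product σ-algebra, `S` discrete), and the
probability of the cylinder of plays starting with `s :: l` is the product of the
one-step transition probabilities under the strategy `σ`. -/
def IsPlayMeasure [Fintype A] [MeasurableSpace S] (δ : S → A → PMF S)
    (Pr : S → (List S → PMF A) → Measure (ℕ → S)) : Prop :=
  (∀ s σ, IsProbabilityMeasure (Pr s σ)) ∧
    ∀ s σ (l : List S), Pr s σ (Cyl (s :: l)) = listProb δ σ [] s l

/-- A strategy is observation-based if it only depends on the observation sequence. -/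
def ObsBased (obs : S → O) (σ : List S → PMF A) : Prop :=
  ∀ h h' : List S, h.map obs = h'.map obs → σ h = σ h'

/-- A strategy is pure if it always plays a Dirac distribution. -/
def IsPure (σ : List S → PMF A) : Prop := ∀ h, ∃ a, σ h = PMF.pure a

theorem listProb_eq_prod [Fintype A] (δ : S → A → PMF S) (rest : List S) :
    ∀ (hist : List S) (cur : S), ∃ (H : Fin rest.length → List S) (c d : Fin rest.length → S),
      (∀ i, (H i).length = hist.length + 1 + i) ∧
      ∀ σ : List S → PMF A, listProb δ σ hist cur rest =
        ∏ i, ∑' a, σ (H i) a * δ (c i) a (d i) := by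
  induction rest with
  | nil =>
    intro hist cur
    exact ⟨fun i => i.elim0, fun i => i.elim0, fun i => i.elim0, fun i => i.elim0,
      fun σ => by simp [listProb]⟩
  | cons s' rest ih =>
    intro hist cur
    obtain ⟨H, c, d, hl, hp⟩ := ih (hist ++ [cur]) s'
    refine ⟨Fin.cons (hist ++ [cur]) H, Fin.cons cur c, Fin.cons s' d, ?_, ?_⟩
    · intro i
      refine Fin.cases ?_ (fun j => ?_) i
      · simp
      · simp only [Fin.cons_succ, hl, List.length_append, Fin.val_succ]
        simp
        omega
    · intro σ
      rw [listProb, hp]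
      refine Eq.trans ?_ (Fin.prod_univ_succ (M := ℝ≥0∞) (n := rest.length) _).symm
      rfl

theorem measurableSet_cyl [MeasurableSpace S] [DiscreteMeasurableSpace S] (l : List S) :
    MeasurableSet (Cyl l) := by
  have : Cyl l = ⋂ i : Fin l.length, (fun ρ : ℕ → S => ρ i.1) ⁻¹' {l.get i} := by
    ext ρ; simp [Cyl]
  rw [this]
  exact MeasurableSet.iInter fun i => measurable_pi_apply _ (MeasurableSet.of_discrete)

theorem isPiSystem_cyl : IsPiSystem (Set.range (Cyl : List S → Set (ℕ → S))) := by
  have key : ∀ (l l' : List S) (ρ : ℕ → S), ρ ∈ Cyl l → ρ ∈ Cyl l' →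
      l.length ≤ l'.length → Cyl l' ⊆ Cyl l := by
    intro l l' ρ h h' hle τ hτ i
    have h1 := h i
    have h2 := h' ⟨i.1, i.2.trans_le hle⟩
    have h3 := hτ ⟨i.1, i.2.trans_le hle⟩
    simp only at h2 h3
    rw [h3, ← h2, h1]
  rintro _ ⟨l, rfl⟩ _ ⟨l', rfl⟩ ⟨ρ, h, h'⟩
  rcases le_total l.length l'.length with hle | hle
  · exact ⟨l', (Set.inter_eq_right.2 (key l l' ρ h h' hle)).symm⟩
  · exact ⟨l, (Set.inter_eq_left.2 (key l' l ρ h' h hle)).symm⟩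

theorem generateFrom_cyl [Finite S] [MeasurableSpace S] [DiscreteMeasurableSpace S] :
    (MeasurableSpace.pi : MeasurableSpace (ℕ → S)) =
      MeasurableSpace.generateFrom (Set.range Cyl) := by
  apply le_antisymm
  · refine iSup_le fun n => ?_
    rintro _ ⟨B, -, rfl⟩
    have : (fun ρ : ℕ → S => ρ n) ⁻¹' B =
        ⋃ l : {l : List S // Cyl l ⊆ (fun ρ : ℕ → S => ρ n) ⁻¹' B}, Cyl l.1 := by
      ext ρ
      simp only [Set.mem_iUnion]
      constructor
      · intro h
        refine ⟨⟨(List.range (n + 1)).map ρ, ?_⟩, ?_⟩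
        · intro τ hτ
          have := hτ ⟨n, by simp⟩
          simp only [List.get_eq_getElem, List.getElem_map, List.getElem_range] at this
          rw [Set.mem_preimage, this]
          exact h
        · intro i
          simp only [List.get_eq_getElem, List.getElem_map, List.getElem_range]
      · rintro ⟨l, hl⟩
        exact l.2 hl
    rw [this]
    refine MeasurableSet.iUnion fun l => ?_
    exact MeasurableSpace.measurableSet_generateFrom ⟨_, rfl⟩
  · refine MeasurableSpace.generateFrom_le ?_
    rintro _ ⟨l, rfl⟩
    exact measurableSet_cyl l

theorem stmt_12 {S A O : Type} [Fintype S] [Nonempty S] [Fintype A] [Nonempty A] [Fintype O]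
    [MeasurableSpace S] [DiscreteMeasurableSpace S]
    (δ : S → A → PMF S) (obs : S → O)
    (Pr : S → (List S → PMF A) → Measure (ℕ → S)) (hPr : IsPlayMeasure δ Pr)
    (sStar : S) (φ : Set (ℕ → S)) (hφ : MeasurableSet φ)
    (σ : List S → PMF A) (hσ : ObsBased obs σ) (hwin : Pr sStar σ φ = 1) :
    ∃ σP : List S → PMF A, IsPure σP ∧ ObsBased obs σP ∧ Pr sStar σP φ = 1 := by
  classical
  let : MeasurableSpace A := ⊤
  have : DiscreteMeasurableSpace A := ⟨fun _ => trivial⟩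
  obtain ⟨hprob, hcyl⟩ := hPr
  -- factor the strategy through observations
  obtain ⟨τ, hτ⟩ : ∃ τ : List O → PMF A, ∀ h, σ h = τ (h.map obs) := by
    refine ⟨fun o => if H : ∃ h : List S, h.map obs = o then σ H.choose
      else PMF.pure (Classical.arbitrary A), fun h => ?_⟩
    have H : ∃ h' : List S, h'.map obs = h.map obs := ⟨h, rfl⟩
    simp only [dif_pos H]
    exact hσ _ _ H.choose_spec.symm
  let P : Measure (List O → A) := Measure.infinitePi fun o => (τ o).toMeasure
  let G : (List O → A) → List S → PMF A := fun g h => PMF.pure (g (h.map obs))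
  have hzero : ∀ (σ' : List S → PMF A) (t : S) (l : List S), t ≠ sStar →
      Pr sStar σ' (Cyl (t :: l)) = 0 := by
    intro σ' t l ht
    have := hprob sStar σ'
    have h1 : Pr sStar σ' (Cyl [sStar]) = 1 := by simp [hcyl, listProb]
    have h2 := (prob_compl_eq_zero_iff (μ := Pr sStar σ') (measurableSet_cyl [sStar])).2 h1
    refine measure_mono_null ?_ h2
    intro ρ hρ hρ'
    have e1 := hρ ⟨0, by simp⟩
    have e2 := hρ' ⟨0, by simp⟩
    simp at e1 e2
    exact ht (e1.symm.trans e2)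
  have hnil : (Cyl ([] : List S)) = Set.univ := by
    ext ρ
    simp only [Set.mem_univ, iff_true]
    exact fun i => i.elim0
  have hpure : ∀ g (h : List S) (c d : S),
      ∑' a, G g h a * δ c a d = δ c (g (h.map obs)) d := by
    intro g h c d
    rw [tsum_eq_single (g (h.map obs))]
    · simp [G]
    · intro a ha
      simp [G, ha]
  have hmeasA : ∀ f : A → ℝ≥0∞, Measurable f := fun f => measurable_of_finite f
  have hmeas : Measurable fun g => Pr sStar (G g) := by
    have : ∀ g, IsProbabilityMeasure (Pr sStar (G g)) := fun g => hprob _ _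
    refine Measurable.measure_of_isPiSystem_of_isProbabilityMeasure generateFrom_cyl
      isPiSystem_cyl ?_
    rintro _ ⟨l, rfl⟩
    rcases l with _ | ⟨t, l⟩
    · simp [hnil]
    by_cases ht : t = sStar
    · subst ht
      obtain ⟨H, c, d, -, hp⟩ := listProb_eq_prod δ l [] t
      simp only [hcyl, hp, hpure]
      refine Finset.measurable_prod _ fun i _ => ?_
      exact (hmeasA fun a => δ (c i) a (d i)).comp (measurable_pi_apply ((H i).map obs))
    · simp [hzero _ t l ht]
  have hbind : P.bind (fun g => Pr sStar (G g)) = Pr sStar σ := by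
    have := hprob sStar σ
    have : ∀ g, IsProbabilityMeasure (Pr sStar (G g)) := fun g => hprob _ _
    symm
    refine ext_of_generate_finite _ generateFrom_cyl isPiSystem_cyl ?_ ?_
    · rintro _ ⟨l, rfl⟩
      rw [Measure.bind_apply (measurableSet_cyl l) hmeas.aemeasurable]
      rcases l with _ | ⟨t, l⟩
      · simp [hnil]
      by_cases ht : t = sStar
      · subst ht
        obtain ⟨H, c, d, hl, hp⟩ := listProb_eq_prod δ l [] t
        simp only [hcyl, hp, hpure]
        have hinj : Function.Injective fun i => (H i).map obs := by
          intro i j hij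
          have := congrArg List.length hij
          simp only [List.length_map, hl] at this
          exact Fin.ext (by omega)
        have hind : ProbabilityTheory.iIndepFun
            (fun (i : Fin l.length) (g : List O → A) => δ (c i) (g ((H i).map obs)) (d i)) P := by
          have h0 : ProbabilityTheory.iIndepFun (fun (o : List O) (g : List O → A) => g o) P :=
            ProbabilityTheory.iIndepFun_infinitePi (X := fun _ a => a) fun _ => measurable_id
          exact (h0.precomp hinj).comp (fun i a => δ (c i) a (d i)) fun i => hmeasA _
        rw [ProbabilityTheory.lintegral_prod_eq_prod_lintegral_of_indepFun _ _ hind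
          fun i => (hmeasA fun a => δ (c i) a (d i)).comp (measurable_pi_apply _)]
        refine Finset.prod_congr rfl fun i _ => ?_
        have hmp : MeasurePreserving (Function.eval ((H i).map obs)) P
            (τ ((H i).map obs)).toMeasure :=
          measurePreserving_eval_infinitePi (fun o => (τ o).toMeasure) _
        have := hmp.lintegral_comp (hmeasA fun a => δ (c i) a (d i))
        simp only [Function.eval] at this
        rw [this, lintegral_countable']
        refine tsum_congr fun a => ?_
        rw [PMF.toMeasure_apply_singleton _ _ MeasurableSet.of_discrete, hτ, mul_comm]
      · simp [hzero _ t l ht]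
    · rw [Measure.bind_apply MeasurableSet.univ hmeas.aemeasurable]
      simp
  have hae : ∀ᵐ ρ ∂(P.bind fun g => Pr sStar (G g)), ρ ∈ φ := by
    rw [hbind]
    have := hprob sStar σ
    exact (mem_ae_iff_prob_eq_one hφ).2 hwin
  obtain ⟨g, hg⟩ := (Measure.ae_ae_of_ae_bind hmeas.aemeasurable hae).exists
  refine ⟨G g, fun h => ⟨_, rfl⟩, fun h h' hh => by simp [G, hh], ?_⟩
  have := hprob sStar (G g)
  exact (mem_ae_iff_prob_eq_one hφ).1 hg

end Stmt12
end

section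
/- Let (S, A, δ, obs) be a POMDP, let s* be an initial state, and let φ ⊆ S^ω be a measurable objective. If there exists a randomized observation-based strategy σ with Pr_{s*}^σ(φ) > 0 (a positive winning strategy), then there exists a pure observation-based strategy σ_P with Pr_{s*}^{σ_P}(φ) > 0. -/
open MeasureTheory
open scoped ENNReal

namespace Stmt13

variable {S A O : Type}

/-- The cylinder set of infinite plays extending the finite prefix `l`. -/
def Cyl (l : List S) : Set (ℕ → S) := {ρ | ∀ i : Fin l.length, ρ i.1 = l.get i}

/-- Probability of observing the successive states `rest` after the history `hist ++ [cur]`,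
when actions are drawn according to the strategy `σ` and states according to `δ`. -/
noncomputable def listProb [Fintype A] (δ : S → A → PMF S) (σ : List S → PMF A) :
    List S → S → List S → ℝ≥0∞
  | _, _, [] => 1
  | hist, cur, s' :: rest =>
      (∑' a, σ (hist ++ [cur]) a * δ cur a s') * listProb δ σ (hist ++ [cur]) s' rest

/-- `Pr` is the family of Ionescu–Tulcea play measures of the POMDP with transitions `δ`:
`Pr s σ` is a probability measure on `S^ω` (product σ-algebra, `S` discrete), and the
probability of the cylinder of plays starting with `s :: l` is the product of the
one-step transition probabilities under the strategy `σ`. -/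
def IsPlayMeasure [Fintype A] [MeasurableSpace S] (δ : S → A → PMF S)
    (Pr : S → (List S → PMF A) → Measure (ℕ → S)) : Prop :=
  (∀ s σ, IsProbabilityMeasure (Pr s σ)) ∧
    ∀ s σ (l : List S), Pr s σ (Cyl (s :: l)) = listProb δ σ [] s l

/-- A strategy is observation-based if it only depends on the observation sequence. -/
def ObsBased (obs : S → O) (σ : List S → PMF A) : Prop :=
  ∀ h h' : List S, h.map obs = h'.map obs → σ h = σ h'

/-- A strategy is pure if it always plays a Dirac distribution. -/
def IsPure (σ : List S → PMF A) : Prop := ∀ h, ∃ a, σ h = PMF.pure a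

theorem listProb_eq_prod [Fintype A] (δ : S → A → PMF S) (σ : List S → PMF A) (l : List S) :
    ∀ (hist : List S) (cur : S), listProb δ σ hist cur l =
      ∏ i : Fin l.length, ∑' a, σ (hist ++ (cur :: l).take (i.1 + 1)) a *
        δ ((cur :: l).get (i.castSucc)) a (l.get i) := by
  induction l with
  | nil => intro hist cur; simp [listProb]
  | cons s' rest ih =>
    intro hist cur
    rw [listProb, ih]
    simp only [List.length_cons]
    rw [Fin.prod_univ_succ]
    simp

theorem mem_Cyl_iff (l : List S) (ρ : ℕ → S) :
    ρ ∈ Cyl l ↔ ∀ i (h : i < l.length), ρ i = l[i] := by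
  simp [Cyl, Fin.forall_iff]

theorem isPiSystem_Cyl : IsPiSystem (Set.range (Cyl (S := S))) := by
  have key : ∀ l l' : List S, l.length ≤ l'.length → (Cyl l ∩ Cyl l').Nonempty →
      Cyl l ∩ Cyl l' = Cyl l' := by
    rintro l l' hl ⟨ρ, h1, h2⟩
    rw [mem_Cyl_iff] at h1 h2
    refine Set.inter_eq_right.2 fun ρ' h => ?_
    rw [mem_Cyl_iff] at h ⊢
    intro i hi
    rw [h i (by omega), ← h2 i (by omega), h1 i hi]
  rintro _ ⟨l, rfl⟩ _ ⟨l', rfl⟩ hne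
  rcases le_total l.length l'.length with h | h
  · exact ⟨l', (key l l' h hne).symm⟩
  · rw [Set.inter_comm] at hne ⊢
    exact ⟨l, (key l' l h hne).symm⟩

theorem measurableSet_Cyl [MeasurableSpace S] [DiscreteMeasurableSpace S] (l : List S) :
    MeasurableSet (Cyl l) := by
  have : Cyl l = ⋂ i : Fin l.length, (fun ρ : ℕ → S => ρ i.1) ⁻¹' {l.get i} := by
    ext ρ; simp [Cyl]
  rw [this]
  exact MeasurableSet.iInter fun i => measurable_pi_apply _ (MeasurableSet.of_discrete)

theorem generateFrom_Cyl [Finite S] [MeasurableSpace S] [DiscreteMeasurableSpace S] :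
    (MeasurableSpace.pi : MeasurableSpace (ℕ → S)) =
      MeasurableSpace.generateFrom (Set.range (Cyl (S := S))) := by
  apply le_antisymm
  · refine iSup_le fun i => ?_
    rintro _ ⟨t, -, rfl⟩
    have : (fun ρ : ℕ → S => ρ i) ⁻¹' t =
        ⋃ l ∈ {l : List S | ∃ h : i < l.length, l[i] ∈ t}, Cyl l := by
      ext ρ
      simp only [Set.mem_preimage, Set.mem_iUnion, Set.mem_ofPred_eq, exists_prop]
      constructor
      · intro h
        refine ⟨List.ofFn (fun j : Fin (i + 1) => ρ j), ⟨by simp, by simpa [-List.ofFn_succ] using h⟩, ?_⟩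
        rw [mem_Cyl_iff]
        intro j hj
        simp [-List.ofFn_succ]
      · rintro ⟨l, ⟨h, ht⟩, hl⟩
        rw [mem_Cyl_iff] at hl
        rw [hl i h]
        exact ht
    rw [this]
    exact MeasurableSet.biUnion (Set.to_countable _)
      fun l _ => MeasurableSpace.measurableSet_generateFrom ⟨l, rfl⟩
  · refine MeasurableSpace.generateFrom_le ?_
    rintro _ ⟨l, rfl⟩
    exact measurableSet_Cyl l

/-- The value of a play measure on any cylinder. -/
theorem play_Cyl [Fintype A] [MeasurableSpace S] [DiscreteMeasurableSpace S]
    {δ : S → A → PMF S}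
    {Pr : S → (List S → PMF A) → Measure (ℕ → S)} (hPr : IsPlayMeasure δ Pr)
    (s : S) (l : List S) :
    (∀ σ, Pr s σ (Cyl l) = 0) ∨ (∀ σ, Pr s σ (Cyl l) = 1) ∨
      ∃ l', l = s :: l' := by
  cases l with
  | nil =>
    right; left
    intro σ
    have := hPr.1 s σ
    have h : Cyl ([] : List S) = Set.univ := by ext ρ; simp [Cyl]
    rw [h, measure_univ]
  | cons x l' =>
    by_cases hx : x = s
    · subst hx
      exact Or.inr (Or.inr ⟨l', rfl⟩)
    · left
      intro σ
      have := hPr.1 s σ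
      have h1 : Pr s σ (Cyl [s]) = 1 := by rw [hPr.2]; simp [listProb]
      have h2 : Pr s σ (Cyl [s])ᶜ = 0 := by
        rw [measure_compl (measurableSet_Cyl _) (measure_ne_top _ _), measure_univ, h1, tsub_self]
      refine measure_mono_null ?_ h2
      intro ρ h h'
      rw [mem_Cyl_iff] at h h'
      have e1 := h 0 (by simp)
      have e2 := h' 0 (by simp)
      simp at e1 e2
      exact hx (e1.symm.trans e2)

/-- The pure strategy induced by a choice function on observation sequences. -/
noncomputable def pureStrat (obs : S → O) (f : List O → A) : List S → PMF A :=
  fun h => PMF.pure (f (h.map obs))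

theorem listProb_pure [Fintype A] (δ : S → A → PMF S) (obs : S → O) (f : List O → A)
    (cur : S) (l : List S) :
    listProb δ (pureStrat obs f) [] cur l =
      ∏ i : Fin l.length, (fun a => δ ((cur :: l).get (i.castSucc)) a (l.get i))
        (f (((cur :: l).take (i.1 + 1)).map obs)) := by
  classical
  rw [listProb_eq_prod]
  refine Finset.prod_congr rfl fun i _ => ?_
  rw [tsum_eq_single (f (((cur :: l).take (i.1 + 1)).map obs))]
  · simp [pureStrat]
  · intro b hb
    simp only [pureStrat, List.nil_append, PMF.pure_apply, if_neg hb, zero_mul]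

theorem lintegral_listProb [Fintype A] [MeasurableSpace A] [DiscreteMeasurableSpace A]
    (δ : S → A → PMF S) (obs : S → O) (τ : List O → PMF A) (cur : S) (l : List S) :
    ∫⁻ f, listProb δ (pureStrat obs f) [] cur l
        ∂(Measure.infinitePi fun w => (τ w).toMeasure) =
      listProb δ (fun h => τ (h.map obs)) [] cur l := by
  set c : Fin l.length → List O := fun i => ((cur :: l).take (i.1 + 1)).map obs with hc
  set G : Fin l.length → A → ℝ≥0∞ :=
    fun i a => δ ((cur :: l).get (i.castSucc)) a (l.get i) with hG
  have hcinj : Function.Injective c := by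
    intro i j hij
    have := congrArg List.length hij
    simp [hc] at this
    ext
    omega
  have h0 := (ProbabilityTheory.iIndepFun_infinitePi (P := fun w => (τ w).toMeasure)
    (X := fun _ (a : A) => a) (fun _ => measurable_id)).precomp hcinj
  have h1 := h0.comp G (fun i => Measurable.of_discrete)
  have hm : ∀ i, Measurable (G i) := fun i => Measurable.of_discrete
  simp_rw [listProb_pure]
  rw [listProb_eq_prod]
  have h2 := ProbabilityTheory.lintegral_prod_eq_prod_lintegral_of_indepFun Finset.univ _ h1
    (fun i => (hm i).comp (measurable_pi_apply _))
  refine Eq.trans ?_ (h2.trans ?_)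
  · rfl
  · refine Finset.prod_congr rfl fun i _ => ?_
    have h3 := (measurePreserving_eval_infinitePi (fun w => (τ w).toMeasure) (c i)).lintegral_comp
      (hm i)
    refine Eq.trans ?_ (h3.trans ?_)
    · rfl
    · rw [lintegral_fintype, tsum_fintype]
      refine Finset.sum_congr rfl fun a _ => ?_
      rw [PMF.toMeasure_apply_singleton _ _ (MeasurableSet.of_discrete), mul_comm]
      rfl

theorem measurable_listProb [Fintype A] [MeasurableSpace A] [DiscreteMeasurableSpace A]
    (δ : S → A → PMF S) (obs : S → O) (cur : S) (l : List S) :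
    Measurable fun f : List O → A => listProb δ (pureStrat obs f) [] cur l := by
  simp_rw [listProb_pure]
  refine Finset.measurable_prod _ fun i _ => ?_
  exact (Measurable.of_discrete (f := fun a => δ ((cur :: l).get (i.castSucc)) a (l.get i))).comp
    (measurable_pi_apply _)

theorem stmt_13 {S A O : Type} [Fintype S] [Nonempty S] [Fintype A] [Nonempty A] [Fintype O]
    [MeasurableSpace S] [DiscreteMeasurableSpace S]
    (δ : S → A → PMF S) (obs : S → O)
    (Pr : S → (List S → PMF A) → Measure (ℕ → S)) (hPr : IsPlayMeasure δ Pr)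
    (sStar : S) (φ : Set (ℕ → S)) (hφ : MeasurableSet φ)
    (σ : List S → PMF A) (hσ : ObsBased obs σ) (hwin : 0 < Pr sStar σ φ) :
    ∃ σP : List S → PMF A, IsPure σP ∧ ObsBased obs σP ∧ 0 < Pr sStar σP φ := by
  classical
  letI : MeasurableSpace A := ⊤
  haveI : DiscreteMeasurableSpace A := ⟨fun _ => trivial⟩
  obtain ⟨τ, hτ⟩ : ∃ τ : List O → PMF A, σ = fun h => τ (h.map obs) := by
    refine ⟨fun w => if h : ∃ l : List S, l.map obs = w then σ h.choose else σ [], ?_⟩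
    funext h
    have hex : ∃ l : List S, l.map obs = h.map obs := ⟨h, rfl⟩
    simp only [dif_pos hex]
    exact hσ _ _ hex.choose_spec.symm
  have hprob := hPr.1
  set μ := Measure.infinitePi fun w => (τ w).toMeasure with hμ
  have hmeas : Measurable fun f : List O → A => Pr sStar (pureStrat obs f) := by
    refine Measurable.measure_of_isPiSystem_of_isProbabilityMeasure generateFrom_Cyl
      isPiSystem_Cyl ?_
    rintro _ ⟨l, rfl⟩
    rcases play_Cyl hPr sStar l with h | h | ⟨l', rfl⟩
    · simp only [h]; exact measurable_const
    · simp only [h]; exact measurable_const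
    · simp only [hPr.2]; exact measurable_listProb δ obs sStar l'
  have hmix : Pr sStar σ = μ.bind fun f => Pr sStar (pureStrat obs f) := by
    refine ext_of_generate_finite _ generateFrom_Cyl isPiSystem_Cyl ?_ ?_
    · rintro _ ⟨l, rfl⟩
      rw [Measure.bind_apply (measurableSet_Cyl l) hmeas.aemeasurable]
      rcases play_Cyl hPr sStar l with h | h | ⟨l', rfl⟩
      · simp [h]
      · simp [h]
      · simp only [hPr.2]
        rw [hμ, lintegral_listProb, hτ]
    · rw [Measure.bind_apply MeasurableSet.univ hmeas.aemeasurable]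
      simp
  rw [hmix, Measure.bind_apply hφ hmeas.aemeasurable] at hwin
  by_contra hcon
  push Not at hcon
  have hz : ∀ f : List O → A, Pr sStar (pureStrat obs f) φ = 0 := by
    intro f
    refine le_antisymm (hcon (pureStrat obs f) (fun h => ⟨_, rfl⟩) ?_) zero_le
    intro h h' e
    simp only [pureStrat, e]
  simp [hz] at hwin

end Stmt13
end

section
/- Let (S, A, δ, obs) be a POMDP, let s* be an initial state, and let φ ⊆ S^ω be a measurable objective. If there exists a randomized observation-based strategy σ that is optimal, i.e., Pr_{s*}^σ(φ) equals the supremum over all randomized observation-based strategies σ' of Pr_{s*}^{σ'}(φ), then there exists a pure observation-based strategy σ_P that attains this same supremum. -/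
open MeasureTheory
open scoped ENNReal

namespace Stmt14

variable {S A O : Type}

/-- The cylinder set of infinite plays extending the finite prefix `l`. -/
def Cyl (l : List S) : Set (ℕ → S) := {ρ | ∀ i : Fin l.length, ρ i.1 = l.get i}

/-- Probability of observing the successive states `rest` after the history `hist ++ [cur]`,
when actions are drawn according to the strategy `σ` and states according to `δ`. -/
noncomputable def listProb [Fintype A] (δ : S → A → PMF S) (σ : List S → PMF A) :
    List S → S → List S → ℝ≥0∞
  | _, _, [] => 1
  | hist, cur, s' :: rest =>
      (∑' a, σ (hist ++ [cur]) a * δ cur a s') * listProb δ σ (hist ++ [cur]) s' rest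

/-- `Pr` is the family of Ionescu–Tulcea play measures of the POMDP with transitions `δ`:
`Pr s σ` is a probability measure on `S^ω` (product σ-algebra, `S` discrete), and the
probability of the cylinder of plays starting with `s :: l` is the product of the
one-step transition probabilities under the strategy `σ`. -/
def IsPlayMeasure [Fintype A] [MeasurableSpace S] (δ : S → A → PMF S)
    (Pr : S → (List S → PMF A) → Measure (ℕ → S)) : Prop :=
  (∀ s σ, IsProbabilityMeasure (Pr s σ)) ∧
    ∀ s σ (l : List S), Pr s σ (Cyl (s :: l)) = listProb δ σ [] s l

/-- A strategy is observation-based if it only depends on the observation sequence. -/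
def ObsBased (obs : S → O) (σ : List S → PMF A) : Prop :=
  ∀ h h' : List S, h.map obs = h'.map obs → σ h = σ h'

/-- A strategy is pure if it always plays a Dirac distribution. -/
def IsPure (σ : List S → PMF A) : Prop := ∀ h, ∃ a, σ h = PMF.pure a

theorem generateFrom_cyl [Fintype S] [MeasurableSpace S] [DiscreteMeasurableSpace S] :
    (MeasurableSpace.pi : MeasurableSpace (ℕ → S)) =
      MeasurableSpace.generateFrom (Set.range (Cyl : List S → Set (ℕ → S))) := by
  apply le_antisymm
  · have key : ∀ n : ℕ, Measurable[MeasurableSpace.generateFrom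
        (Set.range (Cyl : List S → Set (ℕ → S)))] (fun ρ : ℕ → S => ρ n) := by
      intro n
      letI : MeasurableSpace (ℕ → S) :=
        MeasurableSpace.generateFrom (Set.range (Cyl : List S → Set (ℕ → S)))
      apply measurable_to_countable'
      intro s
      have : (fun ρ : ℕ → S => ρ n) ⁻¹' {s} =
          ⋃ l ∈ {l : List S | l[n]? = some s}, Cyl l := by
        ext ρ
        simp only [Set.mem_preimage, Set.mem_singleton_iff, Set.mem_ofPred_eq, Set.mem_iUnion,
          exists_prop]
        constructor
        · intro h
          refine ⟨(List.range (n + 1)).map ρ, ?_, ?_⟩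
          · simp [h]
          · intro i
            simp
        · rintro ⟨l, hl, hρ⟩
          obtain ⟨hn, hl⟩ := List.getElem?_eq_some_iff.1 hl
          have := hρ ⟨n, hn⟩
          simpa [hl] using this
      rw [this]
      refine MeasurableSet.biUnion (Set.to_countable _) fun l _ => ?_
      exact MeasurableSpace.measurableSet_generateFrom ⟨l, rfl⟩
    refine iSup_le fun n => ?_
    exact (key n).comap_le
  · apply MeasurableSpace.generateFrom_le
    rintro _ ⟨l, rfl⟩
    have : Cyl l = ⋂ i : Fin l.length, (fun ρ : ℕ → S => ρ i.1) ⁻¹' {l.get i} := by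
      ext ρ
      simp [Cyl]
    rw [this]
    exact MeasurableSet.iInter fun i => (measurable_pi_apply _) (measurableSet_singleton _)

theorem isPiSystem_cyl : IsPiSystem (Set.range (Cyl : List S → Set (ℕ → S))) := by
  have key : ∀ (l₁ l₂ : List S), l₁.length ≤ l₂.length → (Cyl l₁ ∩ Cyl l₂).Nonempty →
      Cyl l₂ ⊆ Cyl l₁ := by
    rintro l₁ l₂ h ⟨x, hx₁, hx₂⟩ y hy i
    rw [← hx₁ i]
    have a := hx₂ ⟨i.1, i.2.trans_le h⟩
    have b := hy ⟨i.1, i.2.trans_le h⟩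
    exact b.trans a.symm
  rintro _ ⟨l₁, rfl⟩ _ ⟨l₂, rfl⟩ hne
  rcases le_total l₁.length l₂.length with h | h
  · exact ⟨l₂, (Set.inter_eq_right.2 (key _ _ h hne)).symm⟩
  · exact ⟨l₁, (Set.inter_eq_left.2 (key _ _ h (by rwa [Set.inter_comm]))).symm⟩

theorem cyl_ne_zero_prob [Fintype A] [MeasurableSpace S] (δ : S → A → PMF S)
    (Pr : S → (List S → PMF A) → Measure (ℕ → S)) (hPr : IsPlayMeasure δ Pr)
    [Fintype S] [DiscreteMeasurableSpace S]
    (s t : S) (hst : t ≠ s) (σ : List S → PMF A) (l : List S) : Pr s σ (Cyl (t :: l)) = 0 := by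
  haveI := hPr.1 s σ
  have h1 : Pr s σ (Cyl [s]) = 1 := by rw [hPr.2]; rfl
  have hm : MeasurableSet (Cyl [s]) := by
    rw [generateFrom_cyl]
    exact MeasurableSpace.measurableSet_generateFrom ⟨_, rfl⟩
  refine measure_mono_null ?_ ((prob_compl_eq_zero_iff hm).2 h1)
  intro ρ hρ hρ'
  have a := hρ ⟨0, by simp⟩
  have b := hρ' ⟨0, by simp⟩
  simp at a b
  exact hst (a.symm.trans b)

theorem cyl_nil : Cyl ([] : List S) = Set.univ := by
  ext ρ
  simp [Cyl]

theorem listProb_eq_prod [Fintype A] (δ : S → A → PMF S) (σ : List S → PMF A) (l : List S) :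
    ∀ (hist : List S) (cur : S), listProb δ σ hist cur l =
      ∏ i : Fin l.length, ∑' a, σ (hist ++ (cur :: l).take (i.1 + 1)) a *
        δ ((cur :: l)[i.1]'(by simp)) a (l[i.1]) := by
  induction l with
  | nil => intro hist cur; simp [listProb]
  | cons s' rest ih =>
    intro hist cur
    rw [listProb, ih]
    simp only [List.length_cons]
    rw [Fin.prod_univ_succ]
    simp

/-- The pure strategy given by a choice of action for each observation sequence. -/
noncomputable def pureStrat (obs : S → O) (f : List O → A) : List S → PMF A :=
  fun h => PMF.pure (f (h.map obs))

theorem listProb_pure [Fintype A] (δ : S → A → PMF S) (obs : S → O) (f : List O → A)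
    (s : S) (l : List S) :
    listProb δ (pureStrat obs f) [] s l =
      ∏ i : Fin l.length, δ ((s :: l)[i.1]'(by simp))
        (f (((s :: l).take (i.1 + 1)).map obs)) (l[i.1]) := by
  rw [listProb_eq_prod]
  refine Finset.prod_congr rfl fun i _ => ?_
  rw [tsum_eq_single (f (((s :: l).take (i.1 + 1)).map obs))]
  · simp [pureStrat]
  · intro b hb
    simp only [pureStrat, List.nil_append, PMF.pure_apply, if_neg hb, zero_mul]

theorem lintegral_listProb_pure [Fintype A] [Fintype O] [MeasurableSpace A]
    [DiscreteMeasurableSpace A]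
    (δ : S → A → PMF S) (obs : S → O) (τ : List O → PMF A) (s : S) (l : List S) :
    ∫⁻ f, listProb δ (pureStrat obs f) [] s l ∂(Measure.infinitePi fun o => (τ o).toMeasure) =
      listProb δ (fun h => τ (h.map obs)) [] s l := by
  simp_rw [listProb_pure]
  rw [listProb_eq_prod]
  set g : Fin l.length → List O := fun i => ((s :: l).take (i.1 + 1)).map obs with hg
  have hginj : Function.Injective g := by
    intro i j hij
    have := congrArg List.length hij
    simp only [hg, List.length_map, List.length_take, List.length_cons] at this
    ext
    omega
  have hind := ProbabilityTheory.iIndepFun_infinitePi (P := fun o => (τ o).toMeasure)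
    (X := fun _ (a : A) => a) (fun _ => measurable_id)
  have hind2 := (hind.precomp hginj).comp
    (fun (i : Fin l.length) (a : A) => δ ((s :: l)[i.1]'(by simp)) a (l[i.1]))
    (fun _ => Measurable.of_discrete)
  have := ProbabilityTheory.lintegral_prod_eq_prod_lintegral_of_indepFun Finset.univ _ hind2
    (fun i => (Measurable.of_discrete).comp (measurable_pi_apply _))
  refine this.trans (Finset.prod_congr rfl fun i _ => ?_)
  have h2 := lintegral_map (μ := Measure.infinitePi fun o => (τ o).toMeasure)
    (f := fun a : A => δ ((s :: l)[i.1]'(by simp)) a (l[i.1]))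
    (g := fun x : List O → A => x (g i)) Measurable.of_discrete (measurable_pi_apply _)
  rw [Measure.infinitePi_map_eval] at h2
  refine h2.symm.trans ?_
  rw [lintegral_countable']
  refine tsum_congr fun a => ?_
  rw [PMF.toMeasure_apply_singleton _ _ (measurableSet_singleton _), mul_comm]
  rfl

theorem measurable_listProb_pure [Fintype A] [Fintype O] [MeasurableSpace A]
    [DiscreteMeasurableSpace A] (δ : S → A → PMF S) (obs : S → O) (s : S) (l : List S) :
    Measurable fun f : List O → A => listProb δ (pureStrat obs f) [] s l := by
  simp_rw [listProb_pure]
  refine Finset.measurable_prod _ fun i _ => ?_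
  exact (Measurable.of_discrete (f := fun a : A =>
    δ ((s :: l)[i.1]'(by simp)) a (l[i.1]))).comp (measurable_pi_apply _)

theorem stmt_14 {S A O : Type} [Fintype S] [Nonempty S] [Fintype A] [Nonempty A] [Fintype O]
    [MeasurableSpace S] [DiscreteMeasurableSpace S]
    (δ : S → A → PMF S) (obs : S → O)
    (Pr : S → (List S → PMF A) → Measure (ℕ → S)) (hPr : IsPlayMeasure δ Pr)
    (sStar : S) (φ : Set (ℕ → S)) (hφ : MeasurableSet φ)
    (σ : List S → PMF A) (hσ : ObsBased obs σ)
    (hopt : Pr sStar σ φ = ⨆ σ' : {σ' : List S → PMF A // ObsBased obs σ'}, Pr sStar σ'.1 φ) :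
    ∃ σP : List S → PMF A, IsPure σP ∧ ObsBased obs σP ∧
      Pr sStar σP φ = ⨆ σ' : {σ' : List S → PMF A // ObsBased obs σ'}, Pr sStar σ'.1 φ := by
  classical
  letI : MeasurableSpace A := ⊤
  haveI : DiscreteMeasurableSpace A := ⟨fun _ => trivial⟩
  -- factor the strategy through observations
  obtain ⟨τ, hτ⟩ : ∃ τ : List O → PMF A, σ = fun h => τ (h.map obs) := by
    refine ⟨fun o => if h : ∃ l : List S, l.map obs = o then σ h.choose
      else PMF.pure (Classical.arbitrary A), ?_⟩
    funext h
    have hex : ∃ l : List S, l.map obs = h.map obs := ⟨h, rfl⟩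
    simp only [dif_pos hex]
    exact hσ _ _ hex.choose_spec.symm
  let μ : Measure (List O → A) := Measure.infinitePi fun o => (τ o).toMeasure
  haveI := hPr.1
  have hcyl : ∀ l : List S, Measurable fun f : List O → A => Pr sStar (pureStrat obs f) (Cyl l) := by
    intro l
    cases l with
    | nil => simp [cyl_nil]
    | cons t l =>
      by_cases ht : t = sStar
      · subst ht
        simp_rw [hPr.2]
        exact measurable_listProb_pure δ obs t l
      · simp_rw [cyl_ne_zero_prob δ Pr hPr sStar t ht]
        exact measurable_const
  have hmeas : Measurable fun f : List O → A => Pr sStar (pureStrat obs f) := by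
    refine Measurable.measure_of_isPiSystem_of_isProbabilityMeasure generateFrom_cyl
      isPiSystem_cyl ?_
    rintro _ ⟨l, rfl⟩
    exact hcyl l
  have hCm : ∀ l : List S, MeasurableSet (Cyl l) := by
    intro l
    rw [generateFrom_cyl]
    exact MeasurableSpace.measurableSet_generateFrom ⟨_, rfl⟩
  have hbind : Pr sStar σ = μ.bind fun f => Pr sStar (pureStrat obs f) := by
    refine ext_of_generate_finite _ generateFrom_cyl isPiSystem_cyl ?_ ?_
    · rintro _ ⟨l, rfl⟩
      rw [Measure.bind_apply (hCm l) hmeas.aemeasurable]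
      cases l with
      | nil => simp [cyl_nil]
      | cons t l =>
        by_cases ht : t = sStar
        · subst ht
          simp_rw [hPr.2]
          rw [lintegral_listProb_pure, hτ]
        · simp_rw [cyl_ne_zero_prob δ Pr hPr sStar t ht]
          simp
    · rw [Measure.bind_apply MeasurableSet.univ hmeas.aemeasurable]
      simp
  have hint : Pr sStar σ φ = ∫⁻ f, Pr sStar (pureStrat obs f) φ ∂μ := by
    rw [hbind, Measure.bind_apply hφ hmeas.aemeasurable]
  have hobs : ∀ f : List O → A, ObsBased obs (pureStrat (A := A) obs f) := by
    intro f h h' hh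
    simp [pureStrat, hh]
  obtain ⟨f, hf⟩ : ∃ f, ∫⁻ f, Pr sStar (pureStrat obs f) φ ∂μ ≤ Pr sStar (pureStrat obs f) φ := by
    refine exists_lintegral_le ?_
    rw [← hint]
    exact measure_ne_top _ _
  refine ⟨pureStrat obs f, fun h => ⟨_, rfl⟩, hobs f, le_antisymm ?_ ?_⟩
  · exact le_iSup (fun σ' : {σ' : List S → PMF A // ObsBased obs σ'} => Pr sStar σ'.1 φ)
      ⟨pureStrat obs f, hobs f⟩
  · rw [← hopt, hint]
    exact hf

end Stmt14
end

section
/- Let (S, A, δ, obs) be a POMDP with deterministic transition function, i.e., every δ(s,a) is a Dirac distribution. Then for every initial state s* and every measurable objective φ ⊆ S^ω, the value sup over randomized observation-based strategies σ of Pr_{s*}^σ(φ) is either 0 or 1. -/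
open MeasureTheory
open scoped ENNReal

namespace Stmt15

variable {S A O : Type}

/-- The cylinder set of infinite plays extending the finite prefix `l`. -/
def Cyl (l : List S) : Set (ℕ → S) := {ρ | ∀ i : Fin l.length, ρ i.1 = l.get i}

/-- Probability of observing the successive states `rest` after the history `hist ++ [cur]`,
when actions are drawn according to the strategy `σ` and states according to `δ`. -/
noncomputable def listProb [Fintype A] (δ : S → A → PMF S) (σ : List S → PMF A) :
    List S → S → List S → ℝ≥0∞
  | _, _, [] => 1
  | hist, cur, s' :: rest =>
      (∑' a, σ (hist ++ [cur]) a * δ cur a s') * listProb δ σ (hist ++ [cur]) s' rest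

/-- `Pr` is the family of Ionescu–Tulcea play measures of the POMDP with transitions `δ`:
`Pr s σ` is a probability measure on `S^ω` (product σ-algebra, `S` discrete), and the
probability of the cylinder of plays starting with `s :: l` is the product of the
one-step transition probabilities under the strategy `σ`. -/
def IsPlayMeasure [Fintype A] [MeasurableSpace S] (δ : S → A → PMF S)
    (Pr : S → (List S → PMF A) → Measure (ℕ → S)) : Prop :=
  (∀ s σ, IsProbabilityMeasure (Pr s σ)) ∧
    ∀ s σ (l : List S), Pr s σ (Cyl (s :: l)) = listProb δ σ [] s l

/-- A strategy is observation-based if it only depends on the observation sequence. -/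
def ObsBased (obs : S → O) (σ : List S → PMF A) : Prop :=
  ∀ h h' : List S, h.map obs = h'.map obs → σ h = σ h'

/-- A strategy is pure if it always plays a Dirac distribution. -/
def IsPure (σ : List S → PMF A) : Prop := ∀ h, ∃ a, σ h = PMF.pure a

/-- States number `k+1, …, k+n` of the play `ρ`. -/
def seg (ρ : ℕ → S) : ℕ → ℕ → List S
  | _, 0 => []
  | k, n + 1 => ρ (k + 1) :: seg ρ (k + 1) n

lemma seg_length (ρ : ℕ → S) (n : ℕ) : ∀ k, (seg ρ k n).length = n := by
  induction n with
  | zero => intro k; rfl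
  | succ n ih => intro k; simp [seg, ih]

lemma cons_seg_get (ρ : ℕ → S) (n : ℕ) :
    ∀ k i (h : i < (ρ k :: seg ρ k n).length), (ρ k :: seg ρ k n)[i] = ρ (k + i) := by
  induction n with
  | zero =>
    intro k i h
    simp [seg] at h
    subst h
    rfl
  | succ n ih =>
    intro k i h
    cases i with
    | zero => rfl
    | succ i =>
      rw [List.getElem_cons_succ]
      have := ih (k + 1) i (by simpa [seg] using h)
      simp only [seg]
      rw [this]
      congr 1
      omega

lemma mem_cyl_seg (ρ x : ℕ → S) (n : ℕ) :
    x ∈ Cyl (ρ 0 :: seg ρ 0 n) ↔ ∀ i ≤ n, x i = ρ i := by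
  constructor
  · intro h i hi
    have hl : i < (ρ 0 :: seg ρ 0 n).length := by
      rw [List.length_cons, seg_length]; omega
    have h1 := h ⟨i, hl⟩
    rw [List.get_eq_getElem, cons_seg_get, Nat.zero_add] at h1
    exact h1
  · intro h i
    rw [List.get_eq_getElem, cons_seg_get, Nat.zero_add]
    apply h
    have h1 := i.2
    have h2 : (ρ 0 :: seg ρ 0 n).length = n + 1 := by rw [List.length_cons, seg_length]
    omega

lemma measurableSet_cyl [MeasurableSpace S] [DiscreteMeasurableSpace S] (l : List S) :
    MeasurableSet (Cyl l) := by
  have : Cyl l = ⋂ i : Fin l.length, (fun ρ : ℕ → S => ρ i.1) ⁻¹' {l.get i} := by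
    ext ρ; simp [Cyl]
  rw [this]
  exact MeasurableSet.iInter fun i => measurable_pi_apply _ (MeasurableSet.of_discrete)

lemma step_of_listProb [Fintype A] (δ : S → A → PMF S) (σ : List S → PMF A) (ρ : ℕ → S) (n : ℕ) :
    ∀ k hist, listProb δ σ hist (ρ k) (seg ρ k n) ≠ 0 →
      ∀ i < n, ∃ a, δ (ρ (k + i)) a (ρ (k + i + 1)) ≠ 0 := by
  induction n with
  | zero => intro k hist _ i hi; omega
  | succ n ih =>
    intro k hist h i hi
    simp only [seg, listProb] at h
    cases i with
    | zero =>
      by_contra hc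
      push Not at hc
      exact h (by simp at hc; simp [hc])
    | succ i =>
      have := ih (k + 1) _ (right_ne_zero_of_mul h) i (by omega)
      have e : k + (i + 1) = k + 1 + i := by omega
      rw [e]
      exact this

lemma listProb_blind [Fintype A] (δ : S → A → PMF S) (a : ℕ → A) (ρ : ℕ → S)
    (hstep : ∀ n, δ (ρ n) (a n) = PMF.pure (ρ (n + 1))) (n : ℕ) :
    ∀ k hist, hist.length = k →
      listProb δ (fun h => PMF.pure (a (h.length - 1))) hist (ρ k) (seg ρ k n) = 1 := by
  induction n with
  | zero => intro k hist _; rfl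
  | succ n ih =>
    intro k hist hk
    simp only [seg, listProb]
    rw [ih (k + 1) _ (by simp [hk]), mul_one, tsum_eq_single (a k)]
    · simp [hk, hstep]
    · intro b hb
      simp [hk, PMF.pure_apply, hb]

theorem stmt_15 {S A O : Type} [Fintype S] [Nonempty S] [Fintype A] [Nonempty A] [Fintype O]
    [MeasurableSpace S] [DiscreteMeasurableSpace S]
    (δ : S → A → PMF S) (obs : S → O)
    (Pr : S → (List S → PMF A) → Measure (ℕ → S)) (hPr : IsPlayMeasure δ Pr)
    (sStar : S) (φ : Set (ℕ → S)) (hφ : MeasurableSet φ)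
    (hdet : ∀ s a, ∃ t, δ s a = PMF.pure t) :
    (⨆ σ : {σ : List S → PMF A // ObsBased obs σ}, Pr sStar σ.1 φ) = 0 ∨
      (⨆ σ : {σ : List S → PMF A // ObsBased obs σ}, Pr sStar σ.1 φ) = 1 := by
  by_cases h0 : ∀ σ : {σ : List S → PMF A // ObsBased obs σ}, Pr sStar σ.1 φ = 0
  · left; simp only [h0]; simp
  right
  push Not at h0
  obtain ⟨⟨σ, hσ⟩, hne⟩ := h0
  simp only at hne
  have hprob := hPr.1
  -- a good play in φ
  have hae0 : ∀ᵐ ρ ∂(Pr sStar σ), ρ ∈ Cyl [sStar] := by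
    have := hPr.2 sStar σ []
    exact (mem_ae_iff_prob_eq_one (measurableSet_cyl _)).2 this
  have hae1 : ∀ᵐ ρ ∂(Pr sStar σ), ∀ l : List S, listProb δ σ [] sStar l = 0 →
      ρ ∉ Cyl (sStar :: l) := by
    rw [ae_all_iff]
    intro l
    by_cases hl : listProb δ σ [] sStar l = 0
    · have h1 := hPr.2 sStar σ l
      rw [hl] at h1
      filter_upwards [measure_eq_zero_iff_ae_notMem.1 h1] with ρ hρ _ using hρ
    · exact Filter.Eventually.of_forall fun ρ h => absurd h hl
  have hfreq : ∃ᵐ ρ ∂(Pr sStar σ), ρ ∈ φ := frequently_ae_mem_iff.2 hne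
  obtain ⟨ρ, hρφ, hρ0, hρ1⟩ := (hfreq.and_eventually (hae0.and hae1)).exists
  have hs : ρ 0 = sStar := hρ0 ⟨0, by simp⟩
  subst hs
  have hstep : ∀ n, ∃ a, δ (ρ n) a = PMF.pure (ρ (n + 1)) := by
    intro n
    have h1 : listProb δ σ [] (ρ 0) (seg ρ 0 (n + 1)) ≠ 0 := fun h =>
      hρ1 _ h ((mem_cyl_seg ρ ρ (n + 1)).2 fun _ _ => rfl)
    obtain ⟨a, ha⟩ := step_of_listProb δ σ ρ (n + 1) 0 [] h1 n (by omega)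
    rw [Nat.zero_add] at ha
    obtain ⟨t, ht⟩ := hdet (ρ n) a
    refine ⟨a, ?_⟩
    rw [ht] at ha ⊢
    have : ρ (n + 1) = t := by
      by_contra hc
      exact ha (by simp [PMF.pure_apply, hc])
    rw [this]
  choose a ha using hstep
  let τ : List S → PMF A := fun h => PMF.pure (a (h.length - 1))
  have hτ : ObsBased obs τ := by
    intro h h' hh
    have : h.length = h'.length := by simpa using congrArg List.length hh
    simp only [τ, this]
  have hone : Pr (ρ 0) τ φ = 1 := by
    rw [← mem_ae_iff_prob_eq_one hφ]
    have hall : ∀ᵐ x ∂(Pr (ρ 0) τ), ∀ n, x ∈ Cyl (ρ 0 :: seg ρ 0 n) := by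
      rw [ae_all_iff]
      intro n
      refine (mem_ae_iff_prob_eq_one (measurableSet_cyl _)).2 ?_
      rw [hPr.2]
      exact listProb_blind δ a ρ ha n 0 [] rfl
    filter_upwards [hall] with x hx
    have : x = ρ := funext fun n => (mem_cyl_seg ρ x n).1 (hx n) n le_rfl
    rw [this]
    exact hρφ
  apply le_antisymm
  · exact iSup_le fun σ => prob_le_one
  · rw [← hone]
    exact le_iSup (fun σ : {σ : List S → PMF A // ObsBased obs σ} => Pr (ρ 0) σ.1 φ) ⟨τ, hτ⟩

end Stmt15
end

section
/- Let G = (S, A₁, A₂, δ) be a complete-observation concurrent stochastic game in which every transition probability δ(s,a,b)(t) is a rational number, and let φ ⊆ S^ω be a measurable objective. Then there exist a complete-observation concurrent deterministic game G' = (S', A₁', A₂', δ') with S ⊆ S' and a measurable objective φ' ⊆ S'^ω such that for every s ∈ S: (i) player 1 has an almost-sure winning strategy for φ from s in G if and only if player 1 has an almost-sure winning strategy for φ' from s in G', and likewise for positive winning strategies; (ii) val_G(φ)(s) = val_{G'}(φ')(s); and (iii) player 1 has an optimal strategy for φ from s in G if and only if player 1 has an optimal strategy for φ' from s in G'. -/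
/-!
STATEMENT 16: every complete-observation concurrent stochastic game with rational
transition probabilities reduces to a complete-observation concurrent *deterministic*
game preserving almost-sure/positive winning, values and existence of optimal strategies.
-/

open scoped ENNReal

namespace Stmt16

/-- A complete-observation concurrent stochastic game. -/
structure ConcGame where
  S : Type
  [finS : Fintype S]
  [neS : Nonempty S]
  A₁ : Type
  [finA₁ : Fintype A₁]
  [neA₁ : Nonempty A₁]
  A₂ : Type
  [finA₂ : Fintype A₂]
  [neA₂ : Nonempty A₂]
  δ : S → A₁ → A₂ → PMF S

attribute [instance] ConcGame.finS ConcGame.neS ConcGame.finA₁ ConcGame.neA₁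
  ConcGame.finA₂ ConcGame.neA₂

open MeasureTheory

/-- States carry the discrete σ-algebra. -/
instance (G : ConcGame) : MeasurableSpace G.S := ⊤

/-- The cylinder set of infinite plays extending the finite prefix `l`. -/
def Cyl {α : Type} (l : List α) : Set (ℕ → α) := {ρ | ∀ i : Fin l.length, ρ i.1 = l.get i}

/-- Probability of observing the successive states `rest` after the history `hist ++ [cur]`. -/
noncomputable def listProb (G : ConcGame)
    (σ : List G.S → PMF G.A₁) (π : List G.S → PMF G.A₂) :
    List G.S → G.S → List G.S → ℝ≥0∞
  | _, _, [] => 1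
  | hist, cur, s' :: rest =>
      (∑' a, ∑' b, σ (hist ++ [cur]) a * π (hist ++ [cur]) b * G.δ cur a b s') *
        listProb G σ π (hist ++ [cur]) s' rest

/-- `Pr` is the family of Ionescu–Tulcea play measures of the game `G`. -/
def IsPlayMeasure (G : ConcGame)
    (Pr : G.S → (List G.S → PMF G.A₁) → (List G.S → PMF G.A₂) → Measure (ℕ → G.S)) :
    Prop :=
  (∀ s σ π, IsProbabilityMeasure (Pr s σ π)) ∧
    ∀ s σ π (l : List G.S), Pr s σ π (Cyl (s :: l)) = listProb G σ π [] s l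

/-- A game is deterministic if all its transitions are Dirac distributions. -/
def Deterministic (G : ConcGame) : Prop :=
  ∀ s a b, ∃ t, G.δ s a b = PMF.pure t

/-- A game has rational transition probabilities. -/
def RationalProbs (G : ConcGame) : Prop :=
  ∀ s a b t, ∃ q : ℚ, G.δ s a b t = ENNReal.ofReal (q : ℝ)

section Helpers

lemma isPiSystem_cyl {α : Type} : IsPiSystem {s : Set (ℕ → α) | ∃ l : List α, s = Cyl l} := by
  have key : ∀ l m : List α, l.length ≤ m.length → (Cyl l ∩ Cyl m).Nonempty →
      Cyl l ∩ Cyl m = Cyl m := by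
    rintro l m hlm ⟨ρ, h1, h2⟩
    refine Set.inter_eq_right.2 ?_
    intro τ hτ i
    have hi : i.1 < m.length := lt_of_lt_of_le i.2 hlm
    rw [hτ ⟨i.1, hi⟩, ← h2 ⟨i.1, hi⟩]
    exact h1 i
  rintro _ ⟨l, rfl⟩ _ ⟨m, rfl⟩ hne
  rcases le_total l.length m.length with h | h
  · exact ⟨m, key l m h hne⟩
  · rw [Set.inter_comm] at hne ⊢
    exact ⟨l, key m l h hne⟩

lemma measurable_cyl {α : Type} [MeasurableSpace α] [MeasurableSingletonClass α] (l : List α) :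
    MeasurableSet (Cyl l) := by
  have : Cyl l = ⋂ i : Fin l.length, (fun ρ : ℕ → α => ρ i.1) ⁻¹' {l.get i} := by
    ext ρ; simp [Cyl]
  rw [this]
  exact MeasurableSet.iInter fun i => measurable_pi_apply _ (measurableSet_singleton _)

lemma generate_cyl {α : Type} [Countable α] [MeasurableSpace α] [MeasurableSingletonClass α] :
    (MeasurableSpace.pi : MeasurableSpace (ℕ → α)) =
      MeasurableSpace.generateFrom {s : Set (ℕ → α) | ∃ l : List α, s = Cyl l} := by
  apply le_antisymm
  · refine iSup_le fun n => ?_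
    rintro _ ⟨t, -, rfl⟩
    have : ((fun ρ : ℕ → α => ρ n) ⁻¹' t) =
        ⋃ l : {l : List α // ∃ h : n < l.length, l.get ⟨n, h⟩ ∈ t}, Cyl l.1 := by
      ext ρ
      simp only [Set.mem_preimage, Set.mem_iUnion]
      constructor
      · intro h
        refine ⟨⟨List.ofFn (fun i : Fin (n+1) => ρ i), by simp, by simpa [-List.ofFn_succ] using h⟩, ?_⟩
        intro i
        simp [-List.ofFn_succ]
      · rintro ⟨⟨l, hl, hm⟩, h⟩
        have := h ⟨n, hl⟩
        simp only at this
        rw [this]; exact hm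
    rw [this]
    exact MeasurableSet.iUnion fun l => MeasurableSpace.measurableSet_generateFrom ⟨l.1, rfl⟩
  · refine MeasurableSpace.generateFrom_le ?_
    rintro _ ⟨l, rfl⟩
    exact measurable_cyl l

lemma measure_ext_cyl {α : Type} [Countable α] [MeasurableSpace α] [MeasurableSingletonClass α]
    (μ ν : Measure (ℕ → α)) [IsProbabilityMeasure μ] [IsProbabilityMeasure ν] (s : α)
    (h1 : μ (Cyl [s]) = 1) (h : ∀ l, μ (Cyl (s :: l)) = ν (Cyl (s :: l))) : μ = ν := by
  refine ext_of_generate_finite _ generate_cyl isPiSystem_cyl ?_ (by simp)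
  rintro _ ⟨l, rfl⟩
  cases l with
  | nil =>
    have : (Cyl [] : Set (ℕ → α)) = Set.univ := by
      ext ρ; simp [Cyl]
    simp [this]
  | cons t l =>
    by_cases hts : t = s
    · subst hts; exact h l
    · have hsub : (Cyl (t :: l) : Set (ℕ → α)) ⊆ (Cyl [s])ᶜ := by
        intro ρ hρ hρ'
        have a := hρ ⟨0, by simp⟩
        have b := hρ' ⟨0, by simp⟩
        simp at a b
        exact hts (a.symm.trans b)
      have e1 : μ (Cyl [s])ᶜ = 0 := (prob_compl_eq_zero_iff (measurable_cyl _)).2 h1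
      have e2 : ν (Cyl [s])ᶜ = 0 :=
        (prob_compl_eq_zero_iff (measurable_cyl _)).2 ((h []).symm.trans h1)
      rw [measure_mono_null hsub e1, measure_mono_null hsub e2]

lemma exists_denominator (G : ConcGame) (hrat : RationalProbs G) :
    ∃ N : ℕ, N ≠ 0 ∧ ∀ s a b t, ∃ m : ℕ, (N : ℝ≥0∞) * G.δ s a b t = m := by
  choose q hq using hrat
  let d : G.S × G.A₁ × G.A₂ × G.S → ℕ := fun x => (q x.1 x.2.1 x.2.2.1 x.2.2.2).den
  refine ⟨∏ x, d x, Finset.prod_ne_zero_iff.2 fun x _ => (q _ _ _ _).den_nz, ?_⟩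
  intro s a b t
  obtain ⟨c, hc⟩ : d (s, a, b, t) ∣ ∏ x, d x := Finset.dvd_prod_of_mem _ (Finset.mem_univ _)
  refine ⟨c * (q s a b t).num.toNat, ?_⟩
  rw [hc, hq, ← ENNReal.ofReal_natCast, ← ENNReal.ofReal_mul (by positivity),
    ← ENNReal.ofReal_natCast]
  have hd : ((q s a b t).den : ℝ) * (q s a b t : ℝ) = (q s a b t).num := by
    exact_mod_cast Rat.den_mul_eq_num (q s a b t)
  have : ((d (s, a, b, t) * c : ℕ) : ℝ) * (q s a b t : ℝ) = c * (q s a b t).num := by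
    rw [← hd]; push_cast; simp only [d]; ring
  rw [this]
  rcases le_total 0 (q s a b t).num with h | h
  · congr 1
    push_cast
    congr 1
    exact_mod_cast (Int.toNat_of_nonneg h).symm
  · rw [Int.toNat_of_nonpos h]
    have : (c : ℝ) * ((q s a b t).num : ℝ) ≤ 0 :=
      mul_nonpos_of_nonneg_of_nonpos (by positivity) (by exact_mod_cast h)
    simp [ENNReal.ofReal_of_nonpos this]

lemma exists_selector {α : Type} [Fintype α] (p : PMF α) (N : ℕ) [NeZero N]
    (h : ∀ t, ∃ m : ℕ, (N : ℝ≥0∞) * p t = m) :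
    ∃ f : ZMod N → α, ∀ t, ∑ k, (N : ℝ≥0∞)⁻¹ * PMF.pure (f k) t = p t := by
  classical
  choose m hm using h
  have hN : (N : ℝ≥0∞) ≠ 0 := by exact_mod_cast NeZero.ne N
  have hsum : ∑ t, m t = N := by
    have h1 : ∑ t, p t = 1 := by simpa only [tsum_fintype] using p.tsum_coe
    have : ((∑ t, m t : ℕ) : ℝ≥0∞) = N := by
      push_cast
      simp_rw [← hm]
      rw [← Finset.mul_sum, h1, mul_one]
    exact_mod_cast this
  have e : ZMod N ≃ Σ t, Fin (m t) :=
    Fintype.equivOfCardEq (by simp [ZMod.card, hsum])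
  refine ⟨fun k => (e k).1, fun t => ?_⟩
  rw [e.sum_comp (fun x : Σ t, Fin (m t) => (N : ℝ≥0∞)⁻¹ * PMF.pure x.1 t), ← Finset.mul_sum,
    Fintype.sum_sigma]
  simp only [PMF.pure_apply, Finset.sum_const, Finset.card_univ, Fintype.card_fin]
  rw [Finset.sum_eq_single t (fun b _ hb => by simp [Ne.symm hb]) (by simp)]
  simp only [if_true, nsmul_eq_mul, mul_one]
  rw [← hm, ← mul_assoc, ENNReal.inv_mul_cancel hN (by simp), one_mul]

/-- Product of a distribution with the uniform one on `ZMod N`. -/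
noncomputable def withUnif {α : Type} [Fintype α] (N : ℕ) [NeZero N] (p : PMF α) :
    PMF (α × ZMod N) :=
  PMF.ofFintype (fun x => p x.1 * (N : ℝ≥0∞)⁻¹) (by
    have h1 : ∑ t, p t = 1 := by simpa only [tsum_fintype] using p.tsum_coe
    have hN : (N : ℝ≥0∞) ≠ 0 := by exact_mod_cast NeZero.ne N
    rw [Fintype.sum_prod_type]
    simp only [Finset.sum_const, Finset.card_univ, ZMod.card, nsmul_eq_mul]
    simp_rw [mul_left_comm (N : ℝ≥0∞), ENNReal.mul_inv_cancel hN (by simp : (N : ℝ≥0∞) ≠ ⊤)]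
    simpa using h1)

lemma withUnif_apply {α : Type} [Fintype α] (N : ℕ) [NeZero N] (p : PMF α) (a : α)
    (i : ZMod N) : withUnif N p (a, i) = p a * (N : ℝ≥0∞)⁻¹ := rfl

lemma map_fst_apply {α : Type} [Fintype α] (N : ℕ) [NeZero N] (p : PMF (α × ZMod N)) (a : α) :
    p.map Prod.fst a = ∑ i, p (a, i) := by
  classical
  rw [PMF.map_apply, tsum_fintype, Fintype.sum_prod_type,
    Finset.sum_eq_single a (fun b _ hb => by simp [Ne.symm hb]) (by simp)]
  simp

lemma map_fst_withUnif {α : Type} [Fintype α] (N : ℕ) [NeZero N] (p : PMF α) :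
    (withUnif N p).map Prod.fst = p := by
  have hN : (N : ℝ≥0∞) ≠ 0 := by exact_mod_cast NeZero.ne N
  ext a
  rw [map_fst_apply]
  simp only [withUnif_apply, Finset.sum_const, Finset.card_univ, ZMod.card, nsmul_eq_mul]
  rw [mul_left_comm, ENNReal.mul_inv_cancel hN (by simp), mul_one]

/-- The deterministic game: both players additionally pick residues whose sum selects the
successor. -/
noncomputable def detGame (G : ConcGame) (N : ℕ) [NeZero N]
    (f : G.S → G.A₁ → G.A₂ → ZMod N → G.S) : ConcGame where
  S := G.S
  A₁ := G.A₁ × ZMod N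
  A₂ := G.A₂ × ZMod N
  δ := fun s x y => PMF.pure (f s x.1 y.1 (x.2 + y.2))

lemma kernel_left (G : ConcGame) (N : ℕ) [NeZero N] (f : G.S → G.A₁ → G.A₂ → ZMod N → G.S)
    (hf : ∀ s a b t, ∑ k, (N : ℝ≥0∞)⁻¹ * PMF.pure (f s a b k) t = G.δ s a b t)
    (p : PMF G.A₁) (r : PMF (G.A₂ × ZMod N)) (s t : G.S) :
    (∑' x, ∑' y, withUnif N p x * r y * PMF.pure (f s x.1 y.1 (x.2 + y.2)) t) =
      ∑' a, ∑' b, p a * r.map Prod.fst b * G.δ s a b t := by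
  simp only [tsum_fintype, Fintype.sum_prod_type, map_fst_apply, withUnif_apply]
  refine Finset.sum_congr rfl fun a _ => ?_
  rw [Finset.sum_comm]
  refine Finset.sum_congr rfl fun b _ => ?_
  rw [Finset.sum_comm, Finset.mul_sum, Finset.sum_mul]
  refine Finset.sum_congr rfl fun j _ => ?_
  rw [← hf, ← Equiv.sum_comp (Equiv.addRight j) (fun k => (N : ℝ≥0∞)⁻¹ * PMF.pure (f s a b k) t), Finset.mul_sum]
  refine Finset.sum_congr rfl fun i _ => ?_
  simp only [Equiv.coe_addRight]
  ring

lemma kernel_right (G : ConcGame) (N : ℕ) [NeZero N] (f : G.S → G.A₁ → G.A₂ → ZMod N → G.S)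
    (hf : ∀ s a b t, ∑ k, (N : ℝ≥0∞)⁻¹ * PMF.pure (f s a b k) t = G.δ s a b t)
    (p : PMF (G.A₁ × ZMod N)) (r : PMF G.A₂) (s t : G.S) :
    (∑' x, ∑' y, p x * withUnif N r y * PMF.pure (f s x.1 y.1 (x.2 + y.2)) t) =
      ∑' a, ∑' b, p.map Prod.fst a * r b * G.δ s a b t := by
  simp only [tsum_fintype, Fintype.sum_prod_type, map_fst_apply, withUnif_apply]
  refine Finset.sum_congr rfl fun a _ => ?_
  rw [Finset.sum_comm]
  refine Finset.sum_congr rfl fun b _ => ?_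
  rw [Finset.sum_mul, Finset.sum_mul]
  refine Finset.sum_congr rfl fun i _ => ?_
  rw [← hf, ← Equiv.sum_comp (Equiv.addLeft i) (fun k => (N : ℝ≥0∞)⁻¹ * PMF.pure (f s a b k) t), Finset.mul_sum]
  refine Finset.sum_congr rfl fun j _ => ?_
  simp only [Equiv.coe_addLeft]
  ring

lemma listProb_left (G : ConcGame) (N : ℕ) [NeZero N] (f : G.S → G.A₁ → G.A₂ → ZMod N → G.S)
    (hf : ∀ s a b t, ∑ k, (N : ℝ≥0∞)⁻¹ * PMF.pure (f s a b k) t = G.δ s a b t)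
    (σ : List G.S → PMF G.A₁) (π : List G.S → PMF (G.A₂ × ZMod N)) (l : List G.S) :
    ∀ (hist : List G.S) (cur : G.S),
    listProb (detGame G N f) (fun h => withUnif N (σ h)) π hist cur l =
      listProb G σ (fun h => (π h).map Prod.fst) hist cur l := by
  induction l with
  | nil => intro _ _; rfl
  | cons t l ih =>
    intro hist cur
    exact congrArg₂ (· * ·) (kernel_left G N f hf _ _ _ _) (ih _ _)

lemma listProb_right (G : ConcGame) (N : ℕ) [NeZero N] (f : G.S → G.A₁ → G.A₂ → ZMod N → G.S)
    (hf : ∀ s a b t, ∑ k, (N : ℝ≥0∞)⁻¹ * PMF.pure (f s a b k) t = G.δ s a b t)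
    (σ : List G.S → PMF (G.A₁ × ZMod N)) (π : List G.S → PMF G.A₂) (l : List G.S) :
    ∀ (hist : List G.S) (cur : G.S),
    listProb (detGame G N f) σ (fun h => withUnif N (π h)) hist cur l =
      listProb G (fun h => (σ h).map Prod.fst) π hist cur l := by
  induction l with
  | nil => intro _ _; rfl
  | cons t l ih =>
    intro hist cur
    exact congrArg₂ (· * ·) (kernel_right G N f hf _ _ _ _) (ih _ _)

/-- The order-theoretic core: lifting and projecting strategies transfers all notions. -/
lemma transfer {A B A' B' : Type} (v : A → B → ℝ≥0∞) (v' : A' → B' → ℝ≥0∞)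
    (u : A → A') (p : A' → A) (w : B → B') (q : B' → B)
    (hu : ∀ a b', v' (u a) b' = v a (q b')) (hw : ∀ a' b, v' a' (w b) = v (p a') b) :
    ((∃ a, ∀ b, v a b = 1) ↔ (∃ a, ∀ b, v' a b = 1)) ∧
    ((∃ a, ∀ b, 0 < v a b) ↔ (∃ a, ∀ b, 0 < v' a b)) ∧
    ((⨆ a, ⨅ b, v a b) = ⨆ a, ⨅ b, v' a b) ∧
    ((∃ a, (⨅ b, v a b) = ⨆ a'', ⨅ b, v a'' b) ↔
      (∃ a, (⨅ b, v' a b) = ⨆ a'', ⨅ b, v' a'' b)) := by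
  have h1 : ∀ a, (⨅ b, v a b) ≤ ⨅ b, v' (u a) b := fun a =>
    le_iInf fun b' => (iInf_le _ (q b')).trans (hu a b').ge
  have h2 : ∀ a', (⨅ b, v' a' b) ≤ ⨅ b, v (p a') b := fun a' =>
    le_iInf fun b => (iInf_le _ (w b)).trans (hw a' b).le
  have h3 : (⨆ a, ⨅ b, v a b) = ⨆ a, ⨅ b, v' a b :=
    le_antisymm (iSup_le fun a => (h1 a).trans (le_iSup (fun a => ⨅ b, v' a b) (u a)))
      (iSup_le fun a => (h2 a).trans (le_iSup (fun a => ⨅ b, v a b) (p a)))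
  refine ⟨⟨?_, ?_⟩, ⟨?_, ?_⟩, h3, ⟨?_, ?_⟩⟩
  · rintro ⟨a, ha⟩; exact ⟨u a, fun b => by rw [hu]; exact ha _⟩
  · rintro ⟨a, ha⟩; exact ⟨p a, fun b => by rw [← hw]; exact ha _⟩
  · rintro ⟨a, ha⟩; exact ⟨u a, fun b => by rw [hu]; exact ha _⟩
  · rintro ⟨a, ha⟩; exact ⟨p a, fun b => by rw [← hw]; exact ha _⟩
  · rintro ⟨a, ha⟩
    exact ⟨u a, le_antisymm (le_iSup (fun a => ⨅ b, v' a b) _) (by rw [← h3, ← ha]; exact h1 a)⟩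
  · rintro ⟨a, ha⟩
    exact ⟨p a, le_antisymm (le_iSup (fun a => ⨅ b, v a b) _) (by rw [h3, ← ha]; exact h2 a)⟩

instance (G : ConcGame) : MeasurableSingletonClass G.S := ⟨fun _ => trivial⟩

lemma play_eq (G : ConcGame) (s : G.S) (μ ν : Measure (ℕ → G.S)) (c d : List G.S → ℝ≥0∞)
    (hμ : IsProbabilityMeasure μ) (hν : IsProbabilityMeasure ν)
    (h1 : ∀ l, μ (Cyl (s :: l)) = c l) (h2 : ∀ l, ν (Cyl (s :: l)) = d l)
    (hc : c [] = 1) (hcd : ∀ l, c l = d l) : μ = ν :=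
  measure_ext_cyl μ ν s ((h1 []).trans hc) fun l => by rw [h1, h2, hcd]

end Helpers

theorem stmt_16 (G : ConcGame) (hrat : RationalProbs G)
    (φ : Set (ℕ → G.S)) (hφ : MeasurableSet φ) :
    ∃ (G' : ConcGame) (ι : G.S → G'.S) (φ' : Set (ℕ → G'.S)),
      Function.Injective ι ∧ Deterministic G' ∧ MeasurableSet φ' ∧
      ∀ Pr, IsPlayMeasure G Pr → ∀ Pr', IsPlayMeasure G' Pr' →
        ∀ s : G.S,
          ((∃ σ, ∀ π, Pr s σ π φ = 1) ↔ (∃ σ', ∀ π', Pr' (ι s) σ' π' φ' = 1)) ∧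
          ((∃ σ, ∀ π, 0 < Pr s σ π φ) ↔ (∃ σ', ∀ π', 0 < Pr' (ι s) σ' π' φ')) ∧
          ((⨆ σ, ⨅ π, Pr s σ π φ) = ⨆ σ', ⨅ π', Pr' (ι s) σ' π' φ') ∧
          ((∃ σ, (⨅ π, Pr s σ π φ) = ⨆ σ'', ⨅ π, Pr s σ'' π φ) ↔
            (∃ σ', (⨅ π', Pr' (ι s) σ' π' φ') = ⨆ σ'', ⨅ π', Pr' (ι s) σ'' π' φ')) := by
  obtain ⟨N, hN, hm⟩ := exists_denominator G hrat
  have : NeZero N := ⟨hN⟩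
  choose f hf using fun s a b => exists_selector (G.δ s a b) N (hm s a b)
  refine ⟨detGame G N f, fun s => s, φ, fun _ _ h => h, fun s a b => ⟨_, rfl⟩, hφ, ?_⟩
  intro Pr hPr Pr' hPr' s
  refine transfer (fun σ π => Pr s σ π φ) (fun σ π => Pr' s σ π φ)
    (fun σ h => withUnif N (σ h)) (fun σ h => (σ h).map Prod.fst)
    (fun π h => withUnif N (π h)) (fun π h => (π h).map Prod.fst) ?_ ?_
  · intro σ π'
    exact congrArg (fun μ : Measure (ℕ → G.S) => μ φ) (play_eq G s _ _ _ _
      (hPr'.1 _ _ _) (hPr.1 _ _ _) (hPr'.2 _ _ _) (hPr.2 _ _ _) rfl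
      fun l => listProb_left G N f hf σ π' l [] s)
  · intro σ' π
    exact congrArg (fun μ : Measure (ℕ → G.S) => μ φ) (play_eq G s _ _ _ _
      (hPr'.1 _ _ _) (hPr.1 _ _ _) (hPr'.2 _ _ _) (hPr.2 _ _ _) rfl
      fun l => listProb_right G N f hf σ' π l [] s)

end Stmt16
end
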